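/- Let p ∈ (0,∞), q ∈ (0,∞], p₀ ∈ [1,∞), 0 < r₁ ≤ r₂ ≤ p/p₀, l ∈ ℕ, let γ be a weight on ℝⁿ with γ^p ∈ A^{loc}_{p₀}(ℝⁿ), let α₃ ≥ 0, 0 < α₁ ≤ α₂ < l, let {s_k} ∈ locY^{α₃}_{α₁,α₂}, and set t_k(x) := γ(x)·s_k(x). Then B̄^l_{p,q,r₁}(ℝⁿ,{t_k}) = B̃^l_{p,q,r₂}(ℝⁿ,{t_k}) as sets of (a.e.-equivalence classes of) functions, and the corresponding quasi-norms are equivalent: there exist C₁, C₂ > 0 with C₁·‖φ | B̄^l_{p,q,r₁}‖ ≤ ‖φ | B̃^l_{p,q,r₂}‖ ≤ C₂·‖φ | B̄^l_{p,q,r₁}‖ for all φ. -/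

import Mathlib

open MeasureTheory ENNReal Filter
open scoped Classical

noncomputable section

/-- `ℓ_q` quasinorm of a family of extended nonnegative reals (supremum when `q = ∞`). -/
def lqNorm {ι : Type*} (q : ℝ≥0∞) (c : ι → ℝ≥0∞) : ℝ≥0∞ :=
  if q = ∞ then ⨆ i, c i else (∑' i, c i ^ q.toReal) ^ (1 / q.toReal)

/-- `L_p` quasinorm of an `ℝ≥0∞`-valued function (essential supremum when `p = ∞`). -/
def lpNormE {α : Type*} [MeasurableSpace α] (p : ℝ≥0∞) (μ : Measure α) (f : α → ℝ≥0∞) : ℝ≥0∞ :=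
  if p = ∞ then essSup f μ else (∫⁻ x, f x ^ p.toReal ∂μ) ^ (1 / p.toReal)

abbrev Rn (n : ℕ) := Fin n → ℝ

/-- Open cube centred at `x` of half-side `s` (i.e. `x + s·Iⁿ`). -/
def openCube {n : ℕ} (x : Rn n) (s : ℝ) : Set (Rn n) := {y | ∀ i, |y i - x i| < s}

/-- Open axis-parallel cube with lower corner `c` and side `s`. -/
def cubeAt {n : ℕ} (c : Rn n) (s : ℝ) : Set (Rn n) := {x | ∀ i, c i < x i ∧ x i < c i + s}

/-- Open dyadic cube `Q^n_{k,m}` of side `2^{-k}`. -/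
def dyadicCube (n k : ℕ) (m : Fin n → ℤ) : Set (Rn n) :=
  {x | ∀ i, (m i : ℝ) / 2 ^ k < x i ∧ x i < ((m i : ℝ) + 1) / 2 ^ k}

/-- Half-open dyadic cube `Q̃^n_{k,m}`. -/
def dyadicCubeHalf (n k : ℕ) (m : Fin n → ℤ) : Set (Rn n) :=
  {x | ∀ i, (m i : ℝ) / 2 ^ k ≤ x i ∧ x i < ((m i : ℝ) + 1) / 2 ^ k}

def dyadicCenter (n k : ℕ) (m : Fin n → ℤ) : Rn n := fun i => ((m i : ℝ) + 1 / 2) / 2 ^ k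

/-- The concentric dilate `c·Q^n_{k,m}` of a dyadic cube. -/
def dilatedCube (n k : ℕ) (m : Fin n → ℤ) (c : ℝ) : Set (Rn n) :=
  openCube (dyadicCenter n k m) (c / 2 ^ (k + 1))

def euclNorm {d : ℕ} (y : Rn d) : ℝ := Real.sqrt (∑ i, y i ^ 2)

/-- The difference `Δ^l(h)g(x)`. -/
def diffl {n : ℕ} (l : ℕ) (h : Rn n) (g : Rn n → ℝ) (x : Rn n) : ℝ :=
  ∑ j ∈ Finset.range (l + 1), ((l.choose j : ℝ) * (-1 : ℝ) ^ (l + j)) * g (x + (j : ℝ) • h)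

/-- The difference `Δ^l(h,Ω)g(x)`, vanishing unless the segment `[x, x + l·h]` lies in `Ω`. -/
def difflOn {n : ℕ} (l : ℕ) (Ω : Set (Rn n)) (h : Rn n) (g : Rn n → ℝ) (x : Rn n) : ℝ :=
  if ∀ τ ∈ Set.Icc (0 : ℝ) 1, x + (τ * l) • h ∈ Ω then diffl l h g x else 0

/-- `δ^l_r(Q)g`, where `s` is the side length of the cube `Q`. -/
def deltaE (n l : ℕ) (r : ℝ≥0∞) (s : ℝ) (Q : Set (Rn n)) (g : Rn n → ℝ) : ℝ≥0∞ :=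
  ENNReal.ofReal s ^ (-(2 * (n : ℝ)) / r.toReal) *
    eLpNorm (fun hx : Rn n × Rn n => diffl l hx.1 g hx.2) r
      ((volume.restrict (openCube (0 : Rn n) s)).prod (volume.restrict Q))

/-- `δ^l_r(Q,Ω)g`, where `s` is the side length of the cube `Q`. -/
def deltaEOn (n l : ℕ) (r : ℝ≥0∞) (s : ℝ) (Q Ω : Set (Rn n)) (g : Rn n → ℝ) : ℝ≥0∞ :=
  ENNReal.ofReal s ^ (-(2 * (n : ℝ)) / r.toReal) *
    eLpNorm (fun hx : Rn n × Rn n => difflOn l Ω hx.1 g hx.2) r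
      ((volume.restrict (openCube (0 : Rn n) s)).prod (volume.restrict Q))

/-- `Δ̄^l_r(s)g(x)`. -/
def barDelta (n l : ℕ) (r : ℝ≥0∞) (s : ℝ) (g : Rn n → ℝ) (x : Rn n) : ℝ≥0∞ :=
  ENNReal.ofReal s ^ (-(n : ℝ) / r.toReal) *
    eLpNorm (fun h : Rn n => diffl l h g x) r (volume.restrict (openCube (0 : Rn n) s))

/-- Membership in `L_r^{loc}(ℝⁿ)`. -/
def MemLrLoc (n : ℕ) (r : ℝ≥0∞) (φ : Rn n → ℝ) : Prop :=
  Measurable φ ∧ ∀ K : Set (Rn n), IsCompact K → eLpNorm φ r (volume.restrict K) < ∞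

def IsWeight {n : ℕ} (w : Rn n → ℝ) : Prop := Measurable w ∧ ∀ x, 0 < w x

/-- A `p`-admissible weight sequence. -/
def pAdmissible (n : ℕ) (p : ℝ≥0∞) (t : ℕ → Rn n → ℝ) : Prop :=
  ∀ k, IsWeight (t k) ∧ MemLrLoc n p (t k)

/-- The multiple sequence `t_{k,m} = ‖t_k‖_{L_p(Q^n_{k,m})}` associated with a weight sequence. -/
def tkm (n : ℕ) (p : ℝ≥0∞) (t : ℕ → Rn n → ℝ) (k : ℕ) (m : Fin n → ℤ) : ℝ≥0∞ :=
  eLpNorm (t k) p (volume.restrict (dyadicCube n k m))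

/-- The weight `t̄_k` built from a multiple sequence `T`. -/
def tbarOf (n : ℕ) (p : ℝ≥0∞) (T : ℕ → (Fin n → ℤ) → ℝ≥0∞) (k : ℕ) (x : Rn n) : ℝ≥0∞ :=
  (2 : ℝ≥0∞) ^ (((k * n : ℕ) : ℝ) / p.toReal) *
    ∑' m : Fin n → ℤ, (dyadicCubeHalf n k m).indicator (fun _ => T k m) x

/-- `(2^{kn} ∫_Q f^e)^{1/e}`, with the essential supremum modification for `e = ∞`. -/
def avgNorm (n k : ℕ) (e : ℝ≥0∞) (Q : Set (Rn n)) (f : Rn n → ℝ≥0∞) : ℝ≥0∞ :=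
  if e = ∞ then essSup f (volume.restrict Q)
  else ((2 : ℝ≥0∞) ^ (k * n) * ∫⁻ x in Q, f x ^ e.toReal) ^ (1 / e.toReal)

/-- Conditions (2.14)–(2.16) of the class `X^{α₃}_{α,σ,p}`, expressed for a multiple
sequence `T`. -/
def MemXseq (n : ℕ) (α₁ α₂ α₃ : ℝ) (σ₁ σ₂ p : ℝ≥0∞) (T : ℕ → (Fin n → ℤ) → ℝ≥0∞) : Prop :=
  (∃ C₁ : ℝ≥0∞, 0 < C₁ ∧ C₁ < ∞ ∧ ∀ k j : ℕ, k ≤ j → ∀ m : Fin n → ℤ,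
    avgNorm n k p (dyadicCube n k m) (tbarOf n p T k) *
      avgNorm n k σ₁ (dyadicCube n k m) (fun x => (tbarOf n p T j x)⁻¹) ≤
      C₁ * (2 : ℝ≥0∞) ^ (α₁ * ((k : ℝ) - (j : ℝ)))) ∧
  (∃ C₂ : ℝ≥0∞, 0 < C₂ ∧ C₂ < ∞ ∧ ∀ k j : ℕ, k ≤ j → ∀ m : Fin n → ℤ,
    (avgNorm n k p (dyadicCube n k m) (tbarOf n p T k))⁻¹ *
      avgNorm n k σ₂ (dyadicCube n k m) (tbarOf n p T j) ≤
      C₂ * (2 : ℝ≥0∞) ^ (α₂ * ((j : ℝ) - (k : ℝ)))) ∧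
  (∀ k : ℕ, ∀ m m' : Fin n → ℤ, (∀ i, |m i - m' i| ≤ 1) →
    0 < T k m ∧ T k m ≤ (2 : ℝ≥0∞) ^ (α₃ : ℝ) * T k m')

/-- The weighted class `X^{α₃}_{α,σ,p}` of weight sequences. -/
def MemX (n : ℕ) (α₁ α₂ α₃ : ℝ) (σ₁ σ₂ p : ℝ≥0∞) (t : ℕ → Rn n → ℝ) : Prop :=
  pAdmissible n p t ∧ MemXseq n α₁ α₂ α₃ σ₁ σ₂ p (tkm n p t)

/-- Quasinorm of `B̃^l_{p,q,r}(ℝⁿ, T)` with an `ℝ≥0∞`-valued weight sequence `T`. -/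
def tildeBnormE (n l : ℕ) (p q r : ℝ≥0∞) (T : ℕ → Rn n → ℝ≥0∞) (φ : Rn n → ℝ) : ℝ≥0∞ :=
  lqNorm q (fun k : ℕ =>
    lpNormE p volume (fun x =>
      T (k + 1) x *
        deltaE n l r ((2 : ℝ) ^ (1 - ((k : ℤ) + 1))) (openCube x ((2 : ℝ) ^ (-((k : ℤ) + 1)))) φ)) +
  lpNormE p volume (fun x => T 0 x * eLpNorm φ r (volume.restrict (openCube x 1)))

/-- Quasinorm of `B̃^l_{p,q,r}(ℝⁿ, {t_k})`. -/
def tildeBnorm (n l : ℕ) (p q r : ℝ≥0∞) (t : ℕ → Rn n → ℝ) (φ : Rn n → ℝ) : ℝ≥0∞ :=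
  tildeBnormE n l p q r (fun k x => ENNReal.ofReal (t k x)) φ

/-- Membership in `B̃^l_{p,q,r}(ℝⁿ, {t_k})`. -/
def MemTildeB (n l : ℕ) (p q r : ℝ≥0∞) (t : ℕ → Rn n → ℝ) (φ : Rn n → ℝ) : Prop :=
  MemLrLoc n r φ ∧ tildeBnorm n l p q r t φ < ∞

/-- Quasinorm of `B̄^l_{p,q,r}(ℝⁿ, {t_k})`. -/
def barBnorm (n l : ℕ) (p q r : ℝ≥0∞) (t : ℕ → Rn n → ℝ) (φ : Rn n → ℝ) : ℝ≥0∞ :=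
  lqNorm q (fun k : ℕ =>
    lpNormE p volume (fun x =>
      ENNReal.ofReal (t (k + 1) x) * barDelta n l r ((2 : ℝ) ^ (-((k : ℤ) + 1))) φ x)) +
  lpNormE p volume (fun x => ENNReal.ofReal (t 0 x) * eLpNorm φ r (volume.restrict (openCube x 1)))

/-- Membership in `B̄^l_{p,q,r}(ℝⁿ, {t_k})`. -/
def MemBarB (n l : ℕ) (p q r : ℝ≥0∞) (t : ℕ → Rn n → ℝ) (φ : Rn n → ℝ) : Prop :=
  MemLrLoc n r φ ∧ barBnorm n l p q r t φ < ∞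

/-- The class `A^{loc}_∞`. -/
def MemAlocInfty (n : ℕ) (w : Rn n → ℝ) : Prop :=
  ∃ α : ℝ, α ∈ Set.Ioo (0 : ℝ) 1 ∧ ∃ M : ℝ≥0∞, M < ∞ ∧
    ∀ (c : Rn n) (s : ℝ), 0 < s → s ≤ 1 →
      ∀ F : Set (Rn n), F ⊆ cubeAt c s → MeasurableSet F →
        ENNReal.ofReal α * volume (cubeAt c s) ≤ volume F →
        (∫⁻ x in cubeAt c s, ENNReal.ofReal (w x)) ≤ M * ∫⁻ x in F, ENNReal.ofReal (w x)

/-- The class `A^{loc}_1`. -/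
def MemAloc1 (n : ℕ) (w : Rn n → ℝ) : Prop :=
  ∃ C : ℝ≥0∞, C < ∞ ∧ ∀ (c : Rn n) (s : ℝ), 0 < s → s ≤ 1 →
    ∀ᵐ x ∂volume.restrict (cubeAt c s),
      (∫⁻ y in cubeAt c s, ENNReal.ofReal (w y)) ≤ C * volume (cubeAt c s) * ENNReal.ofReal (w x)

/-- The class `A^{loc}_{p₀}` for `p₀ > 1`. -/
def MemAlocGt (n : ℕ) (p₀ : ℝ) (w : Rn n → ℝ) : Prop :=
  ∃ C : ℝ≥0∞, C < ∞ ∧ ∀ (c : Rn n) (s : ℝ), 0 < s → s ≤ 1 →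
    ((volume (cubeAt c s))⁻¹ * ∫⁻ y in cubeAt c s, ENNReal.ofReal (w y)) *
      ((volume (cubeAt c s))⁻¹ *
        ∫⁻ y in cubeAt c s, ENNReal.ofReal (w y) ^ (-(1 : ℝ) / (p₀ - 1))) ^ (p₀ - 1) ≤ C

/-- The class `A^{loc}_{p₀}` for `p₀ ∈ [1,∞)`. -/
def MemAlocP (n : ℕ) (p₀ : ℝ) (w : Rn n → ℝ) : Prop :=
  if p₀ = 1 then MemAloc1 n w else MemAlocGt n p₀ w

/-- The class `{}^{loc}Y^{α₃}_{α₁,α₂}` of weight sequences of variable smoothness. -/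
def MemLocY (n : ℕ) (α₁ α₂ α₃ : ℝ) (s : ℕ → Rn n → ℝ) : Prop :=
  (∀ k, IsWeight (s k)) ∧
  (∃ C : ℝ, 0 < C ∧ ∀ j k : ℕ, j ≤ k → ∀ x : Rn n,
    C⁻¹ * (2 : ℝ) ^ (α₁ * ((k : ℝ) - (j : ℝ))) ≤ s k x / s j x ∧
      s k x / s j x ≤ C * (2 : ℝ) ^ (α₂ * ((k : ℝ) - (j : ℝ)))) ∧
  (∀ k : ℕ, ∀ x y : Rn n, euclNorm (x - y) ≤ (2 : ℝ) ^ (-(k : ℤ)) →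
    s k x ≤ (2 : ℝ) ^ α₃ * s k y)

/-- The set `Ξ^{d,n}_{k,m} = Q^n_{k,m} × (2^{-k}B^d ∖ 2^{-k-1}B^d) ⊂ ℝ^{n+d}`. -/
def Xi (n d k : ℕ) (m : Fin n → ℤ) : Set (Rn (n + d)) :=
  {z | (fun i => z (Fin.castAdd d i)) ∈ dyadicCube n k m ∧
       euclNorm (fun i : Fin d => z (Fin.natAdd n i)) < (2 : ℝ) ^ (-(k : ℤ)) ∧
       (2 : ℝ) ^ (-(k : ℤ) - 1) ≤ euclNorm (fun i : Fin d => z (Fin.natAdd n i))}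

/-- The multiple sequence `γ̂_{k,m} = ‖γ‖_{L_p(Ξ^{d,n}_{k,m})}` generated by a weight `γ`. -/
def gammaHat (n d : ℕ) (p : ℝ≥0∞) (γ : Rn (n + d) → ℝ) (k : ℕ) (m : Fin n → ℤ) : ℝ≥0∞ :=
  eLpNorm γ p (volume.restrict (Xi n d k m))

def delta1Good (n d : ℕ) (p : ℝ≥0∞) (γ : Rn (n + d) → ℝ) (δ : ℝ) : Prop :=
  ∃ C : ℝ≥0∞, C < ∞ ∧ ∀ k j : ℕ, k ≤ j → ∀ m : Fin n → ℤ,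
    (∑' m' : {m' : Fin n → ℤ // dyadicCube n j m' ⊆ dyadicCube n k m},
        gammaHat n d p γ j m'.1 ^ p.toReal) ≤
      C * (2 : ℝ≥0∞) ^ ((((k : ℝ) - (j : ℝ)) * (d : ℝ)) * δ) * gammaHat n d p γ k m ^ p.toReal

/-- `δ₁(γ,n,d)`. -/
def delta1 (n d : ℕ) (p : ℝ≥0∞) (γ : Rn (n + d) → ℝ) : ℝ :=
  sSup {δ : ℝ | 0 < δ ∧ delta1Good n d p γ δ}

def delta2Good (n d : ℕ) (p : ℝ≥0∞) (γ : Rn (n + d) → ℝ) (δ : ℝ) : Prop :=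
  ∃ C : ℝ≥0∞, C < ∞ ∧ ∀ k j : ℕ, k ≤ j → ∀ m : Fin n → ℤ,
    ∀ G : Set (Fin n → ℤ), (∀ m' ∈ G, dyadicCube n j m' ⊆ dyadicCube n k m) →
      (∑' m' : G, gammaHat n d p γ j m'.1 ^ p.toReal) ≤
        C * (volume (⋃ m' ∈ G, dyadicCube n j m') / volume (dyadicCube n k m)) ^ δ *
          ∑' m' : {m' : Fin n → ℤ // dyadicCube n j m' ⊆ dyadicCube n k m},
            gammaHat n d p γ j m'.1 ^ p.toReal

/-- `δ₂(γ,n,d)`. -/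
def delta2 (n d : ℕ) (p : ℝ≥0∞) (γ : Rn (n + d) → ℝ) : ℝ :=
  sSup {δ : ℝ | 0 < δ ∧ delta2Good n d p γ δ}

/-- The cardinal B-spline of degree `deg` with knots `0, 1, …, deg + 1`. -/
def cardB : ℕ → ℝ → ℝ
  | 0, x => if 0 ≤ x ∧ x < 1 then 1 else 0
  | (d + 1), x => (x / (d + 1)) * cardB d x + (((d : ℝ) + 2 - x) / (d + 1)) * cardB d (x - 1)

/-- The tensor-product B-spline `N^{deg}_{k,m}` on `ℝⁿ`. -/
def Bspl (n deg k : ℕ) (m : Fin n → ℤ) (x : Rn n) : ℝ :=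
  ∏ i, cardB deg (2 ^ k * x i - (m i : ℝ))

/-- The spline `Σ_m β_m N^{deg}_{k,m}`. -/
def splineSum (n deg k : ℕ) (β : (Fin n → ℤ) → ℝ) (x : Rn n) : ℝ :=
  ∑' m, β m * Bspl n deg k m x

/-- A dyadic spline of degree `deg` (an element of `Σ^{deg} = ⋃_k Σ^{deg}_k`). -/
def IsSplineFn (n deg : ℕ) (S : Rn n → ℝ) : Prop :=
  ∃ (k : ℕ) (β : (Fin n → ℤ) → ℝ), S = splineSum n deg k β

/-- The weighted best spline approximation `s_k(φ)` by splines of degree `deg`. -/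
def sApprox (n deg : ℕ) (p r : ℝ≥0∞) (T : ℕ → (Fin n → ℤ) → ℝ≥0∞) (φ : Rn n → ℝ) (k : ℕ) :
    ℝ≥0∞ :=
  ⨅ β : (Fin n → ℤ) → ℝ,
    lqNorm p (fun m => T k m *
      eLpNorm (fun x => φ x - splineSum n deg k β x) r (volume.restrict (dyadicCube n k m)))

/-- `s_j(φ)` for `j ∈ {-1, 0, 1, 2, …}`, including the term `s_{-1}`. -/
def sApproxZ (n deg : ℕ) (p r : ℝ≥0∞) (T : ℕ → (Fin n → ℤ) → ℝ≥0∞) (φ : Rn n → ℝ) (j : ℤ) :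
    ℝ≥0∞ :=
  if j < 0 then
    lqNorm p (fun m => T 0 m * eLpNorm φ r (volume.restrict (dyadicCube n 0 m)))
  else sApprox n deg p r T φ j.toNat

/-- Local best polynomial approximation `E_l(φ,Q)_r` by polynomials of total degree `< l`. -/
def bestApproxE (n l : ℕ) (r : ℝ≥0∞) (φ : Rn n → ℝ) (Q : Set (Rn n)) : ℝ≥0∞ :=
  ⨅ P : {P : MvPolynomial (Fin n) ℝ // P.totalDegree < l},
    eLpNorm (fun x => φ x - MvPolynomial.eval x P.1) r (volume.restrict Q)

/-- The modulus of continuity `ω_l(φ,Q)_r`. -/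
def modulusE (n l : ℕ) (r : ℝ≥0∞) (φ : Rn n → ℝ) (Q : Set (Rn n)) : ℝ≥0∞ :=
  ⨆ h : Rn n, eLpNorm (difflOn l Q h φ) r (volume : Measure (Rn n))

def partialDeriv {N : ℕ} (i : Fin N) (ψ : Rn N → ℝ) : Rn N → ℝ :=
  fun x => fderiv ℝ ψ x (Pi.single i 1)

def iterPD {N : ℕ} : List (Fin N) → (Rn N → ℝ) → Rn N → ℝ
  | [], ψ => ψ
  | i :: L, ψ => partialDeriv i (iterPD L ψ)

def multiIdxList {N : ℕ} (α : Fin N → ℕ) : List (Fin N) :=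
  (List.finRange N).foldr (fun i L => List.replicate (α i) i ++ L) []

/-- Iterated partial derivative `D^α`. -/
def multiDeriv {N : ℕ} (α : Fin N → ℕ) (ψ : Rn N → ℝ) : Rn N → ℝ :=
  iterPD (multiIdxList α) ψ

/-- `g` is the weak (Sobolev) derivative `D^α f`. -/
def IsWeakDeriv {N : ℕ} (α : Fin N → ℕ) (f g : Rn N → ℝ) : Prop :=
  ∀ ψ : Rn N → ℝ, ContDiff ℝ (⊤ : ℕ∞) ψ → HasCompactSupport ψ →
    ∫ x, f x * multiDeriv α ψ x = (-1 : ℝ) ^ (∑ i, α i) * ∫ x, g x * ψ x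

/-- The weighted Sobolev norm `Σ_{|α| ≤ l} ‖γ · D^α f‖_{L_p}` computed from a system `D` of
weak derivatives. -/
def sobNorm (N : ℕ) (p : ℝ≥0∞) (l : ℕ) (γ : Rn N → ℝ) (D : (Fin N → ℕ) → Rn N → ℝ) : ℝ≥0∞ :=
  ∑' α : Fin N → ℕ,
    if (∑ i, α i) ≤ l then eLpNorm (fun x => γ x * D α x) p volume else 0

/-- Membership in the weighted Sobolev space `W^l_p(ℝ^N, γ)`, witnessed by the system `D`
of weak derivatives of `f`. -/
def MemW (N : ℕ) (p : ℝ≥0∞) (l : ℕ) (γ : Rn N → ℝ) (f : Rn N → ℝ)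
    (D : (Fin N → ℕ) → Rn N → ℝ) : Prop :=
  MeasureTheory.LocallyIntegrable f volume ∧ D 0 = f ∧
    (∀ α : Fin N → ℕ, (∑ i, α i) ≤ l →
      MeasureTheory.LocallyIntegrable (D α) volume ∧ IsWeakDeriv α f (D α)) ∧
    sobNorm N p l γ D < ∞

/-- `φ` is the trace of `f` on the plane `y = 0`. -/
def IsTraceSob {n d : ℕ} (f : Rn (n + d) → ℝ) (φ : Rn n → ℝ) : Prop :=
  ∃ f' : Rn (n + d) → ℝ, f' =ᵐ[volume] f ∧
    ∀ (c : Rn n) (s : ℝ), 0 < s →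
      Filter.Tendsto (fun y : Rn d => ∫ x in cubeAt c s, |f' (Fin.append x y) - φ x|)
        (nhds 0) (nhds 0)

/-- The weight sequence `γ_k(x) = 2^{k(l+n/p)} Σ_m χ_{Q̃^n_{k,m}}(x) γ̂_{k,m}`. -/
def gammaSeq (n d : ℕ) (p : ℝ≥0∞) (l : ℕ) (γ : Rn (n + d) → ℝ) (k : ℕ) (x : Rn n) : ℝ≥0∞ :=
  (2 : ℝ≥0∞) ^ ((k : ℝ) * ((l : ℝ) + (n : ℝ) / p.toReal)) *
    ∑' m : Fin n → ℤ, (dyadicCubeHalf n k m).indicator (fun _ => gammaHat n d p γ k m) x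

/-- Conjugate exponent in `ℝ≥0∞`. -/
def conjE (e : ℝ≥0∞) : ℝ≥0∞ := (1 - e⁻¹)⁻¹

/-- The exponent `p_θ`. -/
def pTheta (p θ : ℝ≥0∞) : ℝ≥0∞ := if θ = ∞ ∧ p = ∞ then 1 else p / θ

/-! ### Normalised Lebesgue measure on a cube -/

/-- Normalised Lebesgue measure on the cube `ρ Iⁿ`. -/
def nuB (n : ℕ) (ρ : ℝ) : Measure (Rn n) :=
  (volume (Metric.ball (0 : Rn n) ρ))⁻¹ • volume.restrict (Metric.ball (0 : Rn n) ρ)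

lemma vol_ball {n : ℕ} (x : Rn n) {ρ : ℝ} (hρ : 0 < ρ) :
    volume (Metric.ball x ρ) = ENNReal.ofReal (2 * ρ) ^ n := by
  rw [Real.volume_pi_ball x hρ, Fintype.card_fin, ENNReal.ofReal_pow (by positivity)]

lemma vol_ball_ne_zero {n : ℕ} (x : Rn n) {ρ : ℝ} (hρ : 0 < ρ) :
    volume (Metric.ball x ρ) ≠ 0 := (Metric.measure_ball_pos volume x hρ).ne'

lemma vol_ball_ne_top {n : ℕ} (x : Rn n) (ρ : ℝ) :
    volume (Metric.ball x ρ) ≠ ∞ := measure_ball_lt_top.ne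

lemma openCube_eq {n : ℕ} (x : Rn n) {ρ : ℝ} (hρ : 0 < ρ) : openCube x ρ = Metric.ball x ρ := by
  ext y
  rw [Metric.mem_ball, dist_pi_lt_iff hρ]
  simp [openCube, Real.dist_eq]

lemma nuB_isProb (n : ℕ) {ρ : ℝ} (hρ : 0 < ρ) : IsProbabilityMeasure (nuB n ρ) := by
  constructor
  simp only [nuB, Measure.smul_apply, Measure.restrict_apply_univ, smul_eq_mul]
  exact ENNReal.inv_mul_cancel (vol_ball_ne_zero _ hρ) (vol_ball_ne_top _ _)

instance nuB_sfinite (n : ℕ) (ρ : ℝ) : SFinite (nuB n ρ) := by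
  unfold nuB; infer_instance

lemma lintegral_nuB {n : ℕ} (ρ : ℝ) (F : Rn n → ℝ≥0∞) :
    ∫⁻ h, F h ∂(nuB n ρ) =
      (volume (Metric.ball (0 : Rn n) ρ))⁻¹ * ∫⁻ h in Metric.ball (0 : Rn n) ρ, F h := by
  simp [nuB, lintegral_smul_measure]

lemma vol_ratio {n : ℕ} {ρ σ K : ℝ} (hρ : 0 < ρ) (hσ : 0 < σ) (hK : σ ≤ K * ρ) :
    (volume (Metric.ball (0 : Rn n) ρ))⁻¹ ≤
      ENNReal.ofReal K ^ n * (volume (Metric.ball (0 : Rn n) σ))⁻¹ := by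
  rw [← div_eq_mul_inv, ENNReal.le_div_iff_mul_le, mul_comm, ← div_eq_mul_inv]
  · apply ENNReal.div_le_of_le_mul
    rw [vol_ball _ hρ, vol_ball _ hσ, ← mul_pow]
    have hK0 : 0 ≤ K := by
      by_contra h
      push Not at h
      nlinarith
    rw [← ENNReal.ofReal_mul hK0]
    refine pow_le_pow_left' (ENNReal.ofReal_le_ofReal ?_) n
    linarith
  · left; exact vol_ball_ne_zero _ hσ
  · left; exact vol_ball_ne_top _ _

lemma lintegral_smul_le {n : ℕ} {c : ℝ} (hc : 1 ≤ c) {G : Rn n → ℝ≥0∞} (hG : Measurable G)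
    (d : Rn n) : ∫⁻ h, G (d + c • h) ≤ ∫⁻ h, G h := by
  have h1 : ∫⁻ h, G (d + c • h) = ∫⁻ h, G (d + h) ∂(Measure.map (fun h : Rn n => c • h) volume) := by
    rw [lintegral_map (by fun_prop) (by fun_prop)]
  have hc0 : c ≠ 0 := by positivity
  have h2 : Measure.map (fun h : Rn n => c • h) volume =
      ENNReal.ofReal |(c ^ n)⁻¹| • (volume : Measure (Rn n)) := by
    have := Measure.map_addHaar_smul (volume : Measure (Rn n)) hc0
    simpa using this
  rw [h1, h2, lintegral_smul_measure, lintegral_add_left_eq_self (μ := volume) G d, smul_eq_mul]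
  calc _ ≤ 1 * ∫⁻ h, G h := by
        gcongr
        rw [ENNReal.ofReal_le_one, abs_of_pos (by positivity)]
        exact inv_le_one_of_one_le₀ (one_le_pow₀ hc)
    _ = _ := one_mul _

/-- Comparison of averages under an affine change of variables. -/
lemma nuB_aff {n : ℕ} {ρ σ K c : ℝ} (hρ : 0 < ρ) (hc : 1 ≤ c) {d : Rn n}
    (hd : ‖d‖ + c * ρ ≤ σ) (hK : σ ≤ K * ρ) {F : Rn n → ℝ≥0∞} (hF : Measurable F) :
    ∫⁻ h, F (d + c • h) ∂(nuB n ρ) ≤ ENNReal.ofReal K ^ n * ∫⁻ h, F h ∂(nuB n σ) := by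
  have hσ : 0 < σ := by
    have := norm_nonneg d
    have : 0 < c * ρ := by positivity
    linarith
  rw [lintegral_nuB, lintegral_nuB, ← mul_assoc]
  refine mul_le_mul' (vol_ratio hρ hσ hK) ?_
  rw [← lintegral_indicator measurableSet_ball, ← lintegral_indicator measurableSet_ball]
  refine le_trans (lintegral_mono ?_)
    (lintegral_smul_le hc (hF.indicator (measurableSet_ball (x := (0 : Rn n)) (ε := σ))) d)
  intro h
  by_cases hh : h ∈ Metric.ball (0 : Rn n) ρ
  · have : d + c • h ∈ Metric.ball (0 : Rn n) σ := by
      rw [mem_ball_zero_iff] at hh ⊢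
      calc ‖d + c • h‖ ≤ ‖d‖ + ‖c • h‖ := norm_add_le _ _
        _ = ‖d‖ + c * ‖h‖ := by rw [norm_smul, Real.norm_of_nonneg (by linarith)]
        _ < ‖d‖ + c * ρ := by gcongr
        _ ≤ σ := hd
    simp [Set.indicator_of_mem hh, Set.indicator_of_mem this]
  · simp [Set.indicator_of_notMem hh]

lemma nuB_mono {n : ℕ} {ρ σ K : ℝ} (hρ : 0 < ρ) 
    (hd : ρ ≤ σ) (hK : σ ≤ K * ρ) {F : Rn n → ℝ≥0∞} (hF : Measurable F) :
    ∫⁻ h, F h ∂(nuB n ρ) ≤ ENNReal.ofReal K ^ n * ∫⁻ h, F h ∂(nuB n σ) := by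
  have := nuB_aff (n := n) (d := 0) hρ le_rfl (by simpa using hd) hK hF
  simpa using this

/-- Almost every point of `ν_ρ` is in the cube. -/
lemma nuB_ae {n : ℕ} (ρ : ℝ) : ∀ᵐ h ∂(nuB n ρ), ‖h‖ < ρ := by
  unfold nuB
  apply Measure.ae_smul_measure
  filter_upwards [ae_restrict_mem measurableSet_ball] with h hh
  simpa using hh

/-- Fubini plus translation invariance. -/
lemma lintegral_nuB_translate {n : ℕ} {ρ : ℝ} (hρ : 0 < ρ) {g : Rn n → ℝ≥0∞} (hg : Measurable g) :
    ∫⁻ z, ∫⁻ h, g (z + h) ∂(nuB n ρ) = ∫⁻ x, g x := by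
  have := nuB_isProb n hρ
  rw [lintegral_lintegral_swap (by fun_prop)]
  simp [lintegral_add_right_eq_self g]

/-- Convolution of two averages dominates an average. -/
lemma nuB_conv {n : ℕ} {σ ρ₁ ρ₂ τ : ℝ} (hσ : 0 < σ) (h1 : 0 < ρ₁) (h2 : 0 < ρ₂) (hτ : 0 < τ)
    (c : Rn n → Rn n)
    (hc : ∀ w, ‖w‖ < σ → ∀ h, ‖h - c w‖ < τ → ‖h‖ < ρ₁ ∧ ‖w - h‖ < ρ₂) {K : ℝ} (hK : ρ₁ ≤ K * σ)
    {L : ℝ} (hL : ρ₂ ≤ L * τ)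
    {F : Rn n → ℝ≥0∞} (hF : Measurable F) :
    ∫⁻ h, F h ∂(nuB n σ) ≤ ENNReal.ofReal K ^ n * ENNReal.ofReal L ^ n *
      ∫⁻ h, ∫⁻ g, F (h + g) ∂(nuB n ρ₂) ∂(nuB n ρ₁) := by
  set V₁ := volume (Metric.ball (0 : Rn n) ρ₁)
  set V₂ := volume (Metric.ball (0 : Rn n) ρ₂) with hV₂
  set Vτ := volume (Metric.ball (0 : Rn n) τ) with hVτ
  have key : Vτ * ∫⁻ w in Metric.ball (0 : Rn n) σ, F w ≤
      ∫⁻ h in Metric.ball (0 : Rn n) ρ₁, ∫⁻ g in Metric.ball (0 : Rn n) ρ₂, F (h + g) := by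
    have e1 : ∀ h : Rn n, ∫⁻ g in Metric.ball (0 : Rn n) ρ₂, F (h + g) =
        ∫⁻ w, (Metric.ball (0 : Rn n) ρ₂).indicator (fun _ => (1 : ℝ≥0∞)) (w - h) * F w := by
      intro h
      rw [← lintegral_indicator measurableSet_ball]
      refine Eq.trans ?_ (lintegral_add_left_eq_self (μ := volume) (fun w =>
        (Metric.ball (0 : Rn n) ρ₂).indicator (fun _ => (1 : ℝ≥0∞)) (w - h) * F w) h)
      refine lintegral_congr fun g => ?_
      simp [Set.indicator]
    have m1 : Measurable ((Metric.ball (0 : Rn n) ρ₂).indicator (fun _ => (1 : ℝ≥0∞))) :=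
      measurable_const.indicator measurableSet_ball
    simp_rw [e1]
    rw [lintegral_lintegral_swap (by fun_prop), ← lintegral_indicator measurableSet_ball,
      ← lintegral_const_mul _ (hF.indicator measurableSet_ball)]
    refine lintegral_mono fun w => ?_
    by_cases hw : w ∈ Metric.ball (0 : Rn n) σ
    · rw [Set.indicator_of_mem hw, lintegral_mul_const _ (by fun_prop)]
      gcongr
      rw [← lintegral_indicator measurableSet_ball]
      have : Vτ = ∫⁻ h, (Metric.ball (c w) τ).indicator (fun _ => (1 : ℝ≥0∞)) h := by
        rw [lintegral_indicator measurableSet_ball, setLIntegral_one, hVτ, vol_ball _ hτ,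
          vol_ball _ hτ]
      rw [this]
      refine lintegral_mono fun h => ?_
      by_cases hh : h ∈ Metric.ball (c w) τ
      · obtain ⟨ha, hb⟩ := hc w (by simpa using hw) h (by simpa [dist_eq_norm] using hh)
        have ha' : h ∈ Metric.ball (0 : Rn n) ρ₁ := by simpa using ha
        have hb' : w - h ∈ Metric.ball (0 : Rn n) ρ₂ := by simpa using hb
        simp [Set.indicator_of_mem hh, Set.indicator_of_mem ha', Set.indicator_of_mem hb']
      · simp [Set.indicator_of_notMem hh]
    · simp [Set.indicator_of_notMem hw]
  simp_rw [lintegral_nuB]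
  rw [lintegral_const_mul _ (by fun_prop)]
  have hr1 := vol_ratio (n := n) hσ h1 hK
  have hr2 := vol_ratio (n := n) hτ h2 hL
  have hV0 : Vτ ≠ 0 := vol_ball_ne_zero _ hτ
  have hVt : Vτ ≠ ∞ := vol_ball_ne_top _ _
  calc _ = (volume (Metric.ball (0 : Rn n) σ))⁻¹ * (Vτ⁻¹ * (Vτ * ∫⁻ w in Metric.ball (0 : Rn n) σ, F w)) := by
        rw [← mul_assoc Vτ⁻¹, ENNReal.inv_mul_cancel hV0 hVt, one_mul]
    _ ≤ (ENNReal.ofReal K ^ n * V₁⁻¹) * ((ENNReal.ofReal L ^ n * V₂⁻¹) *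
      ∫⁻ h in Metric.ball (0 : Rn n) ρ₁, ∫⁻ g in Metric.ball (0 : Rn n) ρ₂, F (h + g)) := by
        gcongr
    _ = _ := by ring
/-! ### Elementary inequalities -/

/-- Jensen's inequality for a probability measure. -/
lemma jensen_prob {α : Type*} [MeasurableSpace α] (μ : Measure α) [IsProbabilityMeasure μ]
    {θ : ℝ} (hθ : 1 ≤ θ) {f : α → ℝ≥0∞} (hf : AEMeasurable f μ) :
    (∫⁻ x, f x ∂μ) ^ θ ≤ ∫⁻ x, f x ^ θ ∂μ := by
  rcases hθ.eq_or_lt with rfl | h1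
  · simp
  have hpq := Real.HolderConjugate.conjExponent h1
  have := ENNReal.lintegral_mul_le_Lp_mul_Lq μ hpq hf (g := fun _ => 1) aemeasurable_const
  have h0 : 0 < θ := by linarith
  have h2 : ∫⁻ x, f x ∂μ ≤ (∫⁻ x, f x ^ θ ∂μ) ^ (1 / θ) := by simpa using this
  calc (∫⁻ x, f x ∂μ) ^ θ ≤ ((∫⁻ x, f x ^ θ ∂μ) ^ (1 / θ)) ^ θ := by gcongr
    _ = _ := by rw [← ENNReal.rpow_mul, one_div_mul_cancel h0.ne', ENNReal.rpow_one]

lemma sum_rpow_le {ι : Type*} (s : Finset ι) (z : ι → ℝ≥0∞) {e : ℝ} (he : 0 < e) :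
    (∑ i ∈ s, z i) ^ e ≤ (s.card : ℝ≥0∞) ^ e * ∑ i ∈ s, z i ^ e := by
  rcases s.eq_empty_or_nonempty with rfl | hs
  · simp [he]
  obtain ⟨j, hj, hmax⟩ := s.exists_max_image z hs
  calc (∑ i ∈ s, z i) ^ e ≤ (s.card * z j) ^ e := by
        gcongr
        have := Finset.sum_le_card_nsmul s z (z j) hmax
        simpa using this
    _ = (s.card : ℝ≥0∞) ^ e * z j ^ e := ENNReal.mul_rpow_of_nonneg _ _ he.le
    _ ≤ _ := by
        gcongr
        exact Finset.single_le_sum (f := fun i => z i ^ e) (fun _ _ => by simp) hj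

lemma add_rpow_le' (x y : ℝ≥0∞) {e : ℝ} (he : 0 < e) :
    (x + y) ^ e ≤ (2 : ℝ≥0∞) ^ e * (x ^ e + y ^ e) := by
  have := sum_rpow_le (Finset.univ : Finset Bool) (fun b => if b then x else y) he
  simpa using this

/-- `(x + y)^e ≤ (1+δ)^e x^e + C_δ y^e`. -/
lemma add_rpow_eps {e : ℝ} (he : 0 < e) {δ : ℝ≥0∞} (hδ : δ ≠ 0) (hδ' : δ ≠ ∞) (x y : ℝ≥0∞) :
    (x + y) ^ e ≤ (1 + δ) ^ e * x ^ e + (1 + δ⁻¹) ^ e * y ^ e := by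
  rcases le_total y (δ * x) with h | h
  · refine le_trans ?_ le_self_add
    rw [← ENNReal.mul_rpow_of_nonneg _ _ he.le]
    gcongr
    rw [add_mul, one_mul]
    gcongr
  · refine le_trans ?_ le_add_self
    rw [← ENNReal.mul_rpow_of_nonneg _ _ he.le]
    gcongr
    rw [add_mul, one_mul, add_comm]
    gcongr
    rw [mul_comm, ← div_eq_mul_inv, ENNReal.le_div_iff_mul_le (Or.inl hδ) (Or.inl hδ'), mul_comm]
    exact h

lemma two_rpow_ne_top (x : ℝ) : (2 : ℝ≥0∞) ^ x ≠ ∞ := by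
  simp

lemma two_rpow_ne_zero (x : ℝ) : (2 : ℝ≥0∞) ^ x ≠ 0 := by
  simp

lemma two_rpow_add (x y : ℝ) : (2 : ℝ≥0∞) ^ (x + y) = (2 : ℝ≥0∞) ^ x * (2 : ℝ≥0∞) ^ y :=
  ENNReal.rpow_add _ _ (by norm_num) (by norm_num)

lemma geom_sum_lt_top {θ : ℝ} (hθ : 0 < θ) : ∑' i : ℕ, (2 : ℝ≥0∞) ^ (-(θ * i)) ≠ ∞ := by
  have : ∀ i : ℕ, (2 : ℝ≥0∞) ^ (-(θ * i)) = ((2 : ℝ≥0∞) ^ (-θ)) ^ i := by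
    intro i
    rw [← ENNReal.rpow_natCast, ← ENNReal.rpow_mul]
    congr 1; ring
  simp_rw [this]
  rw [ENNReal.tsum_geometric]
  have : (2 : ℝ≥0∞) ^ (-θ) < 1 := ENNReal.rpow_lt_one_of_one_lt_of_neg (by norm_num) (by linarith)
  simp [tsub_eq_zero_iff_le, this]

/-- Geometric-weight substitute for Hölder / Minkowski for sums. -/
lemma tsum_rpow_le {θ s : ℝ} (hθ : 0 < θ) (hs : 0 < s) :
    ∃ C : ℝ≥0∞, C ≠ ∞ ∧ ∀ y : ℕ → ℝ≥0∞,
      (∑' i, y i) ^ s ≤ C * ∑' i : ℕ, (2 : ℝ≥0∞) ^ (θ * i) * y i ^ s := by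
  refine ⟨(∑' i : ℕ, (2 : ℝ≥0∞) ^ (-((θ / s) * i))) ^ s, ?_, fun y => ?_⟩
  · exact ENNReal.rpow_ne_top_of_nonneg hs.le (geom_sum_lt_top (by positivity))
  set T := ∑' i : ℕ, (2 : ℝ≥0∞) ^ (θ * i) * y i ^ s with hT
  have h1 : ∀ i, y i ≤ (2 : ℝ≥0∞) ^ (-((θ / s) * i)) * T ^ (1 / s) := by
    intro i
    have h2 : (2 : ℝ≥0∞) ^ (θ * i) * y i ^ s ≤ T := ENNReal.le_tsum i
    have h3 : y i = (2 : ℝ≥0∞) ^ (-((θ / s) * i)) * ((2 : ℝ≥0∞) ^ (θ * i) * y i ^ s) ^ (1 / s) := by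
      rw [ENNReal.mul_rpow_of_nonneg _ _ (by positivity), ← ENNReal.rpow_mul, ← ENNReal.rpow_mul,
        ← mul_assoc, ← two_rpow_add, mul_one_div_cancel hs.ne', ENNReal.rpow_one]
      have : -(θ / s * i) + θ * i * (1 / s) = 0 := by ring
      rw [this]; simp
    rw [h3]
    conv_rhs => rw [← one_mul (T ^ (1 / s))]
    rw [one_mul]
    gcongr
  calc (∑' i, y i) ^ s ≤ (∑' i : ℕ, (2 : ℝ≥0∞) ^ (-((θ / s) * i)) * T ^ (1 / s)) ^ s := by
        gcongr with i; exact h1 i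
    _ = _ := by
        rw [ENNReal.tsum_mul_right, ENNReal.mul_rpow_of_nonneg _ _ hs.le, ← ENNReal.rpow_mul,
          one_div_mul_cancel hs.ne', ENNReal.rpow_one]

/-! ### The averaging operator on weighted spaces -/

/-- Average of `f` on the cube `x + ρ Iⁿ`. -/
def avB {n : ℕ} (ρ : ℝ) (f : Rn n → ℝ≥0∞) (x : Rn n) : ℝ≥0∞ := ∫⁻ h, f (x + h) ∂(nuB n ρ)

lemma measurable_avB {n : ℕ} (ρ : ℝ) {f : Rn n → ℝ≥0∞} (hf : Measurable f) :
    Measurable (avB ρ f) := by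
  unfold avB; fun_prop

lemma avB_mono {n : ℕ} (ρ : ℝ) {f g : Rn n → ℝ≥0∞} (h : ∀ x, f x ≤ g x) (x : Rn n) :
    avB ρ f x ≤ avB ρ g x := lintegral_mono fun _ => h _

lemma avB_const_mul {n : ℕ} (ρ : ℝ) (c : ℝ≥0∞) {f : Rn n → ℝ≥0∞} (hf : Measurable f) (x : Rn n) :
    avB ρ (fun y => c * f y) x = c * avB ρ f x := by
  unfold avB; rw [lintegral_const_mul _ (by fun_prop)]

/-- Local Muckenhoupt condition in the tested form. -/
def StarW {n : ℕ} (W : Rn n → ℝ≥0∞) (P ρ : ℝ) (K : ℝ≥0∞) : Prop :=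
  ∀ f : Rn n → ℝ≥0∞, Measurable f → ∀ z,
    avB ρ W z * (avB ρ f z) ^ P ≤ K * avB ρ (fun x => W x * f x ^ P) z

/-- Boundedness of the averaging operator on `L_P(W)`. -/
def AvgBd {n : ℕ} (W : Rn n → ℝ≥0∞) (P ρ : ℝ) (K : ℝ≥0∞) : Prop :=
  ∀ f : Rn n → ℝ≥0∞, Measurable f → ∫⁻ x, W x * (avB ρ f x) ^ P ≤ K * ∫⁻ x, W x * f x ^ P

lemma avB_shift {n : ℕ} {ρ σ K : ℝ} (hρ : 0 < ρ) {d : Rn n}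
    (hd : ‖d‖ + ρ ≤ σ) (hK : σ ≤ K * ρ) {f : Rn n → ℝ≥0∞} (hf : Measurable f) (z : Rn n) :
    avB ρ f (z + d) ≤ ENNReal.ofReal K ^ n * avB σ f z := by
  have := nuB_aff (n := n) (d := d) hρ le_rfl (by simpa using hd) hK (F := fun h => f (z + h))
    (by fun_prop)
  unfold avB
  simpa [add_assoc] using this

lemma avB_le {n : ℕ} {ρ σ K : ℝ} (hρ : 0 < ρ) 
    (hd : ρ ≤ σ) (hK : σ ≤ K * ρ) {f : Rn n → ℝ≥0∞} (hf : Measurable f) (z : Rn n) :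
    avB ρ f z ≤ ENNReal.ofReal K ^ n * avB σ f z := by
  simpa using avB_shift (d := 0) hρ (by simpa using hd) hK hf z

lemma StarW.avgBd {n : ℕ} {W : Rn n → ℝ≥0∞} (hW : Measurable W) {P ρ : ℝ} {K : ℝ≥0∞}
    (hP : 0 < P) (hρ : 0 < ρ) (h : StarW W P (2 * ρ) K) :
    AvgBd W P ρ (((2 : ℝ≥0∞) ^ n) ^ P * (2 : ℝ≥0∞) ^ n * K) := by
  intro f hf
  have hm := measurable_avB ρ hf
  have hm2 := measurable_avB (2 * ρ) hf
  rw [← lintegral_nuB_translate hρ (g := fun x => W x * (avB ρ f x) ^ P) (by fun_prop)]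
  have h2 : ∀ z, ∫⁻ h, W (z + h) * (avB ρ f (z + h)) ^ P ∂(nuB n ρ) ≤
      ((2 : ℝ≥0∞) ^ n) ^ P * (2 : ℝ≥0∞) ^ n * K * avB (2 * ρ) (fun x => W x * f x ^ P) z := by
    intro z
    calc _ ≤ ∫⁻ h, W (z + h) * ((2 : ℝ≥0∞) ^ n * avB (2 * ρ) f z) ^ P ∂(nuB n ρ) := by
          apply lintegral_mono_ae
          filter_upwards [nuB_ae (n := n) ρ] with h hh
          gcongr
          have := avB_shift (n := n) (K := 2) (σ := 2 * ρ) hρ (d := h) (by linarith) le_rfl hf z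
          simpa using this
      _ = avB ρ W z * ((2 : ℝ≥0∞) ^ n * avB (2 * ρ) f z) ^ P := by
          rw [lintegral_mul_const _ (by fun_prop)]; rfl
      _ ≤ ((2 : ℝ≥0∞) ^ n * avB (2 * ρ) W z) * ((2 : ℝ≥0∞) ^ n * avB (2 * ρ) f z) ^ P := by
          gcongr
          have := avB_le (n := n) (K := 2) (σ := 2 * ρ) hρ (by linarith) le_rfl hW z
          simpa using this
      _ = ((2 : ℝ≥0∞) ^ n) ^ P * (2 : ℝ≥0∞) ^ n * (avB (2 * ρ) W z * (avB (2 * ρ) f z) ^ P) := by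
          rw [ENNReal.mul_rpow_of_nonneg _ _ hP.le]; ring
      _ ≤ ((2 : ℝ≥0∞) ^ n) ^ P * (2 : ℝ≥0∞) ^ n *
            (K * avB (2 * ρ) (fun x => W x * f x ^ P) z) := by
          exact mul_le_mul_right (h f hf z) _
      _ = _ := by ring
  have hm3 := measurable_avB (2 * ρ) (f := fun x => W x * f x ^ P) (by fun_prop)
  refine (lintegral_mono h2).trans ?_
  rw [lintegral_const_mul _ hm3]
  refine mul_le_mul_right ?_ _
  exact (lintegral_nuB_translate (ρ := 2 * ρ) (by positivity) (g := fun x => W x * f x ^ P) (by fun_prop)).le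

/-- Averages at scale `3ρ/2` via iterated averages at scale `ρ`. -/
lemma avB_enlarge {n : ℕ} {ρ : ℝ} (hρ : 0 < ρ) {f : Rn n → ℝ≥0∞} (hf : Measurable f) (x : Rn n) :
    avB (3 / 2 * ρ) f x ≤ (4 : ℝ≥0∞) ^ n * avB ρ (avB ρ f) x := by
  have := nuB_conv (n := n) (σ := 3 / 2 * ρ) (ρ₁ := ρ) (ρ₂ := ρ) (τ := ρ / 4) (by positivity) hρ hρ
    (by positivity) (fun w => (1 / 2 : ℝ) • w) ?_ (K := 1) (by linarith) (L := 4) (by linarith)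
    (F := fun h => f (x + h)) (by fun_prop)
  · unfold avB
    simpa [add_assoc] using this
  · intro w hw h hh
    have e1 : ‖(1 / 2 : ℝ) • w‖ < 3 / 4 * ρ := by
      rw [norm_smul]; norm_num; linarith
    constructor
    · have : h = (h - (1 / 2 : ℝ) • w) + (1 / 2 : ℝ) • w := by abel
      calc ‖h‖ ≤ ‖h - (1 / 2 : ℝ) • w‖ + ‖(1 / 2 : ℝ) • w‖ := by
            conv_lhs => rw [this]
            exact norm_add_le _ _
        _ < ρ := by linarith
    · have : w - h = (1 / 2 : ℝ) • w - (h - (1 / 2 : ℝ) • w) := by module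
      calc ‖w - h‖ ≤ ‖(1 / 2 : ℝ) • w‖ + ‖h - (1 / 2 : ℝ) • w‖ := by
            rw [this]
            exact norm_sub_le _ _
        _ < ρ := by linarith

/-- Averages at scale `R` are dominated by averages of averages. -/
lemma avB_avB {n : ℕ} {R τ : ℝ} (hR : 0 < R) (hτ : 0 < τ) (hle : τ ≤ R) {f : Rn n → ℝ≥0∞}
    (hf : Measurable f) (x : Rn n) :
    avB R f x ≤ (2 : ℝ≥0∞) ^ n * avB (2 * R) (avB τ f) x := by
  have := nuB_conv (n := n) (σ := R) (ρ₁ := 2 * R) (ρ₂ := τ) (τ := τ) (by positivity)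
    (by positivity) hτ hτ id ?_ (K := 2) (by linarith) (L := 1) (by linarith)
    (F := fun h => f (x + h)) (by fun_prop)
  · unfold avB
    simpa [add_assoc] using this
  · intro w hw h hh
    simp only [id] at hh
    constructor
    · calc ‖h‖ = ‖(h - w) + w‖ := by rw [sub_add_cancel]
        _ ≤ ‖h - w‖ + ‖w‖ := norm_add_le _ _
        _ < 2 * R := by linarith
    · rwa [norm_sub_rev]

lemma AvgBd.enlarge {n : ℕ} {W : Rn n → ℝ≥0∞} {P ρ : ℝ} {K : ℝ≥0∞} (hW : Measurable W)
    (hP : 0 < P) (hρ : 0 < ρ) (h : AvgBd W P ρ K) :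
    AvgBd W P (3 / 2 * ρ) (((4 : ℝ≥0∞) ^ n) ^ P * K * K) := by
  intro f hf
  have m1 := measurable_avB ρ hf
  have m2 := measurable_avB ρ m1
  calc _ ≤ ∫⁻ x, ((4 : ℝ≥0∞) ^ n) ^ P * (W x * (avB ρ (avB ρ f) x) ^ P) := by
        refine lintegral_mono fun x => ?_
        calc _ ≤ W x * ((4 : ℝ≥0∞) ^ n * avB ρ (avB ρ f) x) ^ P := by
              gcongr; exact avB_enlarge hρ hf x
          _ = _ := by rw [ENNReal.mul_rpow_of_nonneg _ _ hP.le]; ring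
    _ = ((4 : ℝ≥0∞) ^ n) ^ P * ∫⁻ x, (W x * (avB ρ (avB ρ f) x) ^ P) :=
        lintegral_const_mul _ (by fun_prop)
    _ ≤ ((4 : ℝ≥0∞) ^ n) ^ P * (K * (K * ∫⁻ x, W x * f x ^ P)) := by
        gcongr
        exact (h _ m1).trans (by gcongr; exact h _ hf)
    _ = _ := by ring

lemma AvgBd.shrink {n : ℕ} {W : Rn n → ℝ≥0∞} {P ρ σ L : ℝ} {K : ℝ≥0∞} (hW : Measurable W)
    (hP : 0 < P) (hσ : 0 < σ) (hle : σ ≤ ρ) (hL : ρ ≤ L * σ) (h : AvgBd W P ρ K) :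
    AvgBd W P σ ((ENNReal.ofReal L ^ n) ^ P * K) := by
  intro f hf
  have m1 := measurable_avB ρ hf
  calc _ ≤ ∫⁻ x, (ENNReal.ofReal L ^ n) ^ P * (W x * (avB ρ f x) ^ P) := by
        refine lintegral_mono fun x => ?_
        calc _ ≤ W x * (ENNReal.ofReal L ^ n * avB ρ f x) ^ P := by
              gcongr; exact avB_le hσ hle hL hf x
          _ = _ := by rw [ENNReal.mul_rpow_of_nonneg _ _ hP.le]; ring
    _ = (ENNReal.ofReal L ^ n) ^ P * ∫⁻ x, (W x * (avB ρ f x) ^ P) :=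
        lintegral_const_mul _ (by fun_prop)
    _ ≤ (ENNReal.ofReal L ^ n) ^ P * (K * ∫⁻ x, W x * f x ^ P) := by
        gcongr
        exact h _ hf
    _ = _ := by ring

/-- Uniform boundedness of averages for all radii comparable with `ρ`. -/
lemma AvgBd.all {n : ℕ} {P : ℝ} (hP : 0 < P) {K : ℝ≥0∞} (hK : K ≠ ∞) {R : ℝ} (hR : 0 < R) :
    ∃ C : ℝ≥0∞, C ≠ ∞ ∧ ∀ (W : Rn n → ℝ≥0∞) (ρ : ℝ), Measurable W → 0 < ρ → AvgBd W P ρ K →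
      AvgBd W P (R * ρ) C := by
  have step : ∀ N : ℕ, ∃ C : ℝ≥0∞, C ≠ ∞ ∧ ∀ (W : Rn n → ℝ≥0∞) (ρ : ℝ), Measurable W → 0 < ρ →
      AvgBd W P ρ K → AvgBd W P ((3 / 2) ^ N * ρ) C := by
    intro N
    induction N with
    | zero => exact ⟨K, hK, fun W ρ _ _ h => by simpa using h⟩
    | succ N ih =>
      obtain ⟨C, hC, h⟩ := ih
      refine ⟨((4 : ℝ≥0∞) ^ n) ^ P * C * C, ?_, fun W ρ hW hρ hh => ?_⟩
      · have : ((4 : ℝ≥0∞) ^ n) ^ P ≠ ∞ :=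
          ENNReal.rpow_ne_top_of_nonneg hP.le (ENNReal.pow_ne_top (by norm_num))
        exact ENNReal.mul_ne_top (ENNReal.mul_ne_top this hC) hC
      · have := (h W ρ hW hρ hh).enlarge hW hP (by positivity)
        rwa [pow_succ', mul_assoc]
  obtain ⟨N, hN⟩ := pow_unbounded_of_one_lt R (by norm_num : (1 : ℝ) < 3 / 2)
  obtain ⟨C, hC, h⟩ := step N
  refine ⟨(ENNReal.ofReal ((3 / 2) ^ N / R) ^ n) ^ P * C, ?_, fun W ρ hW hρ hh => ?_⟩
  · exact ENNReal.mul_ne_top (ENNReal.rpow_ne_top_of_nonneg hP.le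
      (ENNReal.pow_ne_top ENNReal.ofReal_ne_top)) hC
  · refine (h W ρ hW hρ hh).shrink hW hP (by positivity) (by gcongr) (le_of_eq ?_)
    field_simp
/-! ### Weights -/

/-- Dyadic scale `2^{-k}`. -/
def sc (k : ℕ) : ℝ := (2 : ℝ) ^ (-(k : ℤ))

lemma sc_pos (k : ℕ) : 0 < sc k := by unfold sc; positivity

lemma sc_succ (k : ℕ) : sc k = 2 * sc (k + 1) := by
  unfold sc
  rw [show (-(k : ℤ)) = 1 + -((k + 1 : ℕ) : ℤ) by push_cast; ring, zpow_add₀ (by norm_num)]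
  norm_num

lemma sc_add (k i : ℕ) : sc k = 2 ^ i * sc (k + i) := by
  induction i with
  | zero => simp
  | succ i ih => rw [ih, sc_succ (k + i), pow_succ, mul_assoc]; rfl

lemma sc_zero : sc 0 = 1 := by simp [sc]

lemma sc_le_one (k : ℕ) : sc k ≤ 1 := by
  have := sc_add 0 k
  rw [sc_zero, zero_add] at this
  have h1 : (1 : ℝ) ≤ 2 ^ k := one_le_pow₀ (by norm_num)
  have := sc_pos k
  nlinarith

lemma avB_eq {n : ℕ} (ρ : ℝ) (f : Rn n → ℝ≥0∞) (z : Rn n) :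
    avB ρ f z = (volume (Metric.ball z ρ))⁻¹ * ∫⁻ y in Metric.ball z ρ, f y := by
  unfold avB
  rw [lintegral_nuB]
  congr 1
  · rw [Measure.addHaar_ball_center volume z]
  · rw [← lintegral_indicator measurableSet_ball, ← lintegral_indicator measurableSet_ball]
    refine Eq.trans ?_ (lintegral_add_left_eq_self (μ := volume) _ z)
    refine lintegral_congr fun g => ?_
    simp [Set.indicator]

lemma cubeAt_eq {n : ℕ} (z : Rn n) {ρ : ℝ} (hρ : 0 < ρ) :
    cubeAt (fun i => z i - ρ) (2 * ρ) = Metric.ball z ρ := by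
  ext y
  rw [Metric.mem_ball, dist_pi_lt_iff hρ]
  simp only [cubeAt, Set.mem_ofPred_eq, Real.dist_eq, abs_lt]
  refine forall_congr' fun i => ?_
  constructor <;> rintro ⟨h1, h2⟩ <;> constructor <;> linarith

lemma StarW.raise {n : ℕ} {W : Rn n → ℝ≥0∞} {p₀ P ρ : ℝ} {K : ℝ≥0∞} (hρ : 0 < ρ) (hp₀ : 0 < p₀)
    (hP : p₀ ≤ P) (h : StarW W p₀ ρ K) : StarW W P ρ K := by
  intro f hf z
  have := nuB_isProb n hρ
  have h1 := h (fun x => f x ^ (P / p₀)) (by fun_prop) z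
  have h2 : (avB ρ f z) ^ (P / p₀) ≤ avB ρ (fun x => f x ^ (P / p₀)) z :=
    jensen_prob _ (by rwa [one_le_div hp₀]) (by fun_prop)
  have e : P / p₀ * p₀ = P := by field_simp
  simp_rw [← ENNReal.rpow_mul, e] at h1
  refine le_trans ?_ h1
  rw [show (avB ρ f z) ^ P = ((avB ρ f z) ^ (P / p₀)) ^ p₀ by rw [← ENNReal.rpow_mul, e]]
  gcongr

lemma star_of_A1 {n : ℕ} {w : Rn n → ℝ} (hw : Measurable w) (hA : MemAloc1 n w) :
    ∃ K : ℝ≥0∞, K ≠ ∞ ∧ ∀ ρ : ℝ, 0 < ρ → 2 * ρ ≤ 1 →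
      StarW (fun x => ENNReal.ofReal (w x)) 1 ρ K := by
  obtain ⟨C, hC, h⟩ := hA
  refine ⟨C, hC.ne, fun ρ hρ hρ1 f hf z => ?_⟩
  have h1 := h (fun i => z i - ρ) (2 * ρ) (by linarith) hρ1
  rw [cubeAt_eq z hρ] at h1
  simp only [ENNReal.rpow_one]
  rw [avB_eq ρ f, avB_eq ρ (fun x => ENNReal.ofReal (w x) * f x)]
  have hV0 := vol_ball_ne_zero z hρ
  have hVt := vol_ball_ne_top z ρ
  calc _ = (volume (Metric.ball z ρ))⁻¹ *
        ∫⁻ y in Metric.ball z ρ, avB ρ (fun x => ENNReal.ofReal (w x)) z * f y := by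
        rw [lintegral_const_mul _ hf]; ring
    _ ≤ (volume (Metric.ball z ρ))⁻¹ *
        ∫⁻ y in Metric.ball z ρ, C * (ENNReal.ofReal (w y) * f y) := by
        refine mul_le_mul_right (lintegral_mono_ae ?_) _
        filter_upwards [h1] with x hx
        rw [← mul_assoc]
        gcongr
        rw [avB_eq, mul_comm, ← div_eq_mul_inv]
        refine ENNReal.div_le_of_le_mul (hx.trans (le_of_eq ?_))
        ring
    _ = _ := by
        rw [lintegral_const_mul _ (by fun_prop)]; ring

lemma star_of_Agt {n : ℕ} {w : Rn n → ℝ} (hw : Measurable w) (hw0 : ∀ x, 0 < w x) {p₀ : ℝ}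
    (hp₀ : 1 < p₀) (hA : MemAlocGt n p₀ w) :
    ∃ K : ℝ≥0∞, K ≠ ∞ ∧ ∀ ρ : ℝ, 0 < ρ → 2 * ρ ≤ 1 →
      StarW (fun x => ENNReal.ofReal (w x)) p₀ ρ K := by
  obtain ⟨C, hC, h⟩ := hA
  refine ⟨C, hC.ne, fun ρ hρ hρ1 f hf z => ?_⟩
  have h1 := h (fun i => z i - ρ) (2 * ρ) (by linarith) hρ1
  rw [cubeAt_eq z hρ, ← avB_eq, ← avB_eq] at h1
  have hpq := Real.HolderConjugate.conjExponent hp₀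
  set p' := Real.conjExponent p₀ with hp'
  have h00 : 0 < p₀ := by linarith
  have hp'0 : 0 < p' := hpq.symm.pos
  have hol := ENNReal.lintegral_mul_le_Lp_mul_Lq (nuB n ρ) hpq
    (f := fun h => f (z + h) * ENNReal.ofReal (w (z + h)) ^ (1 / p₀))
    (g := fun h => ENNReal.ofReal (w (z + h)) ^ (-(1 / p₀))) (by fun_prop) (by fun_prop)
  have hne : ∀ x, ENNReal.ofReal (w x) ≠ 0 := fun x => by simpa using hw0 x
  have e1 : ∀ h : Rn n, f (z + h) * ENNReal.ofReal (w (z + h)) ^ (1 / p₀) *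
      ENNReal.ofReal (w (z + h)) ^ (-(1 / p₀)) = f (z + h) := by
    intro h
    rw [mul_assoc, ← ENNReal.rpow_add _ _ (hne _) ENNReal.ofReal_ne_top]
    simp
  have e2 : ∀ h : Rn n, (f (z + h) * ENNReal.ofReal (w (z + h)) ^ (1 / p₀)) ^ p₀ =
      ENNReal.ofReal (w (z + h)) * f (z + h) ^ p₀ := by
    intro h
    rw [ENNReal.mul_rpow_of_nonneg _ _ h00.le, ← ENNReal.rpow_mul, one_div_mul_cancel h00.ne',
      ENNReal.rpow_one, mul_comm]
  have e4 : p' = p₀ / (p₀ - 1) := rfl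
  have hpm : p₀ - 1 ≠ 0 := by linarith
  have e3 : ∀ h : Rn n, (ENNReal.ofReal (w (z + h)) ^ (-(1 / p₀))) ^ p' =
      ENNReal.ofReal (w (z + h)) ^ (-(1 : ℝ) / (p₀ - 1)) := by
    intro h
    rw [← ENNReal.rpow_mul, e4]
    congr 1
    field_simp
  simp only [Pi.mul_apply, e1, e2, e3] at hol
  have hol2 : (avB ρ f z) ^ p₀ ≤ avB ρ (fun x => ENNReal.ofReal (w x) * f x ^ p₀) z *
      (avB ρ (fun x => ENNReal.ofReal (w x) ^ (-(1 : ℝ) / (p₀ - 1))) z) ^ (p₀ - 1) := by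
    calc (avB ρ f z) ^ p₀ ≤ _ := ENNReal.rpow_le_rpow hol h00.le
      _ = _ := by
        rw [ENNReal.mul_rpow_of_nonneg _ _ h00.le, ← ENNReal.rpow_mul, ← ENNReal.rpow_mul,
          one_div_mul_cancel h00.ne', ENNReal.rpow_one]
        have : 1 / p' * p₀ = p₀ - 1 := by rw [e4]; field_simp
        rw [this]; rfl
  calc _ ≤ avB ρ (fun x => ENNReal.ofReal (w x)) z *
        (avB ρ (fun x => ENNReal.ofReal (w x) * f x ^ p₀) z *
      (avB ρ (fun x => ENNReal.ofReal (w x) ^ (-(1 : ℝ) / (p₀ - 1))) z) ^ (p₀ - 1)) := by gcongr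
    _ = (avB ρ (fun x => ENNReal.ofReal (w x)) z *
      (avB ρ (fun x => ENNReal.ofReal (w x) ^ (-(1 : ℝ) / (p₀ - 1))) z) ^ (p₀ - 1)) *
        avB ρ (fun x => ENNReal.ofReal (w x) * f x ^ p₀) z := by ring
    _ ≤ _ := by gcongr

lemma star_of_A {n : ℕ} {w : Rn n → ℝ} (hw : Measurable w) (hw0 : ∀ x, 0 < w x) {p₀ : ℝ}
    (hp₀ : 1 ≤ p₀) (hA : MemAlocP n p₀ w) {P : ℝ} (hP : p₀ ≤ P) :
    ∃ K : ℝ≥0∞, K ≠ ∞ ∧ ∀ ρ : ℝ, 0 < ρ → 2 * ρ ≤ 1 →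
      StarW (fun x => ENNReal.ofReal (w x)) P ρ K := by
  unfold MemAlocP at hA
  split_ifs at hA with h
  · subst h
    obtain ⟨K, hK, hh⟩ := star_of_A1 hw hA
    exact ⟨K, hK, fun ρ h1 h2 => (hh ρ h1 h2).raise h1 one_pos hP⟩
  · obtain ⟨K, hK, hh⟩ := star_of_Agt hw hw0 (lt_of_le_of_ne hp₀ (Ne.symm h)) hA
    exact ⟨K, hK, fun ρ h1 h2 => (hh ρ h1 h2).raise h1 (by linarith) hP⟩

/-- Everything that is needed about the weight sequence `W_k = t_k^p`. -/
structure GoodW (n : ℕ) (W : ℕ → Rn n → ℝ≥0∞) (P A₁ A₂ : ℝ) : Prop where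
  meas : ∀ k, Measurable (W k)
  pos : ∀ k x, W k x ≠ 0
  star : ∃ K : ℝ≥0∞, K ≠ ∞ ∧ ∀ k, StarW (W k) P (sc k / (2 * n)) K
  up : ∃ C : ℝ≥0∞, C ≠ ∞ ∧ ∀ (k i : ℕ) (x : Rn n), W (k + i) x ≤ C * (2 : ℝ≥0∞) ^ (A₂ * i) * W k x
  down : ∃ C : ℝ≥0∞, C ≠ ∞ ∧ ∀ (k i : ℕ) (x : Rn n), W k x ≤ C * (2 : ℝ≥0∞) ^ (-(A₁ * i)) * W (k + i) x

lemma euclNorm_le {n : ℕ} (y : Rn n) : euclNorm y ≤ n * ‖y‖ := by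
  unfold euclNorm
  refine Real.sqrt_le_iff.mpr ⟨by positivity, ?_⟩
  rcases Nat.eq_zero_or_pos n with rfl | hn
  · simp
  have h1 : (1 : ℝ) ≤ n := by exact_mod_cast hn
  calc ∑ i, y i ^ 2 ≤ ∑ _i : Fin n, ‖y‖ ^ 2 := by
        refine Finset.sum_le_sum fun i _ => ?_
        rw [← sq_abs]
        have := norm_le_pi_norm y i
        rw [Real.norm_eq_abs] at this
        gcongr
    _ = n * ‖y‖ ^ 2 := by simp
    _ ≤ (n * ‖y‖) ^ 2 := by
        rw [mul_pow]
        gcongr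
        nlinarith

lemma goodW_of {n : ℕ} (hn : 0 < n) {pp : ℝ} (hpp : 0 < pp) {p₀ : ℝ} (hp₀ : 1 ≤ p₀)
    {γ : Rn n → ℝ} (hγ : IsWeight γ) (hA : MemAlocP n p₀ (fun x => γ x ^ pp))
    {α₁ α₂ α₃ : ℝ} {s : ℕ → Rn n → ℝ} (hs : MemLocY n α₁ α₂ α₃ s) {P : ℝ} (hP : p₀ ≤ P) :
    GoodW n (fun k x => ENNReal.ofReal (γ x * s k x) ^ pp) P (α₁ * pp) (α₂ * pp) := by
  obtain ⟨hsw, ⟨C, hC, hsC⟩, hs3⟩ := hs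
  have hγm := hγ.1
  have hsm : ∀ k, Measurable (s k) := fun k => (hsw k).1
  have hγ0 := hγ.2
  have hs0 : ∀ k x, 0 < s k x := fun k => (hsw k).2
  have hn1 : (1 : ℝ) ≤ n := by exact_mod_cast hn
  have hW : ∀ k x, ENNReal.ofReal (γ x * s k x) ^ pp =
      ENNReal.ofReal (γ x ^ pp) * ENNReal.ofReal (s k x) ^ pp := by
    intro k x
    rw [ENNReal.ofReal_mul (hγ0 x).le, ENNReal.mul_rpow_of_nonneg _ _ hpp.le,
      ENNReal.ofReal_rpow_of_pos (hγ0 x)]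
  refine ⟨fun k => ?_, fun k x => ?_, ?_, ?_, ?_⟩
  · have := hsm k
    fun_prop
  · have : 0 < ENNReal.ofReal (γ x * s k x) := by
      rw [ENNReal.ofReal_pos]; exact mul_pos (hγ0 x) (hs0 k x)
    exact (ENNReal.rpow_pos this ENNReal.ofReal_ne_top).ne'
  · obtain ⟨K, hK, hst⟩ := star_of_A (w := fun x => γ x ^ pp) (by fun_prop)
      (fun x => Real.rpow_pos_of_pos (hγ0 x) _) hp₀ hA hP
    set S : ℝ≥0∞ := ENNReal.ofReal (2 ^ α₃) ^ pp with hS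
    refine ⟨S * S * K, ?_, fun k f hf z => ?_⟩
    · have : S ≠ ∞ := ENNReal.rpow_ne_top_of_nonneg hpp.le ENNReal.ofReal_ne_top
      exact ENNReal.mul_ne_top (ENNReal.mul_ne_top this this) hK
    set ρ := sc k / (2 * n) with hρdef
    have hsck := sc_pos k
    have hρ : 0 < ρ := by positivity
    have hρ2 : 2 * n * ρ = sc k := by rw [hρdef]; field_simp
    have hρ1 : 2 * ρ ≤ 1 := by
      have := sc_le_one k
      nlinarith
    have hsk := hsm k
    have hcmp : ∀ h : Rn n, ‖h‖ < ρ → s k (z + h) ≤ 2 ^ α₃ * s k z ∧ s k z ≤ 2 ^ α₃ * s k (z + h) := by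
      intro h hh
      have hle : n * ‖h‖ ≤ sc k := by
        have : n * ‖h‖ ≤ n * ρ := by gcongr
        nlinarith
      constructor
      · apply hs3
        refine (euclNorm_le _).trans (le_trans (le_of_eq ?_) hle)
        simp
      · apply hs3
        refine (euclNorm_le _).trans (le_trans (le_of_eq ?_) hle)
        simp
    set σ : ℝ≥0∞ := ENNReal.ofReal (s k z) ^ pp with hσ
    have c1 : ∀ h : Rn n, ‖h‖ < ρ → ENNReal.ofReal (s k (z + h)) ^ pp ≤ S * σ := by
      intro h hh
      rw [hS, hσ, ← ENNReal.mul_rpow_of_nonneg _ _ hpp.le, ← ENNReal.ofReal_mul (by positivity)]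
      gcongr
      exact (hcmp h hh).1
    have c2 : ∀ h : Rn n, ‖h‖ < ρ → σ ≤ S * ENNReal.ofReal (s k (z + h)) ^ pp := by
      intro h hh
      rw [hS, hσ, ← ENNReal.mul_rpow_of_nonneg _ _ hpp.le, ← ENNReal.ofReal_mul (by positivity)]
      gcongr
      exact (hcmp h hh).2
    simp_rw [hW]
    have st := hst ρ hρ hρ1 f hf z
    calc _ ≤ (S * σ * avB ρ (fun x => ENNReal.ofReal (γ x ^ pp)) z) * avB ρ f z ^ P := by
          gcongr
          unfold avB
          rw [← lintegral_const_mul _ (by fun_prop)]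
          apply lintegral_mono_ae
          filter_upwards [nuB_ae (n := n) ρ] with h hh
          rw [mul_comm]
          gcongr
          exact c1 h hh
      _ = S * σ * (avB ρ (fun x => ENNReal.ofReal (γ x ^ pp)) z * avB ρ f z ^ P) := by ring
      _ ≤ S * σ * (K * avB ρ (fun x => ENNReal.ofReal (γ x ^ pp) * f x ^ P) z) :=
          mul_le_mul_right st _
      _ = S * K * (σ * avB ρ (fun x => ENNReal.ofReal (γ x ^ pp) * f x ^ P) z) := by ring
      _ ≤ S * K * (S * avB ρ (fun x => ENNReal.ofReal (γ x ^ pp) * ENNReal.ofReal (s k x) ^ pp *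
            f x ^ P) z) := by
          refine mul_le_mul_right ?_ _
          unfold avB
          rw [← lintegral_const_mul _ (by fun_prop), ← lintegral_const_mul _ (by fun_prop)]
          apply lintegral_mono_ae
          filter_upwards [nuB_ae (n := n) ρ] with h hh
          calc _ ≤ (S * ENNReal.ofReal (s k (z + h)) ^ pp) * (ENNReal.ofReal (γ (z + h) ^ pp) * f (z + h) ^ P) := by
                gcongr
                exact c2 h hh
            _ = _ := by ring
      _ = _ := by ring
  · refine ⟨ENNReal.ofReal C ^ pp, ENNReal.rpow_ne_top_of_nonneg hpp.le ENNReal.ofReal_ne_top,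
      fun k i x => ?_⟩
    have h1 := (hsC k (k + i) (by omega) x).2
    rw [div_le_iff₀ (hs0 k x)] at h1
    have h2 : (2 : ℝ≥0∞) ^ (α₂ * pp * i) = ENNReal.ofReal ((2 : ℝ) ^ (α₂ * i)) ^ pp := by
      rw [← ENNReal.ofReal_rpow_of_pos (by norm_num), ← ENNReal.rpow_mul]
      norm_num
      congr 1; ring
    rw [h2, ← ENNReal.mul_rpow_of_nonneg _ _ hpp.le, ← ENNReal.mul_rpow_of_nonneg _ _ hpp.le,
      ← ENNReal.ofReal_mul hC.le, ← ENNReal.ofReal_mul (by positivity)]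
    refine ENNReal.rpow_le_rpow (ENNReal.ofReal_le_ofReal ?_) hpp.le
    push_cast at h1
    rw [add_sub_cancel_left] at h1
    have := mul_le_mul_of_nonneg_left h1 (hγ0 x).le
    linarith
  · refine ⟨ENNReal.ofReal C ^ pp, ENNReal.rpow_ne_top_of_nonneg hpp.le ENNReal.ofReal_ne_top,
      fun k i x => ?_⟩
    have h1 := (hsC k (k + i) (by omega) x).1
    rw [le_div_iff₀ (hs0 k x)] at h1
    have h2 : (2 : ℝ≥0∞) ^ (-(α₁ * pp * i)) = ENNReal.ofReal ((2 : ℝ) ^ (-(α₁ * i))) ^ pp := by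
      rw [← ENNReal.ofReal_rpow_of_pos (by norm_num), ← ENNReal.rpow_mul]
      norm_num
      congr 1; ring
    rw [h2, ← ENNReal.mul_rpow_of_nonneg _ _ hpp.le, ← ENNReal.mul_rpow_of_nonneg _ _ hpp.le,
      ← ENNReal.ofReal_mul hC.le, ← ENNReal.ofReal_mul (by positivity)]
    refine ENNReal.rpow_le_rpow (ENNReal.ofReal_le_ofReal ?_) hpp.le
    push_cast at h1
    rw [add_sub_cancel_left] at h1
    have h3 : (2 : ℝ) ^ (-(α₁ * i)) * 2 ^ (α₁ * i) = 1 := by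
      rw [← Real.rpow_add (by norm_num)]; simp
    have h4 : s k x ≤ C * 2 ^ (-(α₁ * i)) * s (k + i) x := by
      calc s k x = (C * 2 ^ (-(α₁ * i))) * (C⁻¹ * 2 ^ (α₁ * i) * s k x) := by
            rw [show (C * 2 ^ (-(α₁ * i))) * (C⁻¹ * 2 ^ (α₁ * i) * s k x) =
              (C * C⁻¹) * ((2 : ℝ) ^ (-(α₁ * i)) * 2 ^ (α₁ * i)) * s k x by ring, h3,
              mul_inv_cancel₀ hC.ne']
            ring
        _ ≤ _ := by gcongr
    have := mul_le_mul_of_nonneg_left h4 (hγ0 x).le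
    linarith

lemma GoodW.avg {n : ℕ} (hn : 0 < n) {W : ℕ → Rn n → ℝ≥0∞} {P A₁ A₂ : ℝ} (h : GoodW n W P A₁ A₂)
    (hP : 0 < P) {R : ℝ} (hR : 0 < R) :
    ∃ C : ℝ≥0∞, C ≠ ∞ ∧ ∀ k, AvgBd (W k) P (R * sc k) C := by
  obtain ⟨K, hK, hst⟩ := h.star
  have hn1 : (0 : ℝ) < n := by exact_mod_cast hn
  have hK' : ((2 : ℝ≥0∞) ^ n) ^ P * (2 : ℝ≥0∞) ^ n * K ≠ ∞ :=
    ENNReal.mul_ne_top (ENNReal.mul_ne_top (ENNReal.rpow_ne_top_of_nonneg hP.le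
      (ENNReal.pow_ne_top (by norm_num))) (ENNReal.pow_ne_top (by norm_num))) hK
  obtain ⟨C, hC, hh⟩ := AvgBd.all (n := n) hP hK' (R := R * (4 * n)) (by positivity)
  refine ⟨C, hC, fun k => ?_⟩
  have hsck := sc_pos k
  have h1 := hst k
  rw [show sc k / (2 * n) = 2 * (sc k / (4 * n)) by field_simp; norm_num] at h1
  have h2 := hh _ _ (h.meas k) (by positivity) (h1.avgBd (h.meas k) hP (by positivity))
  rwa [show R * (4 * n) * (sc k / (4 * n)) = R * sc k by field_simp] at h2
/-! ### Differences -/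

lemma diffl_comm {n : ℕ} (l : ℕ) (φ : Rn n → ℝ) (y u h v : Rn n) :
    ∑ i ∈ Finset.range (l + 1), ((l.choose i : ℝ) * (-1 : ℝ) ^ (l + i)) *
        diffl l (h + (i : ℝ) • v) φ (y + (i : ℝ) • u) =
      ∑ j ∈ Finset.range (l + 1), ((l.choose j : ℝ) * (-1 : ℝ) ^ (l + j)) *
        diffl l (u + (j : ℝ) • v) φ (y + (j : ℝ) • h) := by
  unfold diffl
  simp_rw [Finset.mul_sum]
  rw [Finset.sum_comm]
  refine Finset.sum_congr rfl fun j _ => Finset.sum_congr rfl fun i _ => ?_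
  have : y + (i : ℝ) • u + (j : ℝ) • (h + (i : ℝ) • v) =
      y + (j : ℝ) • h + (i : ℝ) • (u + (j : ℝ) • v) := by module
  rw [this]
  ring

lemma enorm_coef_le (l j : ℕ) : ‖((l.choose j : ℝ) * (-1 : ℝ) ^ (l + j))‖ₑ ≤ (2 : ℝ≥0∞) ^ l := by
  rw [enorm_mul, enorm_pow, enorm_neg, enorm_one, one_pow, mul_one]
  have h1 : ‖(l.choose j : ℝ)‖ₑ = (l.choose j : ℝ≥0∞) := by
    simp
  rw [h1]
  exact_mod_cast Nat.choose_le_two_pow l j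

lemma enorm_coef_zero (l : ℕ) (t : ℝ) :
    ‖((l.choose 0 : ℝ) * (-1 : ℝ) ^ (l + 0)) * t‖ₑ = ‖t‖ₑ := by
  rw [enorm_mul, enorm_mul, enorm_pow, enorm_neg, enorm_one]; simp

lemma enorm_sum_coef_le {l : ℕ} (t : ℕ → ℝ) :
    ‖∑ j ∈ Finset.range l, ((l.choose (j + 1) : ℝ) * (-1 : ℝ) ^ (l + (j + 1))) * t j‖ₑ ≤
      (2 : ℝ≥0∞) ^ l * ∑ j ∈ Finset.range l, ‖t j‖ₑ := by
  refine (enorm_sum_le _ _).trans ?_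
  rw [Finset.mul_sum]
  refine Finset.sum_le_sum fun j _ => ?_
  rw [enorm_mul]
  gcongr
  exact enorm_coef_le _ _

lemma diffl_bound {n : ℕ} (l : ℕ) (φ : Rn n → ℝ) (y u h v : Rn n) :
    ‖diffl l h φ y‖ₑ ≤ ‖diffl l u φ y‖ₑ + (2 : ℝ≥0∞) ^ l *
      (∑ j ∈ Finset.range l, ‖diffl l (u + ((j + 1 : ℕ) : ℝ) • v) φ (y + ((j + 1 : ℕ) : ℝ) • h)‖ₑ +
       ∑ i ∈ Finset.range l, ‖diffl l (h + ((i + 1 : ℕ) : ℝ) • v) φ (y + ((i + 1 : ℕ) : ℝ) • u)‖ₑ) := by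
  have key := diffl_comm l φ y u h v
  rw [Finset.sum_range_succ', Finset.sum_range_succ'] at key
  simp only [Nat.cast_zero, zero_smul, add_zero] at key
  set S1 := ∑ j ∈ Finset.range l, ((l.choose (j + 1) : ℝ) * (-1 : ℝ) ^ (l + (j + 1))) *
    diffl l (u + ((j + 1 : ℕ) : ℝ) • v) φ (y + ((j + 1 : ℕ) : ℝ) • h)
  set S2 := ∑ i ∈ Finset.range l, ((l.choose (i + 1) : ℝ) * (-1 : ℝ) ^ (l + (i + 1))) *
    diffl l (h + ((i + 1 : ℕ) : ℝ) • v) φ (y + ((i + 1 : ℕ) : ℝ) • u)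
  have e : ((l.choose 0 : ℝ) * (-1 : ℝ) ^ (l + 0)) * diffl l h φ y =
      ((l.choose 0 : ℝ) * (-1 : ℝ) ^ (l + 0)) * diffl l u φ y + (S1 - S2) := by
    simp only [add_zero]
    linarith
  have h1 : ‖diffl l h φ y‖ₑ ≤ ‖diffl l u φ y‖ₑ + (‖S1‖ₑ + ‖S2‖ₑ) := by
    rw [← enorm_coef_zero l (diffl l h φ y), e, ← enorm_coef_zero l (diffl l u φ y)]
    refine (enorm_add_le _ _).trans ?_
    gcongr
    exact enorm_sub_le
  refine h1.trans ?_
  rw [mul_add]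
  gcongr
  · exact enorm_sum_coef_le _
  · exact enorm_sum_coef_le _

lemma diffl_bound_rpow (l : ℕ) {e : ℝ} (he : 0 < e) {δ : ℝ≥0∞} (hδ : δ ≠ 0) (hδ' : δ ≠ ∞) :
    ∃ C : ℝ≥0∞, C ≠ ∞ ∧ ∀ (n : ℕ) (φ : Rn n → ℝ) (y u h v : Rn n),
      ‖diffl l h φ y‖ₑ ^ e ≤ (1 + δ) ^ e * ‖diffl l u φ y‖ₑ ^ e + C *
      (∑ j ∈ Finset.range l,
        ‖diffl l (u + ((j + 1 : ℕ) : ℝ) • v) φ (y + ((j + 1 : ℕ) : ℝ) • h)‖ₑ ^ e +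
       ∑ i ∈ Finset.range l,
        ‖diffl l (h + ((i + 1 : ℕ) : ℝ) • v) φ (y + ((i + 1 : ℕ) : ℝ) • u)‖ₑ ^ e) := by
  refine ⟨(1 + δ⁻¹) ^ e * ((2 : ℝ≥0∞) ^ l) ^ e * (2 : ℝ≥0∞) ^ e * (l : ℝ≥0∞) ^ e, ?_, ?_⟩
  · have h1 : (1 + δ⁻¹) ^ e ≠ ∞ := ENNReal.rpow_ne_top_of_nonneg he.le (by simp [hδ])
    have h2 : ((2 : ℝ≥0∞) ^ l) ^ e ≠ ∞ :=
      ENNReal.rpow_ne_top_of_nonneg he.le (ENNReal.pow_ne_top (by norm_num))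
    have h3 : (2 : ℝ≥0∞) ^ e ≠ ∞ := ENNReal.rpow_ne_top_of_nonneg he.le (by norm_num)
    have h4 : (l : ℝ≥0∞) ^ e ≠ ∞ := ENNReal.rpow_ne_top_of_nonneg he.le (by simp)
    exact ENNReal.mul_ne_top (ENNReal.mul_ne_top (ENNReal.mul_ne_top h1 h2) h3) h4
  · intro n φ y u h v
    refine (ENNReal.rpow_le_rpow (diffl_bound l φ y u h v) he.le).trans ?_
    refine (add_rpow_eps he hδ hδ' _ _).trans ?_
    rw [ENNReal.mul_rpow_of_nonneg _ _ he.le]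
    refine add_le_add le_rfl ?_
    rw [← mul_assoc, mul_assoc ((1 + δ⁻¹) ^ e * ((2 : ℝ≥0∞) ^ l) ^ e),
      mul_assoc ((1 + δ⁻¹) ^ e * ((2 : ℝ≥0∞) ^ l) ^ e)]
    refine mul_le_mul_right ?_ _
    refine (add_rpow_le' _ _ he).trans ?_
    rw [mul_assoc]
    refine mul_le_mul_right ?_ _
    rw [mul_add]
    refine add_le_add ?_ ?_
    · refine (sum_rpow_le _ _ he).trans ?_
      rw [Finset.card_range]
    · refine (sum_rpow_le _ _ he).trans ?_
      rw [Finset.card_range]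

lemma measurable_diffl {n : ℕ} (l : ℕ) {φ : Rn n → ℝ} (hφ : Measurable φ) :
    Measurable (fun z : Rn n × Rn n => diffl l z.1 φ z.2) := by
  unfold diffl; fun_prop

/-- `∫ |Δ^l(h)φ(x)|^e dν_ρ(h)`. -/
def dB {n : ℕ} (l : ℕ) (φ : Rn n → ℝ) (e ρ : ℝ) (x : Rn n) : ℝ≥0∞ :=
  ∫⁻ h, ‖diffl l h φ x‖ₑ ^ e ∂(nuB n ρ)

lemma measurable_dfun {n : ℕ} (l : ℕ) {φ : Rn n → ℝ} (hφ : Measurable φ) (e : ℝ)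
    {α : Type*} [MeasurableSpace α] {f g : α → Rn n} (hf : Measurable f) (hg : Measurable g) :
    Measurable (fun z => ‖diffl l (f z) φ (g z)‖ₑ ^ e) :=
  (((measurable_diffl l hφ).comp (hf.prodMk hg)).enorm).pow_const e

lemma measurable_dB {n : ℕ} (l : ℕ) {φ : Rn n → ℝ} (hφ : Measurable φ) (e ρ : ℝ) :
    Measurable (dB l φ e ρ) := by
  unfold dB
  exact Measurable.lintegral_prod_right' (f := fun z : Rn n × Rn n => ‖diffl l z.2 φ z.1‖ₑ ^ e)
    (measurable_dfun l hφ e measurable_snd measurable_fst)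

lemma dB_le {n : ℕ} (l : ℕ) {φ : Rn n → ℝ} (hφ : Measurable φ) (e : ℝ) {ρ σ K : ℝ} (hρ : 0 < ρ)
    (hd : ρ ≤ σ) (hK : σ ≤ K * ρ) (x : Rn n) :
    dB l φ e ρ x ≤ ENNReal.ofReal K ^ n * dB l φ e σ x :=
  nuB_mono hρ hd hK (measurable_dfun l hφ e measurable_id measurable_const)

lemma natCast_succ_one_le (j : ℕ) : (1 : ℝ) ≤ ((j + 1 : ℕ) : ℝ) := by
  push_cast; linarith [(Nat.cast_nonneg j : (0 : ℝ) ≤ j)]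

lemma natCast_succ_le {j l : ℕ} (h : j ∈ Finset.range l) : ((j + 1 : ℕ) : ℝ) ≤ l := by
  have := Finset.mem_range.mp h
  exact_mod_cast this

/-- Average of dilated shifts. -/
lemma lint_dil_le {n : ℕ} {l j : ℕ} (hj : j ∈ Finset.range l) {σ : ℝ} (hσ : 0 < σ)
    {f : Rn n → ℝ≥0∞} (hf : Measurable f) (x : Rn n) :
    ∫⁻ h, f (x + ((j + 1 : ℕ) : ℝ) • h) ∂(nuB n σ) ≤
      ENNReal.ofReal l ^ n * avB (l * σ) f x := by
  have := nuB_aff (n := n) (d := 0) (F := fun h => f (x + h)) (K := l) hσ (natCast_succ_one_le j)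
    (σ := l * σ) (by simpa using mul_le_mul_of_nonneg_right (natCast_succ_le hj) hσ.le) le_rfl
    (by fun_prop)
  simpa [avB] using this

/-- Linearity of the integral in the shape used below. -/
lemma lint_comb {α : Type*} [MeasurableSpace α] (μ : Measure α) (A C : ℝ≥0∞) (l : ℕ)
    {f0 : α → ℝ≥0∞} {f1 f2 : ℕ → α → ℝ≥0∞} (h0 : Measurable f0) (h1 : ∀ j, Measurable (f1 j))
    (h2 : ∀ j, Measurable (f2 j)) :
    ∫⁻ x, (A * f0 x + C * (∑ j ∈ Finset.range l, f1 j x + ∑ j ∈ Finset.range l, f2 j x)) ∂μ =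
      A * ∫⁻ x, f0 x ∂μ + C * (∑ j ∈ Finset.range l, ∫⁻ x, f1 j x ∂μ +
        ∑ j ∈ Finset.range l, ∫⁻ x, f2 j x ∂μ) := by
  rw [lintegral_add_left (by fun_prop), lintegral_const_mul _ h0,
    lintegral_const_mul _ (by fun_prop), lintegral_add_left (by fun_prop),
    lintegral_finsetSum _ (fun j _ => h1 j), lintegral_finsetSum _ (fun j _ => h2 j)]

/-- First pointwise estimate: recursion for the unaveraged means. -/
lemma pw_one {n : ℕ} (l : ℕ) (hl : 0 < l) {e : ℝ} (he : 0 < e) {δ : ℝ≥0∞} (hδ : δ ≠ 0)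
    (hδ' : δ ≠ ∞) :
    ∃ C : ℝ≥0∞, C ≠ ∞ ∧ ∀ φ : Rn n → ℝ, Measurable φ → ∀ τ : ℝ, 0 < τ → ∀ x,
      dB l φ e (2 * τ) x ≤ (1 + δ) ^ e * dB l φ e τ x + C * avB (l * (2 * τ)) (dB l φ e (4 * τ)) x := by
  obtain ⟨C, hC, hb⟩ := diffl_bound_rpow l he hδ hδ'
  refine ⟨C * (l * (ENNReal.ofReal l ^ n * (4 : ℝ≥0∞) ^ n) +
    l * ((ENNReal.ofReal l ^ n * (2 : ℝ≥0∞) ^ n) * (2 : ℝ≥0∞) ^ n)), ?_, ?_⟩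
  · have h0 : (l : ℝ≥0∞) ≠ ∞ := by simp
    have h1 : ENNReal.ofReal l ^ n ≠ ∞ := ENNReal.pow_ne_top ENNReal.ofReal_ne_top
    have h2 : (4 : ℝ≥0∞) ^ n ≠ ∞ := ENNReal.pow_ne_top (by norm_num)
    have h3 : (2 : ℝ≥0∞) ^ n ≠ ∞ := ENNReal.pow_ne_top (by norm_num)
    exact ENNReal.mul_ne_top hC (ENNReal.add_ne_top.mpr
      ⟨ENNReal.mul_ne_top h0 (ENNReal.mul_ne_top h1 h2),
       ENNReal.mul_ne_top h0 (ENNReal.mul_ne_top (ENNReal.mul_ne_top h1 h3) h3)⟩)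
  intro φ hφ τ hτ x
  have hl1 : (1 : ℝ) ≤ l := by exact_mod_cast hl
  have := nuB_isProb n hτ
  have : IsProbabilityMeasure (nuB n (2 * τ)) := nuB_isProb n (by positivity)
  have hmd := measurable_dB l hφ e
  have hD := fun {f g : Rn n × Rn n → Rn n} (hf : Measurable f) (hg : Measurable g) =>
    measurable_dfun l hφ e hf hg
  set G := avB (l * (2 * τ)) (dB l φ e (4 * τ)) x with hG
  -- pointwise inequality with `v = 0`
  have h0 : ∀ h u : Rn n, ‖diffl l h φ x‖ₑ ^ e ≤ (1 + δ) ^ e * ‖diffl l u φ x‖ₑ ^ e + C *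
      (∑ j ∈ Finset.range l, ‖diffl l u φ (x + ((j + 1 : ℕ) : ℝ) • h)‖ₑ ^ e +
       ∑ i ∈ Finset.range l, ‖diffl l h φ (x + ((i + 1 : ℕ) : ℝ) • u)‖ₑ ^ e) := by
    intro h u
    have := hb n φ x u h 0
    simpa using this
  -- integrate over `u`
  have h1 : ∀ h : Rn n, ‖diffl l h φ x‖ₑ ^ e ≤ (1 + δ) ^ e * dB l φ e τ x + C *
      (∑ j ∈ Finset.range l, dB l φ e τ (x + ((j + 1 : ℕ) : ℝ) • h) +
       ∑ i ∈ Finset.range l, ∫⁻ u, ‖diffl l h φ (x + ((i + 1 : ℕ) : ℝ) • u)‖ₑ ^ e ∂(nuB n τ)) := by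
    intro h
    have e1 : ∀ j : ℕ, Measurable (fun u => ‖diffl l u φ (x + ((j + 1 : ℕ) : ℝ) • h)‖ₑ ^ e) :=
      fun j => measurable_dfun l hφ e measurable_id measurable_const
    have e2 : ∀ j : ℕ, Measurable (fun u => ‖diffl l h φ (x + ((j + 1 : ℕ) : ℝ) • u)‖ₑ ^ e) :=
      fun j => measurable_dfun l hφ e measurable_const (by fun_prop)
    have e3 : Measurable (fun u => ‖diffl l u φ x‖ₑ ^ e) :=
      measurable_dfun l hφ e measurable_id measurable_const
    calc ‖diffl l h φ x‖ₑ ^ e = ∫⁻ _u, ‖diffl l h φ x‖ₑ ^ e ∂(nuB n τ) := by simp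
      _ ≤ _ := lintegral_mono (h0 h)
      _ = _ := lint_comb (nuB n τ) _ _ l e3 e1 e2
  -- integrate over `h`
  have e4 : ∀ i : ℕ, Measurable (fun h => ∫⁻ u, ‖diffl l h φ (x + ((i + 1 : ℕ) : ℝ) • u)‖ₑ ^ e ∂(nuB n τ)) :=
    fun i => Measurable.lintegral_prod_right' (f := fun z : Rn n × Rn n =>
      ‖diffl l z.1 φ (x + ((i + 1 : ℕ) : ℝ) • z.2)‖ₑ ^ e) (hD measurable_fst (by fun_prop))
  have e5 : ∀ j : ℕ, Measurable (fun h : Rn n => dB l φ e τ (x + ((j + 1 : ℕ) : ℝ) • h)) :=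
    fun j => (hmd τ).comp (by fun_prop)
  have b1 : ∀ j ∈ Finset.range l, ∫⁻ h, dB l φ e τ (x + ((j + 1 : ℕ) : ℝ) • h) ∂(nuB n (2 * τ)) ≤
      (ENNReal.ofReal l ^ n * (4 : ℝ≥0∞) ^ n) * G := by
    intro j hj
    refine (lint_dil_le hj (by positivity) (hmd τ) x).trans ?_
    rw [mul_assoc]
    refine mul_le_mul_right ?_ _
    rw [hG, ← avB_const_mul _ _ (hmd _)]
    refine avB_mono _ (fun y => ?_) x
    have := dB_le l hφ e (K := 4) (σ := 4 * τ) hτ (by linarith) le_rfl y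
    simpa using this
  have b2 : ∀ i ∈ Finset.range l, ∫⁻ h, ∫⁻ u, ‖diffl l h φ (x + ((i + 1 : ℕ) : ℝ) • u)‖ₑ ^ e
      ∂(nuB n τ) ∂(nuB n (2 * τ)) ≤
      ((ENNReal.ofReal l ^ n * (2 : ℝ≥0∞) ^ n) * (2 : ℝ≥0∞) ^ n) * G := by
    intro i hi
    rw [lintegral_lintegral_swap (hD (f := fun z => z.1)
      (g := fun z => x + ((i + 1 : ℕ) : ℝ) • z.2) measurable_fst (by fun_prop)).aemeasurable]
    change ∫⁻ u, dB l φ e (2 * τ) (x + ((i + 1 : ℕ) : ℝ) • u) ∂(nuB n τ) ≤ _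
    refine (lint_dil_le hi hτ (hmd (2 * τ)) x).trans ?_
    rw [mul_assoc, mul_assoc]
    refine mul_le_mul_right ?_ _
    refine (avB_le (σ := l * (2 * τ)) (K := 2) (by positivity) (by nlinarith) (by linarith)
      (hmd _) x).trans ?_
    rw [show ENNReal.ofReal 2 = 2 by simp]
    refine mul_le_mul_right ?_ _
    rw [hG, ← avB_const_mul _ _ (hmd _)]
    refine avB_mono _ (fun y => ?_) x
    have := dB_le l hφ e (K := 2) (σ := 4 * τ) (ρ := 2 * τ) (by positivity) (by linarith)
      (by linarith) y
    simpa using this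
  calc dB l φ e (2 * τ) x ≤ _ := lintegral_mono h1
    _ = (1 + δ) ^ e * dB l φ e τ x + C * (∑ j ∈ Finset.range l,
          ∫⁻ h, dB l φ e τ (x + ((j + 1 : ℕ) : ℝ) • h) ∂(nuB n (2 * τ)) +
        ∑ i ∈ Finset.range l, ∫⁻ h, ∫⁻ u, ‖diffl l h φ (x + ((i + 1 : ℕ) : ℝ) • u)‖ₑ ^ e
      ∂(nuB n τ) ∂(nuB n (2 * τ))) := by
        have := lint_comb (nuB n (2 * τ)) ((1 + δ) ^ e) C l
          (f0 := fun _ => dB l φ e τ x) measurable_const e5 e4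
        rw [lintegral_const, measure_univ, mul_one] at this
        exact this
    _ ≤ (1 + δ) ^ e * dB l φ e τ x + C * (∑ j ∈ Finset.range l,
          (ENNReal.ofReal l ^ n * (4 : ℝ≥0∞) ^ n) * G +
        ∑ i ∈ Finset.range l, ((ENNReal.ofReal l ^ n * (2 : ℝ≥0∞) ^ n) * (2 : ℝ≥0∞) ^ n) * G) := by
        refine add_le_add le_rfl (mul_le_mul_right (add_le_add ?_ ?_) _)
        · exact Finset.sum_le_sum b1
        · exact Finset.sum_le_sum b2
    _ = _ := by
        simp only [Finset.sum_const, Finset.card_range, nsmul_eq_mul]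
        ring
/-! ### Second pointwise estimate -/

lemma avB_jensen {n : ℕ} {ρ : ℝ} (hρ : 0 < ρ) {θ : ℝ} (hθ : 1 ≤ θ) {f : Rn n → ℝ≥0∞}
    (hf : Measurable f) (x : Rn n) : (avB ρ f x) ^ θ ≤ avB ρ (fun y => f y ^ θ) x := by
  have := nuB_isProb n hρ
  exact jensen_prob _ hθ (by fun_prop)

lemma pw_two_aux {n : ℕ} (l : ℕ) {a : ℝ} (ha : 0 < a) :
    ∃ C : ℝ≥0∞, C ≠ ∞ ∧ ∀ φ : Rn n → ℝ, Measurable φ → ∀ σ : ℝ, 0 < σ → ∀ x h : Rn n, ‖h‖ < σ →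
      ‖diffl l h φ x‖ₑ ^ a ≤ C * (dB l φ a ((l + 1) * σ) x +
        (∑ j ∈ Finset.range l, dB l φ a ((l + 1) * σ) (x + ((j + 1 : ℕ) : ℝ) • h) +
          avB (l * σ) (dB l φ a ((l + 1) * σ)) x)) := by
  obtain ⟨C, hC, hb⟩ := diffl_bound_rpow l ha (δ := 1) one_ne_zero one_ne_top
  set K : ℝ≥0∞ := ENNReal.ofReal ((l : ℝ) + 1) ^ n with hK
  have hK' : K ≠ ∞ := ENNReal.pow_ne_top ENNReal.ofReal_ne_top
  refine ⟨(1 + 1) ^ a * K + C * K + C * (l * (K * ENNReal.ofReal l ^ n)), ?_, ?_⟩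
  · have h1 : ((1 : ℝ≥0∞) + 1) ^ a ≠ ∞ := ENNReal.rpow_ne_top_of_nonneg ha.le (by simp)
    have h2 : ENNReal.ofReal l ^ n ≠ ∞ := ENNReal.pow_ne_top ENNReal.ofReal_ne_top
    have h0 : (l : ℝ≥0∞) ≠ ∞ := by simp
    simp only [ne_eq, ENNReal.add_eq_top, not_or]
    exact ⟨⟨ENNReal.mul_ne_top h1 hK', ENNReal.mul_ne_top hC hK'⟩,
      ENNReal.mul_ne_top hC (ENNReal.mul_ne_top h0 (ENNReal.mul_ne_top hK' h2))⟩
  intro φ hφ σ hσ x h hh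
  have hp := nuB_isProb n hσ
  have hmd := measurable_dB l hφ a
  set g := dB l φ a ((l + 1) * σ) with hg
  have hgm : Measurable g := hmd _
  have hl0 : (0 : ℝ) ≤ l := Nat.cast_nonneg l
  set μ := (nuB n σ).prod (nuB n σ) with hμ
  have e0 : Measurable (fun z : Rn n × Rn n => ‖diffl l z.1 φ x‖ₑ ^ a) :=
    measurable_dfun l hφ a measurable_fst measurable_const
  have e1 : ∀ j : ℕ, Measurable (fun z : Rn n × Rn n =>
      ‖diffl l (z.1 + ((j + 1 : ℕ) : ℝ) • z.2) φ (x + ((j + 1 : ℕ) : ℝ) • h)‖ₑ ^ a) :=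
    fun j => measurable_dfun l hφ a (by fun_prop) measurable_const
  have e2 : ∀ i : ℕ, Measurable (fun z : Rn n × Rn n =>
      ‖diffl l (h + ((i + 1 : ℕ) : ℝ) • z.2) φ (x + ((i + 1 : ℕ) : ℝ) • z.1)‖ₑ ^ a) :=
    fun i => measurable_dfun l hφ a (by fun_prop) (by fun_prop)
  have key : ‖diffl l h φ x‖ₑ ^ a ≤ (1 + 1) ^ a * ∫⁻ z, ‖diffl l z.1 φ x‖ₑ ^ a ∂μ + C *
      (∑ j ∈ Finset.range l, ∫⁻ z, ‖diffl l (z.1 + ((j + 1 : ℕ) : ℝ) • z.2) φ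
          (x + ((j + 1 : ℕ) : ℝ) • h)‖ₑ ^ a ∂μ +
        ∑ i ∈ Finset.range l, ∫⁻ z, ‖diffl l (h + ((i + 1 : ℕ) : ℝ) • z.2) φ
          (x + ((i + 1 : ℕ) : ℝ) • z.1)‖ₑ ^ a ∂μ) := by
    calc ‖diffl l h φ x‖ₑ ^ a = ∫⁻ _z, ‖diffl l h φ x‖ₑ ^ a ∂μ := by simp
      _ ≤ _ := lintegral_mono (fun z : Rn n × Rn n => hb n φ x z.1 h z.2)
      _ = _ := lint_comb μ _ _ l e0 e1 e2
  have b0 : ∫⁻ z, ‖diffl l z.1 φ x‖ₑ ^ a ∂μ ≤ K * g x := by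
    rw [hμ, lintegral_prod_symm _ e0.aemeasurable]
    simp only [lintegral_const, measure_univ, mul_one]
    exact dB_le l hφ a hσ (by nlinarith) le_rfl x
  have b1 : ∀ j ∈ Finset.range l, ∫⁻ z, ‖diffl l (z.1 + ((j + 1 : ℕ) : ℝ) • z.2) φ
          (x + ((j + 1 : ℕ) : ℝ) • h)‖ₑ ^ a ∂μ ≤ K * g (x + ((j + 1 : ℕ) : ℝ) • h) := by
    intro j hj
    rw [hμ, lintegral_prod_symm _ (e1 j).aemeasurable]
    calc _ ≤ ∫⁻ _v, K * g (x + ((j + 1 : ℕ) : ℝ) • h) ∂(nuB n σ) := by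
          refine lintegral_mono_ae ?_
          filter_upwards [nuB_ae (n := n) σ] with v hv
          have h3 : ‖((j + 1 : ℕ) : ℝ) • v‖ + 1 * σ ≤ (l + 1) * σ := by
            rw [norm_smul, Real.norm_natCast]
            have := natCast_succ_le hj
            have h5 : (0 : ℝ) ≤ ((j + 1 : ℕ) : ℝ) := Nat.cast_nonneg _
            nlinarith [norm_nonneg v]
          have := nuB_aff (n := n) (d := ((j + 1 : ℕ) : ℝ) • v) (K := (l : ℝ) + 1)
            (F := fun u => ‖diffl l u φ (x + ((j + 1 : ℕ) : ℝ) • h)‖ₑ ^ a) hσ le_rfl h3 le_rfl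
            (measurable_dfun l hφ a measurable_id measurable_const)
          simp only [one_smul] at this
          simp only [add_comm _ (((j + 1 : ℕ) : ℝ) • v)]
          exact this
      _ = _ := by simp
  have b2 : ∀ i ∈ Finset.range l, ∫⁻ z, ‖diffl l (h + ((i + 1 : ℕ) : ℝ) • z.2) φ
          (x + ((i + 1 : ℕ) : ℝ) • z.1)‖ₑ ^ a ∂μ ≤ K * ENNReal.ofReal l ^ n * avB (l * σ) g x := by
    intro i hi
    rw [hμ, lintegral_prod _ (e2 i).aemeasurable]
    calc _ ≤ ∫⁻ u, K * g (x + ((i + 1 : ℕ) : ℝ) • u) ∂(nuB n σ) := by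
          refine lintegral_mono fun u => ?_
          have h3 : ‖h‖ + ((i + 1 : ℕ) : ℝ) * σ ≤ (l + 1) * σ := by
            have := natCast_succ_le hi
            nlinarith
          exact nuB_aff (n := n) (d := h) (K := (l : ℝ) + 1)
            (F := fun v => ‖diffl l v φ (x + ((i + 1 : ℕ) : ℝ) • u)‖ₑ ^ a) hσ
            (natCast_succ_one_le i) h3 le_rfl
            (measurable_dfun l hφ a measurable_id measurable_const)
      _ = K * ∫⁻ u, g (x + ((i + 1 : ℕ) : ℝ) • u) ∂(nuB n σ) :=
          lintegral_const_mul _ (hgm.comp (by fun_prop))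
      _ ≤ _ := by
          rw [mul_assoc]
          exact mul_le_mul_right (lint_dil_le hi hσ hgm x) _
  refine key.trans ?_
  calc _ ≤ (1 + 1) ^ a * (K * g x) + C * (∑ j ∈ Finset.range l, K * g (x + ((j + 1 : ℕ) : ℝ) • h) +
        ∑ _i ∈ Finset.range l, K * ENNReal.ofReal l ^ n * avB (l * σ) g x) :=
        add_le_add (mul_le_mul_right b0 _) (mul_le_mul_right (add_le_add (Finset.sum_le_sum b1)
          (Finset.sum_le_sum b2)) _)
    _ = (1 + 1) ^ a * K * g x + (C * K * ∑ j ∈ Finset.range l, g (x + ((j + 1 : ℕ) : ℝ) • h) +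
        C * (l * (K * ENNReal.ofReal l ^ n)) * avB (l * σ) g x) := by
        rw [← Finset.mul_sum]
        simp only [Finset.sum_const, Finset.card_range, nsmul_eq_mul]
        ring
    _ ≤ _ := by
        rw [mul_add, mul_add]
        refine add_le_add ?_ (add_le_add ?_ ?_)
        · gcongr; rw [add_assoc]; exact le_self_add
        · gcongr; rw [add_right_comm]; exact le_add_self
        · gcongr; exact le_add_self

lemma pw_two {n : ℕ} (l : ℕ) (hl : 0 < l) {a b : ℝ} (ha : 0 < a) (hab : a ≤ b) :
    ∃ C : ℝ≥0∞, C ≠ ∞ ∧ ∀ φ : Rn n → ℝ, Measurable φ → ∀ σ : ℝ, 0 < σ → ∀ x : Rn n,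
      dB l φ b σ x ≤ C * (dB l φ a ((l + 1) * σ) x ^ (b / a) +
        avB (l * σ) (fun y => dB l φ a ((l + 1) * σ) y ^ (b / a)) x) := by
  obtain ⟨C, hC, hb⟩ := pw_two_aux (n := n) l ha
  have hθ : 1 ≤ b / a := (one_le_div ha).mpr hab
  set θ := b / a with hθd
  have hθ0 : 0 < θ := by linarith
  set T : ℝ≥0∞ := (2 : ℝ≥0∞) ^ θ
  have hT : T ≠ ∞ := two_rpow_ne_top _
  have hlθ : (l : ℝ≥0∞) ^ θ ≠ ∞ := ENNReal.rpow_ne_top_of_nonneg hθ0.le (by simp)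
  have hln : ENNReal.ofReal l ^ n ≠ ∞ := ENNReal.pow_ne_top ENNReal.ofReal_ne_top
  have hCθ : C ^ θ ≠ ∞ := ENNReal.rpow_ne_top_of_nonneg hθ0.le hC
  refine ⟨C ^ θ * T * 1 + C ^ θ * T * T * ((l : ℝ≥0∞) ^ θ * (l * ENNReal.ofReal l ^ n) + 1), ?_, ?_⟩
  · have h0 : (l : ℝ≥0∞) ≠ ∞ := by simp
    finiteness
  intro φ hφ σ hσ x
  have hp := nuB_isProb n hσ
  set g := dB l φ a ((l + 1) * σ) with hg
  have hgm : Measurable g := measurable_dB l hφ a _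
  have hfm : Measurable (fun y => g y ^ θ) := hgm.pow_const _
  have hl1 : (1 : ℝ) ≤ l := by exact_mod_cast hl
  set Y := avB (l * σ) (fun y => g y ^ θ) x with hY
  have hpt : ∀ h : Rn n, ‖h‖ < σ → ‖diffl l h φ x‖ₑ ^ b ≤
      C ^ θ * T * g x ^ θ + C ^ θ * T * T * ((l : ℝ≥0∞) ^ θ *
        ∑ j ∈ Finset.range l, g (x + ((j + 1 : ℕ) : ℝ) • h) ^ θ + Y) := by
    intro h hh
    have h1 : ‖diffl l h φ x‖ₑ ^ b = (‖diffl l h φ x‖ₑ ^ a) ^ θ := by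
      rw [← ENNReal.rpow_mul, hθd, mul_div_cancel₀ _ ha.ne']
    rw [h1]
    refine (ENNReal.rpow_le_rpow (hb φ hφ σ hσ x h hh) hθ0.le).trans ?_
    rw [ENNReal.mul_rpow_of_nonneg _ _ hθ0.le]
    have h2 := add_rpow_le' (g x) (∑ j ∈ Finset.range l, g (x + ((j + 1 : ℕ) : ℝ) • h) +
      avB (l * σ) g x) hθ0
    have h3 := add_rpow_le' (∑ j ∈ Finset.range l, g (x + ((j + 1 : ℕ) : ℝ) • h))
      (avB (l * σ) g x) hθ0
    have h4 := sum_rpow_le (Finset.range l) (fun j => g (x + ((j + 1 : ℕ) : ℝ) • h)) hθ0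
    rw [Finset.card_range] at h4
    have h5 := avB_jensen (n := n) (ρ := l * σ) (by positivity) hθ hgm x
    calc _ ≤ C ^ θ * (T * (g x ^ θ + T * ((l : ℝ≥0∞) ^ θ *
        ∑ j ∈ Finset.range l, g (x + ((j + 1 : ℕ) : ℝ) • h) ^ θ + Y))) := by
          refine mul_le_mul_right (h2.trans (mul_le_mul_right (add_le_add le_rfl (h3.trans
            (mul_le_mul_right (add_le_add h4 h5) _))) _)) _
      _ = _ := by ring
  have hmj : ∀ j : ℕ, Measurable (fun h : Rn n => g (x + ((j + 1 : ℕ) : ℝ) • h) ^ θ) :=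
    fun j => hfm.comp (g := fun y => g y ^ θ) (by fun_prop)
  have hsum : ∫⁻ h, ∑ j ∈ Finset.range l, g (x + ((j + 1 : ℕ) : ℝ) • h) ^ θ ∂(nuB n σ) ≤
      (l * ENNReal.ofReal l ^ n) * Y := by
    rw [lintegral_finsetSum _ (fun j _ => hmj j)]
    refine (Finset.sum_le_sum fun j hj => lint_dil_le hj hσ hfm x).trans ?_
    rw [Finset.sum_const, Finset.card_range, nsmul_eq_mul, mul_assoc]
  have hms : Measurable (fun h : Rn n => ∑ j ∈ Finset.range l, g (x + ((j + 1 : ℕ) : ℝ) • h) ^ θ) :=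
    Finset.measurable_sum _ (fun j _ => hmj j)
  calc dB l φ b σ x ≤ ∫⁻ h, (C ^ θ * T * g x ^ θ + C ^ θ * T * T * ((l : ℝ≥0∞) ^ θ *
        ∑ j ∈ Finset.range l, g (x + ((j + 1 : ℕ) : ℝ) • h) ^ θ + Y)) ∂(nuB n σ) := by
        refine lintegral_mono_ae ?_
        filter_upwards [nuB_ae (n := n) σ] with h hh using hpt h hh
    _ = C ^ θ * T * g x ^ θ + C ^ θ * T * T * ((l : ℝ≥0∞) ^ θ *
        ∫⁻ h, ∑ j ∈ Finset.range l, g (x + ((j + 1 : ℕ) : ℝ) • h) ^ θ ∂(nuB n σ) + Y) := by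
        rw [lintegral_add_left measurable_const, lintegral_const, measure_univ, mul_one,
          lintegral_const_mul _ ((hms.const_mul _).add_const _),
          lintegral_add_right _ measurable_const, lintegral_const, measure_univ, mul_one,
          lintegral_const_mul _ hms]
    _ ≤ C ^ θ * T * g x ^ θ + C ^ θ * T * T * ((l : ℝ≥0∞) ^ θ * ((l * ENNReal.ofReal l ^ n) * Y) + Y) := by
        gcongr
    _ = C ^ θ * T * 1 * g x ^ θ + C ^ θ * T * T * ((l : ℝ≥0∞) ^ θ * (l * ENNReal.ofReal l ^ n) + 1) * Y := by
        ring
    _ ≤ _ := by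
        refine le_trans ?_ (mul_add _ _ _).ge
        refine add_le_add ?_ ?_
        · exact mul_le_mul' le_self_add le_rfl
        · exact mul_le_mul' le_add_self le_rfl
/-! ### Direction `tilde ≤ bar` in integral form -/

lemma int_combo {n : ℕ} {P : ℝ} (hP : 0 < P) {W : Rn n → ℝ≥0∞} (hW : Measurable W) {ρ : ℝ}
    {K c : ℝ≥0∞} (hA : AvgBd W P ρ K) {f g : Rn n → ℝ≥0∞} (hf : Measurable f)
    (h : ∀ x, g x ≤ c * (f x + avB ρ f x)) :
    ∫⁻ x, W x * g x ^ P ≤ c ^ P * (2 : ℝ≥0∞) ^ P * (1 + K) * ∫⁻ x, W x * f x ^ P := by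
  have ha := measurable_avB ρ hf
  calc ∫⁻ x, W x * g x ^ P ≤ ∫⁻ x, c ^ P * (2 : ℝ≥0∞) ^ P * (W x * f x ^ P + W x * avB ρ f x ^ P) := by
        refine lintegral_mono fun x => ?_
        calc W x * g x ^ P ≤ W x * (c ^ P * ((2 : ℝ≥0∞) ^ P * (f x ^ P + avB ρ f x ^ P))) := by
              refine mul_le_mul_right ?_ _
              refine (ENNReal.rpow_le_rpow (h x) hP.le).trans ?_
              rw [ENNReal.mul_rpow_of_nonneg _ _ hP.le]
              exact mul_le_mul_right (add_rpow_le' _ _ hP) _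
          _ = _ := by ring
    _ = c ^ P * (2 : ℝ≥0∞) ^ P * ((∫⁻ x, W x * f x ^ P) + ∫⁻ x, W x * avB ρ f x ^ P) := by
        rw [lintegral_const_mul _ (by fun_prop), lintegral_add_left (by fun_prop)]
    _ ≤ c ^ P * (2 : ℝ≥0∞) ^ P * ((∫⁻ x, W x * f x ^ P) + K * ∫⁻ x, W x * f x ^ P) := by
        gcongr
        exact hA f hf
    _ = _ := by ring

lemma avg_combo {n : ℕ} (hn : 0 < n) {W : ℕ → Rn n → ℝ≥0∞} {P A₁ A₂ : ℝ}
    (hW : GoodW n W P A₁ A₂) (hP : 0 < P) {R : ℝ} (hR : 0 < R) {c : ℝ≥0∞} (hc : c ≠ ∞) :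
    ∃ C : ℝ≥0∞, C ≠ ∞ ∧ ∀ (k : ℕ) (f g : Rn n → ℝ≥0∞), Measurable f → Measurable g →
      (∀ x, g x ≤ c * (f x + avB (R * sc k) f x)) →
      ∫⁻ x, W k x * avB (sc k) g x ^ P ≤ C * ∫⁻ x, W k x * f x ^ P := by
  obtain ⟨C1, hC1, h1⟩ := hW.avg hn hP (R := 1) one_pos
  obtain ⟨C2, hC2, h2⟩ := hW.avg hn hP hR
  refine ⟨C1 * (c ^ P * (2 : ℝ≥0∞) ^ P * (1 + C2)), ?_, ?_⟩
  · have := ENNReal.rpow_ne_top_of_nonneg hP.le hc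
    have := two_rpow_ne_top P
    finiteness
  intro k f g hf hg h
  have h3 := h1 k g hg
  rw [one_mul] at h3
  refine h3.trans ?_
  rw [mul_assoc C1]
  exact mul_le_mul_right (int_combo hP (hW.meas k) (h2 k) hf h) _

lemma diffl_le {n : ℕ} (l : ℕ) (φ : Rn n → ℝ) (x h : Rn n) :
    ‖diffl l h φ x‖ₑ ≤ ‖φ x‖ₑ + (2 : ℝ≥0∞) ^ l *
      ∑ j ∈ Finset.range l, ‖φ (x + ((j + 1 : ℕ) : ℝ) • h)‖ₑ ∧
    ‖φ x‖ₑ ≤ ‖diffl l h φ x‖ₑ + (2 : ℝ≥0∞) ^ l *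
      ∑ j ∈ Finset.range l, ‖φ (x + ((j + 1 : ℕ) : ℝ) • h)‖ₑ := by
  have key : diffl l h φ x = ∑ j ∈ Finset.range l, ((l.choose (j + 1) : ℝ) * (-1 : ℝ) ^ (l + (j + 1))) *
      φ (x + ((j + 1 : ℕ) : ℝ) • h) + ((l.choose 0 : ℝ) * (-1 : ℝ) ^ (l + 0)) * φ x := by
    unfold diffl
    rw [Finset.sum_range_succ']
    simp
  have hs := enorm_sum_coef_le (l := l) (fun j => φ (x + ((j + 1 : ℕ) : ℝ) • h))
  set S := ∑ j ∈ Finset.range l, ((l.choose (j + 1) : ℝ) * (-1 : ℝ) ^ (l + (j + 1))) *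
      φ (x + ((j + 1 : ℕ) : ℝ) • h)
  constructor
  · rw [key, add_comm]
    refine (enorm_add_le _ _).trans ?_
    rw [enorm_coef_zero]
    gcongr
  · rw [← enorm_coef_zero l (φ x)]
    have : ((l.choose 0 : ℝ) * (-1 : ℝ) ^ (l + 0)) * φ x = diffl l h φ x - S := by
      rw [key]; ring
    rw [this]
    refine enorm_sub_le.trans ?_
    gcongr

lemma rp_aux {l : ℕ} {e : ℝ} (he : 0 < e) (A B : ℝ≥0∞) (t : ℕ → ℝ≥0∞)
    (h : A ≤ B + (2 : ℝ≥0∞) ^ l * ∑ j ∈ Finset.range l, t j) :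
    A ^ e ≤ (2 : ℝ≥0∞) ^ e * (B ^ e + ((2 : ℝ≥0∞) ^ l) ^ e * ((l : ℝ≥0∞) ^ e *
      ∑ j ∈ Finset.range l, t j ^ e)) := by
  refine (ENNReal.rpow_le_rpow h he.le).trans ((add_rpow_le' _ _ he).trans ?_)
  refine mul_le_mul_right (add_le_add le_rfl ?_) _
  rw [ENNReal.mul_rpow_of_nonneg _ _ he.le]
  refine mul_le_mul_right ?_ _
  have := sum_rpow_le (Finset.range l) t he
  rwa [Finset.card_range] at this

lemma dB_phi {n : ℕ} (l : ℕ) {e : ℝ} (he : 0 < e) :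
    ∃ C : ℝ≥0∞, C ≠ ∞ ∧ ∀ φ : Rn n → ℝ, Measurable φ → ∀ ρ : ℝ, 0 < ρ → ∀ x : Rn n,
      dB l φ e ρ x ≤ C * (‖φ x‖ₑ ^ e + avB (l * ρ) (fun y => ‖φ y‖ₑ ^ e) x) ∧
      ‖φ x‖ₑ ^ e ≤ C * (dB l φ e ρ x + avB (l * ρ) (fun y => ‖φ y‖ₑ ^ e) x) := by
  set T : ℝ≥0∞ := (2 : ℝ≥0∞) ^ e
  set U : ℝ≥0∞ := ((2 : ℝ≥0∞) ^ l) ^ e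
  set V : ℝ≥0∞ := (l : ℝ≥0∞) ^ e
  set X : ℝ≥0∞ := l * ENNReal.ofReal l ^ n
  have hT : T ≠ ∞ := two_rpow_ne_top _
  have hU : U ≠ ∞ := ENNReal.rpow_ne_top_of_nonneg he.le (ENNReal.pow_ne_top (by norm_num))
  have hV : V ≠ ∞ := ENNReal.rpow_ne_top_of_nonneg he.le (by simp)
  have hX : X ≠ ∞ := ENNReal.mul_ne_top (by simp) (ENNReal.pow_ne_top ENNReal.ofReal_ne_top)
  refine ⟨T * (1 + U * (V * X)), by finiteness, ?_⟩
  intro φ hφ ρ hρ x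
  have hp := nuB_isProb n hρ
  set f : Rn n → ℝ≥0∞ := fun y => ‖φ y‖ₑ ^ e with hf
  have hfm : Measurable f := by fun_prop
  have hmj : ∀ j : ℕ, Measurable (fun h : Rn n => f (x + ((j + 1 : ℕ) : ℝ) • h)) :=
    fun j => hfm.comp (by fun_prop)
  have hms : Measurable (fun h : Rn n => ∑ j ∈ Finset.range l, f (x + ((j + 1 : ℕ) : ℝ) • h)) :=
    Finset.measurable_sum _ (fun j _ => hmj j)
  have hsum : ∫⁻ h, ∑ j ∈ Finset.range l, f (x + ((j + 1 : ℕ) : ℝ) • h) ∂(nuB n ρ) ≤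
      X * avB (l * ρ) f x := by
    rw [lintegral_finsetSum _ (fun j _ => hmj j)]
    refine (Finset.sum_le_sum fun j hj => lint_dil_le hj hρ hfm x).trans ?_
    rw [Finset.sum_const, Finset.card_range, nsmul_eq_mul, mul_assoc]
  have hdm : Measurable (fun h => ‖diffl l h φ x‖ₑ ^ e) :=
    measurable_dfun l hφ e measurable_id measurable_const
  have fin : ∀ A Y : ℝ≥0∞, T * (A + U * (V * (X * Y))) ≤ T * (1 + U * (V * X)) * (A + Y) := by
    intro A Y
    rw [mul_assoc T]
    refine mul_le_mul_right ?_ _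
    calc A + U * (V * (X * Y)) ≤ A + U * (V * (X * Y)) + (Y + U * (V * X) * A) := le_self_add
      _ = _ := by ring
  have calcI : ∀ F : Rn n → ℝ≥0∞, Measurable F →
      ∫⁻ h, T * (F h + U * (V * ∑ j ∈ Finset.range l, f (x + ((j + 1 : ℕ) : ℝ) • h))) ∂(nuB n ρ) ≤
        T * (1 + U * (V * X)) * (∫⁻ h, F h ∂(nuB n ρ) + avB (l * ρ) f x) := by
    intro F hF
    refine le_trans ?_ (fin _ _)
    rw [lintegral_const_mul _ (by fun_prop), lintegral_add_left hF,
      lintegral_const_mul _ (hms.const_mul V), lintegral_const_mul _ hms]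
    gcongr
  constructor
  · have h1 := calcI (fun _ => f x) measurable_const
    rw [lintegral_const, measure_univ, mul_one] at h1
    refine le_trans (lintegral_mono fun h => ?_) h1
    exact rp_aux he _ _ _ (diffl_le l φ x h).1
  · refine le_trans ?_ (calcI (fun h => ‖diffl l h φ x‖ₑ ^ e) hdm)
    calc ‖φ x‖ₑ ^ e = ∫⁻ _h, ‖φ x‖ₑ ^ e ∂(nuB n ρ) := by simp
      _ ≤ _ := lintegral_mono fun h => rp_aux he _ _ _ (diffl_le l φ x h).2
/-- Integral attached to the `k`-th term of the `B̃` quasinorm. -/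
def TD {n : ℕ} (W : ℕ → Rn n → ℝ≥0∞) (l : ℕ) (b P : ℝ) (φ : Rn n → ℝ) (k : ℕ) : ℝ≥0∞ :=
  ∫⁻ x, W (k + 1) x * avB (sc (k + 1)) (dB l φ b (sc k)) x ^ P

/-- Integral attached to the `k`-th term of the `B̄` quasinorm. -/
def BD {n : ℕ} (W : ℕ → Rn n → ℝ≥0∞) (l : ℕ) (a P : ℝ) (φ : Rn n → ℝ) (k : ℕ) : ℝ≥0∞ :=
  ∫⁻ x, W (k + 1) x * dB l φ a (sc (k + 1)) x ^ P

/-- Integral attached to the zeroth term of both quasinorms. -/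
def ZD {n : ℕ} (W : ℕ → Rn n → ℝ≥0∞) (e P : ℝ) (φ : Rn n → ℝ) : ℝ≥0∞ :=
  ∫⁻ x, W 0 x * avB 1 (fun y => ‖φ y‖ₑ ^ e) x ^ P

lemma GoodW.up_int {n : ℕ} {W : ℕ → Rn n → ℝ≥0∞} {P A₁ A₂ : ℝ}
    (hW : GoodW n W P A₁ A₂) : ∃ C : ℝ≥0∞, C ≠ ∞ ∧ ∀ (k i : ℕ) (F : Rn n → ℝ≥0∞), Measurable F →
      ∫⁻ x, W (k + i) x * F x ≤ C * (2 : ℝ≥0∞) ^ (A₂ * i) * ∫⁻ x, W k x * F x := by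
  obtain ⟨C, hC, h⟩ := hW.up
  refine ⟨C, hC, fun k i F hF => ?_⟩
  have := hW.meas k
  rw [← lintegral_const_mul _ (by fun_prop)]
  refine lintegral_mono fun x => ?_
  rw [← mul_assoc]
  exact mul_le_mul_left (h k i x) _

lemma GoodW.down_int {n : ℕ} {W : ℕ → Rn n → ℝ≥0∞} {P A₁ A₂ : ℝ}
    (hW : GoodW n W P A₁ A₂) : ∃ C : ℝ≥0∞, C ≠ ∞ ∧ ∀ (k i : ℕ) (F : Rn n → ℝ≥0∞), Measurable F →
      ∫⁻ x, W k x * F x ≤ C * (2 : ℝ≥0∞) ^ (-(A₁ * i)) * ∫⁻ x, W (k + i) x * F x := by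
  obtain ⟨C, hC, h⟩ := hW.down
  refine ⟨C, hC, fun k i F hF => ?_⟩
  have := hW.meas (k + i)
  rw [← lintegral_const_mul _ (by fun_prop)]
  refine lintegral_mono fun x => ?_
  rw [← mul_assoc]
  exact mul_le_mul_left (h k i x) _

lemma D2a {n : ℕ} (hn : 0 < n) {l : ℕ} (hl : 0 < l) {W : ℕ → Rn n → ℝ≥0∞} {pp a b A₁ A₂ : ℝ}
    (hpp : 0 < pp) (ha : 0 < a) (hab : a ≤ b) (hW : GoodW n W (pp / b) A₁ A₂) :
    ∃ C : ℝ≥0∞, C ≠ ∞ ∧ ∀ φ : Rn n → ℝ, Measurable φ → ∀ i,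
      TD W l b (pp / b) φ (i + l + 1) ≤ C * BD W l a (pp / a) φ i := by
  have hb : 0 < b := by linarith
  have hP : 0 < pp / b := by positivity
  have hP' : 0 < pp / a := by positivity
  have hl1 : (1 : ℝ) ≤ l := by exact_mod_cast hl
  obtain ⟨c, hc, h1⟩ := pw_two (n := n) l hl ha hab
  obtain ⟨C1, hC1, h2⟩ := avg_combo hn hW hP (R := l * 2) (by positivity) hc
  obtain ⟨C2, hC2, h3⟩ := hW.up_int
  set M : ℝ≥0∞ := (ENNReal.ofReal ((2 : ℝ) ^ l) ^ n) ^ (pp / a)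
  have hM : M ≠ ∞ := ENNReal.rpow_ne_top_of_nonneg hP'.le (ENNReal.pow_ne_top ENNReal.ofReal_ne_top)
  refine ⟨C1 * (C2 * (2 : ℝ≥0∞) ^ (A₂ * ((l + 1 : ℕ) : ℝ)) * M), ?_, ?_⟩
  · have := two_rpow_ne_top (A₂ * ((l + 1 : ℕ) : ℝ))
    finiteness
  intro φ hφ i
  have hmd := measurable_dB l hφ
  set σ := sc (i + l + 1) with hσ
  have hσ0 : 0 < σ := sc_pos _
  have hs1 : σ = 2 * sc (i + l + 1 + 1) := sc_succ _
  have hs2 : sc (i + 1) = 2 ^ l * σ := by rw [hσ, show i + l + 1 = i + 1 + l by ring]; exact sc_add _ _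
  have hlp : (l : ℝ) + 1 ≤ 2 ^ l := by exact_mod_cast Nat.lt_two_pow_self (n := l)
  have step := h2 (i + l + 1 + 1) (fun y => dB l φ a ((l + 1) * σ) y ^ (b / a)) (dB l φ b σ)
    ((hmd _ _).pow_const _) (hmd _ _) (fun x => by
      have := h1 φ hφ σ hσ0 x
      rwa [show (l : ℝ) * σ = l * 2 * sc (i + l + 1 + 1) by rw [hs1]; ring] at this)
  refine step.trans ?_
  rw [mul_assoc C1]
  refine mul_le_mul_right ?_ _
  have hm1 : Measurable (fun x => (dB l φ a ((l + 1) * σ) x ^ (b / a)) ^ (pp / b)) :=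
    ((hmd _ _).pow_const _).pow_const _
  rw [show i + l + 1 + 1 = i + 1 + (l + 1) by ring]
  refine (h3 (i + 1) (l + 1) _ hm1).trans ?_
  rw [mul_assoc (C2 * _)]
  refine mul_le_mul_right ?_ _
  have hm2 : Measurable (fun x => W (i + 1) x * dB l φ a (sc (i + 1)) x ^ (pp / a)) :=
    (hW.meas _).mul ((hmd _ _).pow_const _)
  rw [BD, ← lintegral_const_mul _ hm2]
  refine lintegral_mono fun x => ?_
  rw [mul_left_comm M]
  refine mul_le_mul_right ?_ _
  rw [← ENNReal.rpow_mul, show b / a * (pp / b) = pp / a by field_simp,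
    ← ENNReal.mul_rpow_of_nonneg _ _ hP'.le]
  refine ENNReal.rpow_le_rpow ?_ hP'.le
  refine dB_le l hφ a (by positivity) ?_ ?_ x
  · rw [hs2]; gcongr
  · rw [hs2]
    refine mul_le_mul_of_nonneg_left ?_ (by positivity)
    nlinarith

lemma D2d {n : ℕ} {l : ℕ} (hl : 0 < l) {W : ℕ → Rn n → ℝ≥0∞} {pp P a A₁ A₂ : ℝ}
    (hpp : 0 < pp) (ha : 0 < a) (hW : GoodW n W P A₁ A₂) :
    ∃ C : ℝ≥0∞, C ≠ ∞ ∧ ∀ φ : Rn n → ℝ, Measurable φ →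
      ∫⁻ x, W 0 x * ‖φ x‖ₑ ^ pp ≤ C * (BD W l a (pp / a) φ 0 + ZD W a (pp / a) φ) := by
  have hP' : 0 < pp / a := by positivity
  have hl1 : (1 : ℝ) ≤ l := by exact_mod_cast hl
  obtain ⟨c, hc, h1⟩ := dB_phi (n := n) l ha
  obtain ⟨C2, hC2, h3⟩ := hW.down_int
  set M : ℝ≥0∞ := ENNReal.ofReal l ^ n
  have hM : M ≠ ∞ := ENNReal.pow_ne_top ENNReal.ofReal_ne_top
  set N : ℝ≥0∞ := (2 : ℝ≥0∞) ^ n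
  have hN : N ≠ ∞ := ENNReal.pow_ne_top (by norm_num)
  set D : ℝ≥0∞ := C2 * (2 : ℝ≥0∞) ^ (-(A₁ * ((1 : ℕ) : ℝ))) with hD
  have hD' : D ≠ ∞ := ENNReal.mul_ne_top hC2 (two_rpow_ne_top _)
  set E : ℝ≥0∞ := (c * (M + N)) ^ (pp / a) * (2 : ℝ≥0∞) ^ (pp / a)
  have hE : E ≠ ∞ := ENNReal.mul_ne_top (ENNReal.rpow_ne_top_of_nonneg hP'.le (by finiteness))
    (two_rpow_ne_top _)
  refine ⟨E * (D + 1), by finiteness, ?_⟩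
  intro φ hφ
  have hmd := measurable_dB l hφ
  set f : Rn n → ℝ≥0∞ := fun y => ‖φ y‖ₑ ^ a with hf
  have hfm : Measurable f := by fun_prop
  have hw0 := hW.meas 0
  have hma := measurable_avB 1 hfm
  have hmB : Measurable (fun x => dB l φ a (sc 1) x ^ (pp / a)) := (hmd _ _).pow_const _
  have pt : ∀ x, ‖φ x‖ₑ ^ pp ≤ E * (dB l φ a (sc 1) x ^ (pp / a) + avB 1 f x ^ (pp / a)) := by
    intro x
    have hρ : 0 < (1 : ℝ) / (2 * l) := by positivity
    have h4 := (h1 φ hφ _ hρ x).2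
    have hsc1 : sc 1 = 1 / 2 := by norm_num [sc]
    have h5 : dB l φ a (1 / (2 * l)) x ≤ M * dB l φ a (sc 1) x := by
      refine dB_le l hφ a hρ ?_ ?_ x
      · rw [hsc1]; gcongr; linarith
      · rw [hsc1]; apply le_of_eq; field_simp
    have h6 : avB (l * (1 / (2 * l))) f x ≤ N * avB 1 f x := by
      have := avB_le (n := n) (ρ := 1 / 2) (σ := 1) (K := 2) (by norm_num) (by norm_num)
        (by norm_num) hfm x
      rw [show (l : ℝ) * (1 / (2 * l)) = 1 / 2 by field_simp]
      simpa using this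
    have h7 : ‖φ x‖ₑ ^ a ≤ c * (M + N) * (dB l φ a (sc 1) x + avB 1 f x) := by
      refine h4.trans ?_
      rw [mul_assoc]
      refine mul_le_mul_right ((add_le_add h5 h6).trans ?_) _
      rw [mul_add]
      gcongr
      · exact le_self_add
      · exact le_add_self
    have h8 : ‖φ x‖ₑ ^ pp = (‖φ x‖ₑ ^ a) ^ (pp / a) := by
      rw [← ENNReal.rpow_mul, mul_div_cancel₀ _ ha.ne']
    rw [h8]
    refine (ENNReal.rpow_le_rpow h7 hP'.le).trans ?_
    rw [ENNReal.mul_rpow_of_nonneg _ _ hP'.le, mul_assoc]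
    exact mul_le_mul_right (add_rpow_le' _ _ hP') _
  have hb := h3 0 1 _ hmB
  rw [zero_add] at hb
  calc ∫⁻ x, W 0 x * ‖φ x‖ₑ ^ pp ≤ ∫⁻ x, E * (W 0 x * dB l φ a (sc 1) x ^ (pp / a) +
        W 0 x * avB 1 f x ^ (pp / a)) := by
        refine lintegral_mono fun x => ?_
        refine (mul_le_mul_right (pt x) _).trans (le_of_eq (by ring))
    _ = E * ((∫⁻ x, W 0 x * dB l φ a (sc 1) x ^ (pp / a)) + ZD W a (pp / a) φ) := by
        rw [lintegral_const_mul _ (by fun_prop), lintegral_add_left (by fun_prop)]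
        rfl
    _ ≤ E * (D * BD W l a (pp / a) φ 0 + ZD W a (pp / a) φ) := by
        gcongr
        exact hb
    _ ≤ E * ((D + 1) * (BD W l a (pp / a) φ 0 + ZD W a (pp / a) φ)) := by
        refine mul_le_mul_right ?_ _
        rw [mul_add]
        refine add_le_add (mul_le_mul_left le_self_add _) ?_
        calc ZD W a (pp / a) φ = 1 * ZD W a (pp / a) φ := (one_mul _).symm
          _ ≤ _ := mul_le_mul_left le_add_self _
    _ = _ := by ring

lemma D2bc {n : ℕ} (hn : 0 < n) {l : ℕ} (hl : 0 < l) {W : ℕ → Rn n → ℝ≥0∞} {pp b A₁ A₂ : ℝ}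
    (hpp : 0 < pp) (hb : 0 < b) (hA₂ : 0 ≤ A₂) (hW : GoodW n W (pp / b) A₁ A₂) :
    ∃ C : ℝ≥0∞, C ≠ ∞ ∧ ∀ φ : Rn n → ℝ, Measurable φ →
      (∀ k ≤ l, TD W l b (pp / b) φ k ≤ C * ∫⁻ x, W 0 x * ‖φ x‖ₑ ^ pp) ∧
      ZD W b (pp / b) φ ≤ C * ∫⁻ x, W 0 x * ‖φ x‖ₑ ^ pp := by
  have hP : 0 < pp / b := by positivity
  have hl1 : (1 : ℝ) ≤ l := by exact_mod_cast hl
  obtain ⟨c, hc, h1⟩ := dB_phi (n := n) l hb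
  obtain ⟨C1, hC1, h2⟩ := avg_combo hn hW hP (R := l * 2) (by positivity) hc
  obtain ⟨C2, hC2, h3⟩ := hW.up_int
  obtain ⟨C3, hC3, h4⟩ := hW.avg hn hP (R := 1) one_pos
  have h2t := two_rpow_ne_top (A₂ * ((l + 1 : ℕ) : ℝ))
  refine ⟨C1 * (C2 * (2 : ℝ≥0∞) ^ (A₂ * ((l + 1 : ℕ) : ℝ))) + C3, by finiteness, ?_⟩
  intro φ hφ
  have hmd := measurable_dB l hφ
  set f : Rn n → ℝ≥0∞ := fun y => ‖φ y‖ₑ ^ b with hf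
  have hfm : Measurable f := by fun_prop
  have hfp : ∀ x, f x ^ (pp / b) = ‖φ x‖ₑ ^ pp := fun x => by
    rw [hf, ← ENNReal.rpow_mul, mul_div_cancel₀ _ hb.ne']
  constructor
  · intro k hk
    have step := h2 (k + 1) f (dB l φ b (sc k)) hfm (hmd _ _) (fun x => by
      have := (h1 φ hφ (sc k) (sc_pos _) x).1
      rwa [show (l : ℝ) * sc k = l * 2 * sc (k + 1) by rw [sc_succ k]; ring] at this)
    refine step.trans ?_
    have h5 := h3 0 (k + 1) (fun x => f x ^ (pp / b)) (hfm.pow_const _)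
    rw [zero_add] at h5
    simp only [hfp] at h5 ⊢
    rw [add_mul]
    refine le_trans ?_ le_self_add
    rw [mul_assoc C1]
    refine mul_le_mul_right (h5.trans (mul_le_mul_left (mul_le_mul_right ?_ _) _)) _
    refine ENNReal.rpow_le_rpow_of_exponent_le (by norm_num) ?_
    refine mul_le_mul_of_nonneg_left ?_ hA₂
    exact_mod_cast Nat.add_le_add_right hk 1
  · have h6 := h4 0 f hfm
    simp only [hfp, sc_zero, mul_one] at h6
    rw [add_mul]
    exact h6.trans le_add_self

/-- Summary of the estimates in the direction `tilde ≤ bar`. -/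
lemma D2 {n : ℕ} (hn : 0 < n) {l : ℕ} (hl : 0 < l) {W : ℕ → Rn n → ℝ≥0∞} {pp a b A₁ A₂ : ℝ}
    (hpp : 0 < pp) (ha : 0 < a) (hab : a ≤ b) (hA₂ : 0 ≤ A₂) (hW : GoodW n W (pp / b) A₁ A₂) :
    ∃ C : ℝ≥0∞, C ≠ ∞ ∧ ∀ φ : Rn n → ℝ, Measurable φ →
      (∀ i, TD W l b (pp / b) φ (i + l + 1) ≤ C * BD W l a (pp / a) φ i) ∧
      (∀ k ≤ l, TD W l b (pp / b) φ k ≤ C * (BD W l a (pp / a) φ 0 + ZD W a (pp / a) φ)) ∧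
      ZD W b (pp / b) φ ≤ C * (BD W l a (pp / a) φ 0 + ZD W a (pp / a) φ) := by
  obtain ⟨C1, hC1, h1⟩ := D2a hn hl hpp ha hab hW
  obtain ⟨C2, hC2, h2⟩ := D2d hl hpp ha hW
  obtain ⟨C3, hC3, h3⟩ := D2bc hn hl hpp (by linarith) hA₂ hW
  refine ⟨C1 + C3 * C2, by finiteness, fun φ hφ => ⟨fun i => ?_, fun k hk => ?_, ?_⟩⟩
  · exact (h1 φ hφ i).trans (mul_le_mul_left le_self_add _)
  · refine ((h3 φ hφ).1 k hk).trans ((mul_le_mul_right (h2 φ hφ) _).trans ?_)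
    rw [← mul_assoc]
    exact mul_le_mul_left le_add_self _
  · refine ((h3 φ hφ).2).trans ((mul_le_mul_right (h2 φ hφ) _).trans ?_)
    rw [← mul_assoc]
    exact mul_le_mul_left le_add_self _
/-! ### Direction `bar ≤ tilde` in integral form -/

/-- The averaged function whose weighted norm is `TD`. -/
def EB {n : ℕ} (l : ℕ) (φ : Rn n → ℝ) (e : ℝ) (k : ℕ) : Rn n → ℝ≥0∞ :=
  avB (sc (k + 1)) (dB l φ e (sc k))

/-- A further averaging of `EB`. -/
def GB {n : ℕ} (l : ℕ) (φ : Rn n → ℝ) (e : ℝ) (k : ℕ) : Rn n → ℝ≥0∞ :=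
  avB (l * 2 * sc (k + 1)) (EB l φ e k)

lemma measurable_EB {n : ℕ} (l : ℕ) {φ : Rn n → ℝ} (hφ : Measurable φ) (e : ℝ) (k : ℕ) :
    Measurable (EB l φ e k) := measurable_avB _ (measurable_dB l hφ e _)

lemma measurable_GB {n : ℕ} (l : ℕ) {φ : Rn n → ℝ} (hφ : Measurable φ) (e : ℝ) (k : ℕ) :
    Measurable (GB l φ e k) := measurable_avB _ (measurable_EB l hφ e _)

lemma exists_delta {e η : ℝ} (he : 0 < e) (hη : 0 < η) :
    ∃ δ : ℝ≥0∞, δ ≠ 0 ∧ δ ≠ ∞ ∧ (1 + δ) ^ e = (2 : ℝ≥0∞) ^ η := by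
  have h1 : (1 : ℝ≥0∞) < (2 : ℝ≥0∞) ^ (η / e) := ENNReal.one_lt_rpow (by norm_num) (by positivity)
  refine ⟨(2 : ℝ≥0∞) ^ (η / e) - 1, (tsub_pos_of_lt h1).ne', ?_, ?_⟩
  · exact (tsub_le_self.trans_lt (two_rpow_ne_top _).lt_top).ne
  · rw [add_tsub_cancel_of_le h1.le, ← ENNReal.rpow_mul, div_mul_cancel₀ _ he.ne']

lemma rec_one {n : ℕ} {l : ℕ} (hl : 0 < l) {e η : ℝ} (he : 0 < e) (hη : 0 < η) :
    ∃ C : ℝ≥0∞, C ≠ ∞ ∧ ∀ φ : Rn n → ℝ, Measurable φ → ∀ k x,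
      dB l φ e (sc (k + 1)) x ≤ (2 : ℝ≥0∞) ^ η * dB l φ e (sc (k + 1 + 1)) x + C * GB l φ e k x := by
  obtain ⟨δ, hδ, hδ', hδe⟩ := exists_delta he hη
  obtain ⟨C, hC, h⟩ := pw_one (n := n) l hl he hδ hδ'
  have hl1 : (1 : ℝ) ≤ l := by exact_mod_cast hl
  refine ⟨C * 2 ^ n, by finiteness, fun φ hφ k x => ?_⟩
  have h1 := h φ hφ (sc (k + 1 + 1)) (sc_pos _) x
  rw [← sc_succ (k + 1), hδe, show 4 * sc (k + 1 + 1) = sc k by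
    rw [sc_succ k, sc_succ (k + 1)]; ring] at h1
  refine h1.trans (add_le_add le_rfl ?_)
  rw [mul_assoc]
  refine mul_le_mul_right ?_ _
  have h0 := sc_pos (k + 1)
  have h2 := avB_avB (n := n) (R := l * sc (k + 1)) (τ := sc (k + 1)) (by positivity) h0
    (by nlinarith) (measurable_dB l hφ e (sc k)) x
  rw [show 2 * ((l : ℝ) * sc (k + 1)) = l * 2 * sc (k + 1) by ring] at h2
  exact h2

lemma iter_rec {M G : ℕ → ℝ≥0∞} {C : ℝ≥0∞} {η : ℝ}
    (h : ∀ k, M k ≤ (2 : ℝ≥0∞) ^ η * M (k + 1) + C * G k) (k j : ℕ) :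
    M k ≤ (2 : ℝ≥0∞) ^ (η * j) * M (k + j) +
      C * ∑ i ∈ Finset.range j, (2 : ℝ≥0∞) ^ (η * i) * G (k + i) := by
  induction j with
  | zero => simp
  | succ j ih =>
    refine ih.trans ?_
    rw [Finset.sum_range_succ]
    calc _ ≤ (2 : ℝ≥0∞) ^ (η * j) * ((2 : ℝ≥0∞) ^ η * M (k + j + 1) + C * G (k + j)) +
        C * ∑ i ∈ Finset.range j, (2 : ℝ≥0∞) ^ (η * i) * G (k + i) := by
          gcongr
          exact h _
      _ = ((2 : ℝ≥0∞) ^ (η * j) * (2 : ℝ≥0∞) ^ η) * M (k + j + 1) +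
        C * (∑ i ∈ Finset.range j, (2 : ℝ≥0∞) ^ (η * i) * G (k + i) +
          (2 : ℝ≥0∞) ^ (η * j) * G (k + j)) := by ring
      _ = _ := by
        rw [← two_rpow_add, show η * (j : ℝ) + η = η * ((j + 1 : ℕ) : ℝ) by push_cast; ring,
          add_assoc k j 1]

lemma limit_rec {M G : ℕ → ℝ≥0∞} {C : ℝ≥0∞} {η : ℝ} (hη : 0 < η)
    (h : ∀ k, M k ≤ (2 : ℝ≥0∞) ^ η * M (k + 1) + C * G k)
    (ht : Tendsto (fun N : ℕ => (2 : ℝ≥0∞) ^ (η * N) * M N) atTop (nhds 0)) (k : ℕ) :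
    M k ≤ C * ∑' i : ℕ, (2 : ℝ≥0∞) ^ (η * i) * G (k + i) := by
  have ht2 : Tendsto (fun N : ℕ => (2 : ℝ≥0∞) ^ (η * N) * M N +
      C * ∑' i : ℕ, (2 : ℝ≥0∞) ^ (η * i) * G (k + i)) atTop
      (nhds (0 + C * ∑' i : ℕ, (2 : ℝ≥0∞) ^ (η * i) * G (k + i))) := ht.add_const _
  rw [zero_add] at ht2
  refine ge_of_tendsto ht2 ?_
  filter_upwards [eventually_ge_atTop k] with N hN
  obtain ⟨j, rfl⟩ := Nat.exists_eq_add_of_le hN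
  refine (iter_rec h k j).trans ?_
  gcongr
  · norm_num
  · omega
  · exact ENNReal.sum_le_tsum _

lemma ae_limit {n : ℕ} (hn : 0 < n) (l : ℕ) {W : ℕ → Rn n → ℝ≥0∞} {P A₁ A₂ e η : ℝ}
    (hP : 0 < P) (hW : GoodW n W P A₁ A₂) (hηA : η < A₁ / P) {φ : Rn n → ℝ}
    (hφ : Measurable φ) {B : ℝ≥0∞} (hB : B ≠ ∞) (hTD : ∀ k, TD W l e P φ k ≤ B) :
    ∀ᵐ x, Tendsto (fun N : ℕ => (2 : ℝ≥0∞) ^ (η * N) * dB l φ e (sc (N + 1)) x) atTop (nhds 0) := by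
  obtain ⟨K, hK, hstar⟩ := hW.star
  obtain ⟨C2, hC2, hdown⟩ := hW.down_int
  have hmd := measurable_dB l hφ e
  have hn' : (0 : ℝ) < n := by exact_mod_cast hn
  set ρ : ℝ := sc 0 / (2 * n) with hρ
  have hρ0 : 0 < ρ := by have := sc_pos 0; positivity
  have hs0 := hstar 0
  have h2η : ∀ N : ℕ, (2 : ℝ≥0∞) ^ (η * N) ≠ ∞ := fun N => two_rpow_ne_top _
  -- scales beyond `N0` are small
  obtain ⟨N0, hN0⟩ : ∃ N0 : ℕ, ∀ N, sc (N0 + N + 1) ≤ ρ / 2 := by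
    obtain ⟨N0, h⟩ := exists_pow_lt_of_lt_one (show 0 < ρ / 2 by positivity)
      (show (1 / 2 : ℝ) < 1 by norm_num)
    refine ⟨N0, fun N => ?_⟩
    have h1 : sc N0 = (1 / 2 : ℝ) ^ N0 := by
      rw [sc, zpow_neg, zpow_natCast, one_div, inv_pow]
    have h2 := sc_add N0 (N + 1)
    have h3 : (1 : ℝ) ≤ 2 ^ (N + 1) := one_le_pow₀ (by norm_num)
    have h4 := sc_pos (N0 + (N + 1))
    rw [add_assoc]
    nlinarith
  rw [ae_iff]
  refine measure_null_of_locally_null _ fun z _ => ?_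
  refine ⟨_ ∩ Metric.ball z (ρ / 2),
    inter_mem_nhdsWithin _ (Metric.ball_mem_nhds z (by positivity)), ?_⟩
  rw [← Measure.restrict_apply' measurableSet_ball]
  refine ae_iff.mp ?_
  set μ := (volume : Measure (Rn n)).restrict (Metric.ball z (ρ / 2)) with hμ
  set β := A₁ / P with hβ
  -- the weight average is nonzero
  have hw : avB ρ (W 0) z ≠ 0 := by
    intro h0
    have hm0 : Measurable (fun h : Rn n => W 0 (z + h)) := (hW.meas 0).comp (by fun_prop)
    rw [avB, lintegral_eq_zero_iff hm0] at h0
    have hp := nuB_isProb n hρ0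
    obtain ⟨h, hh⟩ := h0.exists
    exact hW.pos 0 _ hh
  set V : ℝ≥0∞ := (volume (Metric.ball z ρ))⁻¹ with hV
  have hV' : V ≠ ∞ := ENNReal.inv_ne_top.mpr (vol_ball_ne_zero z hρ0)
  set c : ℝ≥0∞ := (K * (V * (C2 * B))) / avB ρ (W 0) z with hc
  have hc' : c ≠ ∞ := ENNReal.div_ne_top (by finiteness) hw
  set c₁ : ℝ≥0∞ := c ^ P⁻¹ with hc₁
  have hc₁' : c₁ ≠ ∞ := ENNReal.rpow_ne_top_of_nonneg (by positivity) hc'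
  have hA1 : A₁ = β * P := by rw [hβ]; field_simp
  have est1 : ∀ N : ℕ, avB ρ (EB l φ e N) z ≤ c₁ * (2 : ℝ≥0∞) ^ (-(β * ((N + 1 : ℕ) : ℝ))) := by
    intro N
    have hm := measurable_EB l hφ e N
    have h1 := hs0 (EB l φ e N) hm z
    have h2 : avB ρ (fun x => W 0 x * EB l φ e N x ^ P) z ≤
        V * (C2 * (2 : ℝ≥0∞) ^ (-(A₁ * ((N + 1 : ℕ) : ℝ))) * B) := by
      rw [avB_eq]
      refine mul_le_mul_right ?_ _
      refine (setLIntegral_le_lintegral _ _).trans ?_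
      have h3 := hdown 0 (N + 1) (fun x => EB l φ e N x ^ P) (hm.pow_const _)
      refine h3.trans (mul_le_mul_right ?_ _)
      rw [zero_add]
      exact hTD N
    have h4 : avB ρ (EB l φ e N) z ^ P ≤ c * (2 : ℝ≥0∞) ^ (-(A₁ * ((N + 1 : ℕ) : ℝ))) := by
      have h5 : avB ρ (EB l φ e N) z ^ P * avB ρ (W 0) z ≤
          K * (V * (C2 * B)) * (2 : ℝ≥0∞) ^ (-(A₁ * ((N + 1 : ℕ) : ℝ))) := by
        rw [mul_comm]
        refine h1.trans ((mul_le_mul_right h2 _).trans (le_of_eq (by ring)))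
      by_cases hwt : avB ρ (W 0) z = ∞
      · have h6 : avB ρ (EB l φ e N) z ^ P = 0 := by
          by_contra h7
          rw [hwt, ENNReal.mul_top h7, top_le_iff] at h5
          exact (ENNReal.mul_ne_top (by finiteness) (two_rpow_ne_top _)) h5
        rw [h6]; exact zero_le
      · rw [hc, ENNReal.div_eq_inv_mul, mul_assoc, ← ENNReal.div_eq_inv_mul]
        exact (ENNReal.le_div_iff_mul_le (Or.inl hw) (Or.inl hwt)).mpr h5
    have h8 := ENNReal.rpow_le_rpow h4 (show 0 ≤ P⁻¹ by positivity)
    rw [← ENNReal.rpow_mul, mul_inv_cancel₀ hP.ne', ENNReal.rpow_one,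
      ENNReal.mul_rpow_of_nonneg _ _ (by positivity), ← ENNReal.rpow_mul] at h8
    refine h8.trans (le_of_eq ?_)
    congr 2
    rw [hA1]; field_simp
  set U : ℝ≥0∞ := volume (Metric.ball z (ρ / 2)) with hU
  have hU' : U ≠ ∞ := vol_ball_ne_top _ _
  have hU0 : U ≠ 0 := vol_ball_ne_zero z (by positivity)
  have est2 : ∀ N : ℕ, ∫⁻ x, dB l φ e (sc (N0 + N + 1)) x ∂μ ≤
      U * (2 ^ n * 2 ^ n * (c₁ * (2 : ℝ≥0∞) ^ (-(β * ((N0 + N + 1 : ℕ) : ℝ))))) := by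
    intro N
    have h1 : avB (ρ / 2) (dB l φ e (sc (N0 + N + 1))) z ≤
        2 ^ n * 2 ^ n * (c₁ * (2 : ℝ≥0∞) ^ (-(β * ((N0 + N + 1 : ℕ) : ℝ)))) := by
      have h2 : avB (ρ / 2) (dB l φ e (sc (N0 + N + 1))) z ≤
          2 ^ n * avB (ρ / 2) (dB l φ e (sc (N0 + N))) z := by
        rw [← avB_const_mul _ _ (hmd _)]
        refine avB_mono _ (fun y => ?_) z
        have hs := sc_succ (N0 + N)
        have := dB_le l hφ e (K := 2) (σ := sc (N0 + N)) (sc_pos (N0 + N + 1))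
          (by linarith [sc_pos (N0 + N + 1)]) hs.le y
        simpa using this
      refine h2.trans ?_
      rw [mul_assoc]
      refine mul_le_mul_right ?_ _
      have h3 := avB_avB (n := n) (R := ρ / 2) (τ := sc (N0 + N + 1)) (by positivity) (sc_pos _)
        (hN0 N) (hmd (sc (N0 + N))) z
      rw [show 2 * (ρ / 2) = ρ by ring] at h3
      exact h3.trans (mul_le_mul_right (est1 (N0 + N)) _)
    rw [avB_eq] at h1
    have h4 := mul_le_mul_right h1 U
    rwa [← mul_assoc, ENNReal.mul_inv_cancel hU0 hU', one_mul] at h4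
  have hsum : ∫⁻ x, ∑' N : ℕ, (2 : ℝ≥0∞) ^ (η * ((N0 + N : ℕ) : ℝ)) * dB l φ e (sc (N0 + N + 1)) x ∂μ ≠ ∞ := by
    rw [lintegral_tsum (fun N => ((hmd _).const_mul _).aemeasurable)]
    have hle : ∀ N : ℕ, ∫⁻ x, (2 : ℝ≥0∞) ^ (η * ((N0 + N : ℕ) : ℝ)) * dB l φ e (sc (N0 + N + 1)) x ∂μ ≤
        (U * (2 ^ n * 2 ^ n * c₁) * (2 : ℝ≥0∞) ^ (η * N0 - β * N0 - β)) *
          (2 : ℝ≥0∞) ^ (-((β - η) * N)) := by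
      intro N
      rw [lintegral_const_mul _ (hmd _)]
      refine (mul_le_mul_right (est2 N) _).trans (le_of_eq ?_)
      calc _ = U * (2 ^ n * 2 ^ n * c₁) * ((2 : ℝ≥0∞) ^ (η * ((N0 + N : ℕ) : ℝ)) *
            (2 : ℝ≥0∞) ^ (-(β * ((N0 + N + 1 : ℕ) : ℝ)))) := by ring
        _ = _ := by
            rw [← two_rpow_add, mul_assoc (U * (2 ^ n * 2 ^ n * c₁)), ← two_rpow_add]
            congr 2
            push_cast; ring
    refine ((ENNReal.tsum_le_tsum hle).trans_lt ?_).ne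
    rw [ENNReal.tsum_mul_left]
    have h1 := geom_sum_lt_top (show 0 < β - η by linarith)
    have h2 := two_rpow_ne_top (η * N0 - β * N0 - β)
    exact (ENNReal.mul_ne_top (by finiteness) h1).lt_top
  have hmt : Measurable (fun x => ∑' N : ℕ, (2 : ℝ≥0∞) ^ (η * ((N0 + N : ℕ) : ℝ)) *
      dB l φ e (sc (N0 + N + 1)) x) :=
    Measurable.tsum fun N => (hmd _).const_mul _
  filter_upwards [ae_lt_top hmt hsum] with x hx
  have h1 := ENNReal.tendsto_atTop_zero_of_tsum_ne_top hx.ne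
  rw [← tendsto_add_atTop_iff_nat N0]
  refine h1.congr fun N => ?_
  rw [add_comm N0 N]

lemma dB_jensen {n : ℕ} (l : ℕ) {φ : Rn n → ℝ} (hφ : Measurable φ) {a b pp ρ : ℝ} (ha : 0 < a)
    (hab : a ≤ b) (hpp : 0 < pp) (hρ : 0 < ρ) (x : Rn n) :
    dB l φ a ρ x ^ (pp / a) ≤ dB l φ b ρ x ^ (pp / b) := by
  have hb : 0 < b := by linarith
  have hp := nuB_isProb n hρ
  have hm := measurable_dfun (α := Rn n) l hφ a measurable_id (measurable_const (a := x))
  have := jensen_prob (nuB n ρ) ((one_le_div ha).mpr hab) hm.aemeasurable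
  have h2 := ENNReal.rpow_le_rpow this (show 0 ≤ pp / b by positivity)
  rw [← ENNReal.rpow_mul, show b / a * (pp / b) = pp / a by field_simp] at h2
  simp only [← ENNReal.rpow_mul, mul_div_cancel₀ b ha.ne'] at h2
  exact h2

lemma ZD_jensen {n : ℕ} (W : ℕ → Rn n → ℝ≥0∞) {φ : Rn n → ℝ} (hφ : Measurable φ) {a b pp : ℝ}
    (ha : 0 < a) (hab : a ≤ b) (hpp : 0 < pp) :
    ZD W a (pp / a) φ ≤ ZD W b (pp / b) φ := by
  have hb : 0 < b := by linarith
  refine lintegral_mono fun x => mul_le_mul_right ?_ _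
  have := avB_jensen (n := n) one_pos ((one_le_div ha).mpr hab) (f := fun y => ‖φ y‖ₑ ^ a)
    (by fun_prop) x
  have h2 := ENNReal.rpow_le_rpow this (show 0 ≤ pp / b by positivity)
  rw [← ENNReal.rpow_mul, show b / a * (pp / b) = pp / a by field_simp] at h2
  simp only [← ENNReal.rpow_mul, mul_div_cancel₀ b ha.ne'] at h2
  exact h2

lemma D1 {n : ℕ} (hn : 0 < n) {l : ℕ} (hl : 0 < l) {W : ℕ → Rn n → ℝ≥0∞} {pp a b A₁ A₂ : ℝ}
    (hpp : 0 < pp) (ha : 0 < a) (hab : a ≤ b) (hA₁ : 0 < A₁) (hW : GoodW n W (pp / b) A₁ A₂) :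
    ∃ C : ℝ≥0∞, C ≠ ∞ ∧ ∀ φ : Rn n → ℝ, Measurable φ →
      (∃ B : ℝ≥0∞, B ≠ ∞ ∧ ∀ k, TD W l b (pp / b) φ k ≤ B) → ∀ k,
      BD W l a (pp / a) φ k ≤ C * ∑' i : ℕ, (2 : ℝ≥0∞) ^ (-(A₁ / 2 * i)) * TD W l b (pp / b) φ (k + i) := by
  have hb : 0 < b := by linarith
  set P := pp / b with hPd
  have hP : 0 < P := by positivity
  have hl1 : (1 : ℝ) ≤ l := by exact_mod_cast hl
  have hη : 0 < A₁ / (4 * P) := by positivity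
  set η := A₁ / (4 * P) with hηd
  obtain ⟨C1, hC1, h1⟩ := rec_one (n := n) hl hb hη
  obtain ⟨C2, hC2, h2⟩ := tsum_rpow_le (θ := A₁ / 4) (s := P) (by positivity) hP
  obtain ⟨C3, hC3, h3⟩ := hW.down_int
  obtain ⟨C4, hC4, h4⟩ := hW.avg hn hP (R := l * 2) (by positivity)
  have hC1P : C1 ^ P ≠ ∞ := ENNReal.rpow_ne_top_of_nonneg hP.le hC1
  refine ⟨C1 ^ P * C2 * (C3 * C4), by finiteness, ?_⟩
  rintro φ hφ ⟨B, hB, hTD⟩ k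
  have hmd := measurable_dB l hφ b
  have hmG := measurable_GB l hφ b
  have hWm := hW.meas
  have hlim := ae_limit hn l hP hW (η := η) (by
    rw [hηd, div_lt_div_iff_of_pos_left hA₁ (by positivity) hP]; linarith) hφ hB hTD
  calc BD W l a (pp / a) φ k ≤ ∫⁻ x, W (k + 1) x * dB l φ b (sc (k + 1)) x ^ P :=
        lintegral_mono fun x => mul_le_mul_right (dB_jensen l hφ ha hab hpp (sc_pos _) x) _
    _ ≤ ∫⁻ x, C1 ^ P * C2 * ∑' i : ℕ, (2 : ℝ≥0∞) ^ (A₁ / 2 * i) * (W (k + 1) x * GB l φ b (k + i) x ^ P) := by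
        refine lintegral_mono_ae ?_
        filter_upwards [hlim] with x hx
        have h5 := limit_rec (M := fun N => dB l φ b (sc (N + 1)) x) (G := fun N => GB l φ b N x)
          hη (fun N => h1 φ hφ N x) hx k
        have h6 := ENNReal.rpow_le_rpow h5 hP.le
        rw [ENNReal.mul_rpow_of_nonneg _ _ hP.le] at h6
        have h7 := h6.trans (mul_le_mul_right (h2 _) _)
        refine (mul_le_mul_right h7 _).trans (le_of_eq ?_)
        have h8 : ∀ i : ℕ, (2 : ℝ≥0∞) ^ (A₁ / 4 * i) * ((2 : ℝ≥0∞) ^ (η * i) * GB l φ b (k + i) x) ^ P =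
            (2 : ℝ≥0∞) ^ (A₁ / 2 * i) * GB l φ b (k + i) x ^ P := by
          intro i
          rw [ENNReal.mul_rpow_of_nonneg _ _ hP.le, ← ENNReal.rpow_mul, ← mul_assoc, ← two_rpow_add]
          congr 2
          rw [hηd]; field_simp; ring
        simp only [h8]
        have h9 : ∀ i : ℕ, (2 : ℝ≥0∞) ^ (A₁ / 2 * i) * (W (k + 1) x * GB l φ b (k + i) x ^ P) =
          W (k + 1) x * ((2 : ℝ≥0∞) ^ (A₁ / 2 * i) * GB l φ b (k + i) x ^ P) := fun i => by ring
        simp only [h9]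
        rw [ENNReal.tsum_mul_left]
        ring
    _ = C1 ^ P * C2 * ∑' i : ℕ, (2 : ℝ≥0∞) ^ (A₁ / 2 * i) * ∫⁻ x, W (k + 1) x * GB l φ b (k + i) x ^ P := by
        have hm : ∀ i : ℕ, Measurable (fun x => W (k + 1) x * GB l φ b (k + i) x ^ P) :=
          fun i => (hWm _).mul ((hmG _).pow_const _)
        rw [lintegral_const_mul _ (Measurable.tsum fun i => (hm i).const_mul _),
          lintegral_tsum (fun i => ((hm i).const_mul _).aemeasurable)]
        congr 2
        funext i
        rw [lintegral_const_mul _ (hm i)]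
    _ ≤ C1 ^ P * C2 * ∑' i : ℕ, (C3 * C4) * ((2 : ℝ≥0∞) ^ (-(A₁ / 2 * i)) * TD W l b P φ (k + i)) := by
        refine mul_le_mul_right (ENNReal.tsum_le_tsum fun i => ?_) _
        have h5 := h3 (k + 1) i (fun x => GB l φ b (k + i) x ^ P) ((hmG _).pow_const _)
        have h6 := h4 (k + i + 1) (EB l φ b (k + i)) (measurable_EB l hφ b _)
        rw [show k + 1 + i = k + i + 1 by ring] at h5
        calc _ ≤ (2 : ℝ≥0∞) ^ (A₁ / 2 * i) * (C3 * (2 : ℝ≥0∞) ^ (-(A₁ * i)) * (C4 * TD W l b P φ (k + i))) :=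
              mul_le_mul_right (h5.trans (mul_le_mul_right h6 _)) _
          _ = (C3 * C4) * (((2 : ℝ≥0∞) ^ (A₁ / 2 * i) * (2 : ℝ≥0∞) ^ (-(A₁ * i))) * TD W l b P φ (k + i)) := by
              ring
          _ = _ := by
              rw [← two_rpow_add]
              congr 3
              ring
    _ = _ := by rw [ENNReal.tsum_mul_left]; ring

lemma conv_scale {e : ℝ} (he : 0 < e) {S : ℝ≥0∞} (hS : S ≠ 0) (hS' : S ≠ ∞) (m : ℕ) {I c Y : ℝ≥0∞}
    (hI : I = c * S ^ m * Y) {t : ℝ} (ht : t = m) :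
    S ^ (-t / e) * I ^ (1 / e) = (c * Y) ^ (1 / e) := by
  have h1 : S ^ (-t / e) = ((S ^ m)⁻¹) ^ (1 / e) := by
    rw [ht, ← ENNReal.rpow_natCast, ← ENNReal.rpow_neg, ← ENNReal.rpow_mul]
    congr 1
    ring
  rw [h1, ← ENNReal.mul_rpow_of_nonneg _ _ (by positivity), hI]
  congr 1
  have h2 : S ^ m ≠ 0 := pow_ne_zero _ hS
  have h3 : S ^ m ≠ ∞ := ENNReal.pow_ne_top hS'
  calc (S ^ m)⁻¹ * (c * S ^ m * Y) = ((S ^ m)⁻¹ * S ^ m) * (c * Y) := by ring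
    _ = c * Y := by rw [ENNReal.inv_mul_cancel h2 h3, one_mul]

lemma set_lint_ball {n : ℕ} {ρ : ℝ} (hρ : 0 < ρ) (F : Rn n → ℝ≥0∞) :
    ∫⁻ h in Metric.ball (0 : Rn n) ρ, F h =
      volume (Metric.ball (0 : Rn n) ρ) * ∫⁻ h, F h ∂(nuB n ρ) := by
  rw [lintegral_nuB, ← mul_assoc, ENNReal.mul_inv_cancel (vol_ball_ne_zero _ hρ)
    (vol_ball_ne_top _ _), one_mul]

lemma set_lint_ball' {n : ℕ} {ρ : ℝ} (hρ : 0 < ρ) (F : Rn n → ℝ≥0∞) (z : Rn n) :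
    ∫⁻ y in Metric.ball z ρ, F y = volume (Metric.ball z ρ) * avB ρ F z := by
  rw [avB_eq, ← mul_assoc, ENNReal.mul_inv_cancel (vol_ball_ne_zero _ hρ)
    (vol_ball_ne_top _ _), one_mul]

lemma barDelta_eq {n l : ℕ} {r : ℝ≥0∞} (hr : r ≠ 0) (hr' : r ≠ ∞) {s : ℝ} (hs : 0 < s)
    (φ : Rn n → ℝ) (x : Rn n) :
    barDelta n l r s φ x = ((2 : ℝ≥0∞) ^ n * dB l φ r.toReal s x) ^ (1 / r.toReal) := by
  have he := ENNReal.toReal_pos hr hr'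
  unfold barDelta
  rw [eLpNorm_eq_lintegral_rpow_enorm_toReal hr hr', openCube_eq _ hs]
  refine conv_scale he (by simpa using hs) ENNReal.ofReal_ne_top n ?_ rfl
  rw [set_lint_ball hs, vol_ball _ hs, ENNReal.ofReal_mul (by norm_num), mul_pow]
  simp [dB]

lemma deltaE_eq {n l : ℕ} {r : ℝ≥0∞} (hr : r ≠ 0) (hr' : r ≠ ∞) {s : ℝ} (hs : 0 < s)
    {φ : Rn n → ℝ} (hφ : Measurable φ) (x : Rn n) :
    deltaE n l r (2 * s) (openCube x s) φ =
      ((2 : ℝ≥0∞) ^ n * avB s (dB l φ r.toReal (2 * s)) x) ^ (1 / r.toReal) := by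
  have he := ENNReal.toReal_pos hr hr'
  have hs2 : 0 < 2 * s := by positivity
  unfold deltaE
  rw [eLpNorm_eq_lintegral_rpow_enorm_toReal hr hr', openCube_eq _ hs, openCube_eq _ hs2]
  refine conv_scale he (by simpa using hs) ENNReal.ofReal_ne_top (2 * n) ?_ (by push_cast; ring)
  rw [lintegral_prod_symm _
    (measurable_dfun l hφ r.toReal measurable_fst measurable_snd).aemeasurable]
  have h1 : ∀ y : Rn n, ∫⁻ h in Metric.ball (0 : Rn n) (2 * s), ‖diffl l h φ y‖ₑ ^ r.toReal =
      volume (Metric.ball (0 : Rn n) (2 * s)) * dB l φ r.toReal (2 * s) y := fun y =>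
    set_lint_ball hs2 _
  simp only [h1]
  rw [lintegral_const_mul _ (measurable_dB l hφ _ _), set_lint_ball' hs, vol_ball _ hs,
    vol_ball _ hs2, ENNReal.ofReal_mul (p := 2) (q := 2 * s) (by norm_num)]
  simp only [ENNReal.ofReal_ofNat]
  ring

lemma eLp_ball_eq {n : ℕ} {r : ℝ≥0∞} (hr : r ≠ 0) (hr' : r ≠ ∞) 
    (φ : Rn n → ℝ) (x : Rn n) :
    eLpNorm φ r (volume.restrict (openCube x 1)) =
      ((2 : ℝ≥0∞) ^ n * avB 1 (fun y => ‖φ y‖ₑ ^ r.toReal) x) ^ (1 / r.toReal) := by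
  rw [eLpNorm_eq_lintegral_rpow_enorm_toReal hr hr', openCube_eq _ one_pos, set_lint_ball' one_pos,
    vol_ball _ one_pos]
  simp

lemma lp_conv {n : ℕ} {p : ℝ≥0∞} (hp0 : p ≠ 0) (hp : p ≠ ∞) {e : ℝ} (he : 0 < e)
    (T Y : Rn n → ℝ≥0∞) :
    lpNormE p volume (fun x => T x * ((2 : ℝ≥0∞) ^ n * Y x) ^ (1 / e)) =
      ((2 : ℝ≥0∞) ^ n) ^ (1 / e) * (∫⁻ x, T x ^ p.toReal * Y x ^ (p.toReal / e)) ^ (1 / p.toReal) := by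
  have hpp := ENNReal.toReal_pos hp0 hp
  have h1 : ∀ x, (T x * ((2 : ℝ≥0∞) ^ n * Y x) ^ (1 / e)) ^ p.toReal =
      (((2 : ℝ≥0∞) ^ n) ^ (1 / e)) ^ p.toReal * (T x ^ p.toReal * Y x ^ (p.toReal / e)) := by
    intro x
    rw [ENNReal.mul_rpow_of_nonneg _ _ hpp.le, ENNReal.mul_rpow_of_nonneg _ _ (by positivity),
      ENNReal.mul_rpow_of_nonneg _ _ hpp.le, ← ENNReal.rpow_mul (Y x),
      show 1 / e * p.toReal = p.toReal / e by ring]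
    ring
  have hc : ((2 : ℝ≥0∞) ^ n) ^ (1 / e) ≠ ∞ :=
    ENNReal.rpow_ne_top_of_nonneg (by positivity) (ENNReal.pow_ne_top (by simp))
  unfold lpNormE
  rw [if_neg hp]
  simp only [h1]
  rw [lintegral_const_mul' _ _ (ENNReal.rpow_ne_top_of_nonneg hpp.le hc),
    ENNReal.mul_rpow_of_nonneg _ _ (by positivity), ← ENNReal.rpow_mul,
    mul_one_div_cancel hpp.ne', ENNReal.rpow_one]

lemma lqNorm_const_mul {q : ℝ≥0∞} (hq : q ≠ 0) (c : ℝ≥0∞) (y : ℕ → ℝ≥0∞) :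
    lqNorm q (fun k => c * y k) = c * lqNorm q y := by
  unfold lqNorm
  split_ifs with h
  · rw [ENNReal.mul_iSup]
  · have hqq := ENNReal.toReal_pos hq h
    simp only [ENNReal.mul_rpow_of_nonneg _ _ hqq.le]
    rw [ENNReal.tsum_mul_left, ENNReal.mul_rpow_of_nonneg _ _ (by positivity), ← ENNReal.rpow_mul,
      mul_one_div_cancel hqq.ne', ENNReal.rpow_one]

lemma tilde_eq {n l : ℕ} {p q r : ℝ≥0∞} (hp0 : p ≠ 0) (hp : p ≠ ∞) (hq : q ≠ 0) (hr : r ≠ 0)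
    (hr' : r ≠ ∞) (t : ℕ → Rn n → ℝ) {φ : Rn n → ℝ} (hφ : Measurable φ) :
    tildeBnorm n l p q r t φ = ((2 : ℝ≥0∞) ^ n) ^ (1 / r.toReal) *
      (lqNorm q (fun k => TD (fun k x => ENNReal.ofReal (t k x) ^ p.toReal) l r.toReal
        (p.toReal / r.toReal) φ k ^ (1 / p.toReal)) +
      ZD (fun k x => ENNReal.ofReal (t k x) ^ p.toReal) r.toReal (p.toReal / r.toReal) φ ^
        (1 / p.toReal)) := by
  have he := ENNReal.toReal_pos hr hr'
  unfold tildeBnorm tildeBnormE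
  rw [mul_add, ← lqNorm_const_mul hq]
  simp only [eLp_ball_eq hr hr']
  rw [lp_conv hp0 hp he]
  congr 2
  funext k
  have h1 : (2 : ℝ) ^ (-((k : ℤ) + 1)) = sc (k + 1) := by simp [sc]
  have h2 : (2 : ℝ) ^ (1 - ((k : ℤ) + 1)) = 2 * sc (k + 1) := by
    rw [← sc_succ, sc]; congr 1; ring
  rw [h1, h2]
  simp only [deltaE_eq hr hr' (sc_pos (k + 1)) hφ]
  rw [lp_conv hp0 hp he, TD, sc_succ k]

lemma bar_eq {n l : ℕ} {p q r : ℝ≥0∞} (hp0 : p ≠ 0) (hp : p ≠ ∞) (hq : q ≠ 0) (hr : r ≠ 0)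
    (hr' : r ≠ ∞) (t : ℕ → Rn n → ℝ) (φ : Rn n → ℝ) :
    barBnorm n l p q r t φ = ((2 : ℝ≥0∞) ^ n) ^ (1 / r.toReal) *
      (lqNorm q (fun k => BD (fun k x => ENNReal.ofReal (t k x) ^ p.toReal) l r.toReal
        (p.toReal / r.toReal) φ k ^ (1 / p.toReal)) +
      ZD (fun k x => ENNReal.ofReal (t k x) ^ p.toReal) r.toReal (p.toReal / r.toReal) φ ^
        (1 / p.toReal)) := by
  have he := ENNReal.toReal_pos hr hr'
  unfold barBnorm
  rw [mul_add, ← lqNorm_const_mul hq]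
  simp only [eLp_ball_eq hr hr']
  rw [lp_conv hp0 hp he]
  congr 2
  funext k
  have h1 : (2 : ℝ) ^ (-((k : ℤ) + 1)) = sc (k + 1) := by simp [sc]
  rw [h1]
  simp only [barDelta_eq hr hr' (sc_pos (k + 1))]
  rw [lp_conv hp0 hp he, BD]


lemma le_lqNorm {q : ℝ≥0∞} (hq : q ≠ 0) (y : ℕ → ℝ≥0∞) (k : ℕ) : y k ≤ lqNorm q y := by
  unfold lqNorm
  split_ifs with h
  · exact le_iSup y k
  · have hqq := ENNReal.toReal_pos hq h
    calc y k = (y k ^ q.toReal) ^ (1 / q.toReal) := by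
          rw [← ENNReal.rpow_mul, mul_one_div_cancel hqq.ne', ENNReal.rpow_one]
      _ ≤ _ := ENNReal.rpow_le_rpow (ENNReal.le_tsum k) (by positivity)

lemma rpow_inv_le {e : ℝ} (he : 0 < e) {a b c : ℝ≥0∞} (h : a ≤ b * c ^ e) :
    a ^ (1 / e) ≤ b ^ (1 / e) * c := by
  calc a ^ (1 / e) ≤ (b * c ^ e) ^ (1 / e) := ENNReal.rpow_le_rpow h (by positivity)
    _ = _ := by
      rw [ENNReal.mul_rpow_of_nonneg _ _ (by positivity), ← ENNReal.rpow_mul,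
        mul_one_div_cancel he.ne', ENNReal.rpow_one]

lemma lq_shift {q : ℝ≥0∞} (hq : q ≠ 0) (l : ℕ) {D : ℝ≥0∞} (hD : D ≠ ∞) :
    ∃ C : ℝ≥0∞, C ≠ ∞ ∧ ∀ (x y : ℕ → ℝ≥0∞) (z : ℝ≥0∞), (∀ i, y (i + l + 1) ≤ D * x i) →
      (∀ k ≤ l, y k ≤ D * (lqNorm q x + z)) → lqNorm q y ≤ C * (lqNorm q x + z) := by
  by_cases h : q = ∞
  · refine ⟨D, hD, fun x y z h1 h2 => ?_⟩
    have : lqNorm q y = ⨆ k, y k := by simp [lqNorm, h]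
    rw [this]
    refine iSup_le fun k => ?_
    rcases le_or_gt k l with hk | hk
    · exact h2 k hk
    · obtain ⟨i, rfl⟩ : ∃ i, k = i + l + 1 := ⟨k - (l + 1), by omega⟩
      exact (h1 i).trans (mul_le_mul_right ((le_lqNorm hq x i).trans le_self_add) _)
  · have hqq := ENNReal.toReal_pos hq h
    refine ⟨(((l : ℝ≥0∞) + 2) * D ^ q.toReal) ^ (1 / q.toReal), ?_, fun x y z h1 h2 => ?_⟩
    · refine ENNReal.rpow_ne_top_of_nonneg (by positivity) (ENNReal.mul_ne_top (by finiteness) ?_)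
      exact ENNReal.rpow_ne_top_of_nonneg hqq.le hD
    · have hy : lqNorm q y = (∑' k, y k ^ q.toReal) ^ (1 / q.toReal) := by simp [lqNorm, h]
      rw [hy]
      apply rpow_inv_le hqq
      set N := lqNorm q x + z
      have hx : ∑' i, x i ^ q.toReal ≤ N ^ q.toReal := by
        have : ∑' i, x i ^ q.toReal = lqNorm q x ^ q.toReal := by
          simp only [lqNorm, h, if_false]
          rw [← ENNReal.rpow_mul, one_div_mul_cancel hqq.ne', ENNReal.rpow_one]
        rw [this]
        exact ENNReal.rpow_le_rpow le_self_add hqq.le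
      have hsp : ∑' k, y k ^ q.toReal = ∑ k ∈ Finset.range (l + 1), y k ^ q.toReal +
          ∑' i, y (i + (l + 1)) ^ q.toReal :=
        (ENNReal.summable.sum_add_tsum_nat_add' (f := fun k => y k ^ q.toReal) (k := l + 1)).symm
      rw [hsp]
      have e1 : ∑ k ∈ Finset.range (l + 1), y k ^ q.toReal ≤
          ∑ k ∈ Finset.range (l + 1), D ^ q.toReal * N ^ q.toReal := by
        refine Finset.sum_le_sum fun k hk => ?_
        rw [← ENNReal.mul_rpow_of_nonneg _ _ hqq.le]
        exact ENNReal.rpow_le_rpow (h2 k (by simpa [Nat.lt_succ_iff] using hk)) hqq.le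
      have e2 : ∑' i, y (i + (l + 1)) ^ q.toReal ≤ D ^ q.toReal * N ^ q.toReal := by
        calc _ ≤ ∑' i, D ^ q.toReal * x i ^ q.toReal := by
              refine ENNReal.tsum_le_tsum fun i => ?_
              rw [← ENNReal.mul_rpow_of_nonneg _ _ hqq.le]
              exact ENNReal.rpow_le_rpow (h1 i) hqq.le
          _ ≤ _ := by
              rw [ENNReal.tsum_mul_left]
              exact mul_le_mul_right hx _
      refine (add_le_add e1 e2).trans (le_of_eq ?_)
      simp only [Finset.sum_const, Finset.card_range, nsmul_eq_mul]
      push_cast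
      ring

lemma tsum_shift_le (f : ℕ → ℝ≥0∞) (i : ℕ) : ∑' k, f (k + i) ≤ ∑' k, f k :=
  ENNReal.tsum_comp_le_tsum_of_injective (add_left_injective i) f

lemma lq_hardy {q : ℝ≥0∞} (hq : q ≠ 0) {pp κ : ℝ} (hpp : 0 < pp) (hκ : 0 < κ) {D : ℝ≥0∞}
    (hD : D ≠ ∞) :
    ∃ C : ℝ≥0∞, C ≠ ∞ ∧ ∀ (X Y : ℕ → ℝ≥0∞),
      (∀ k, X k ≤ D * ∑' i : ℕ, (2 : ℝ≥0∞) ^ (-(κ * i)) * Y (k + i)) →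
      lqNorm q (fun k => X k ^ (1 / pp)) ≤ C * lqNorm q (fun k => Y k ^ (1 / pp)) := by
  by_cases h : q = ∞
  · have hG := geom_sum_lt_top hκ
    set G := ∑' i : ℕ, (2 : ℝ≥0∞) ^ (-(κ * i))
    refine ⟨(D * G) ^ (1 / pp), ENNReal.rpow_ne_top_of_nonneg (by positivity)
      (ENNReal.mul_ne_top hD hG), fun X Y hXY => ?_⟩
    have : lqNorm q (fun k => X k ^ (1 / pp)) = ⨆ k, X k ^ (1 / pp) := by simp [lqNorm, h]
    rw [this]
    refine iSup_le fun k => ?_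
    apply rpow_inv_le hpp
    refine (hXY k).trans ?_
    rw [mul_assoc]
    refine mul_le_mul_right ?_ _
    rw [← ENNReal.tsum_mul_right]
    refine ENNReal.tsum_le_tsum fun i => mul_le_mul_right ?_ _
    have h1 := le_lqNorm hq (fun k => Y k ^ (1 / pp)) (k + i)
    calc Y (k + i) = (Y (k + i) ^ (1 / pp)) ^ pp := by
          rw [← ENNReal.rpow_mul, one_div_mul_cancel hpp.ne', ENNReal.rpow_one]
      _ ≤ _ := ENNReal.rpow_le_rpow h1 hpp.le
  · have hqq := ENNReal.toReal_pos hq h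
    set σ := q.toReal / pp with hσd
    have hσ : 0 < σ := by positivity
    have hθ : 0 < κ * σ / 2 := by positivity
    obtain ⟨K, hK, hsum⟩ := tsum_rpow_le hθ hσ
    have hG := geom_sum_lt_top hθ
    set G := ∑' i : ℕ, (2 : ℝ≥0∞) ^ (-(κ * σ / 2 * i)) with hGd
    refine ⟨(D ^ σ * K * G) ^ (1 / q.toReal), ?_, fun X Y hXY => ?_⟩
    · exact ENNReal.rpow_ne_top_of_nonneg (by positivity) (ENNReal.mul_ne_top
        (ENNReal.mul_ne_top (ENNReal.rpow_ne_top_of_nonneg hσ.le hD) hK) hG)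
    have hn : ∀ Z : ℕ → ℝ≥0∞, lqNorm q (fun k => Z k ^ (1 / pp)) =
        (∑' k, Z k ^ σ) ^ (1 / q.toReal) := by
      intro Z
      simp only [lqNorm, h, if_false, ← ENNReal.rpow_mul]
      rw [show 1 / pp * q.toReal = σ by rw [hσd]; ring]
    rw [hn, hn, ← ENNReal.mul_rpow_of_nonneg _ _ (by positivity)]
    refine ENNReal.rpow_le_rpow ?_ (by positivity)
    have e1 : ∀ k, X k ^ σ ≤ D ^ σ * K * ∑' i : ℕ, (2 : ℝ≥0∞) ^ (-(κ * σ / 2 * i)) * Y (k + i) ^ σ := by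
      intro k
      refine (ENNReal.rpow_le_rpow (hXY k) hσ.le).trans ?_
      rw [ENNReal.mul_rpow_of_nonneg _ _ hσ.le, mul_assoc]
      refine mul_le_mul_right ((hsum _).trans (le_of_eq ?_)) _
      congr 1
      refine tsum_congr fun i => ?_
      rw [ENNReal.mul_rpow_of_nonneg _ _ hσ.le, ← ENNReal.rpow_mul, ← mul_assoc, ← two_rpow_add]
      congr 2
      ring
    calc ∑' k, X k ^ σ ≤ ∑' k, D ^ σ * K * ∑' i : ℕ, (2 : ℝ≥0∞) ^ (-(κ * σ / 2 * i)) * Y (k + i) ^ σ :=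
          ENNReal.tsum_le_tsum e1
      _ = D ^ σ * K * ∑' i : ℕ, (2 : ℝ≥0∞) ^ (-(κ * σ / 2 * i)) * ∑' k, Y (k + i) ^ σ := by
          rw [ENNReal.tsum_mul_left, ENNReal.tsum_comm]
          simp only [ENNReal.tsum_mul_left]
      _ ≤ D ^ σ * K * ∑' i : ℕ, (2 : ℝ≥0∞) ^ (-(κ * σ / 2 * i)) * ∑' k, Y k ^ σ := by
          refine mul_le_mul_right (ENNReal.tsum_le_tsum fun i => mul_le_mul_right ?_ _) _
          exact tsum_shift_le (fun k => Y k ^ σ) i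
      _ = _ := by rw [ENNReal.tsum_mul_right, ← hGd]; ring


lemma norm_core {n : ℕ} (hn : 0 < n) {l : ℕ} (hl : 0 < l) {W : ℕ → Rn n → ℝ≥0∞}
    {pp a b A₁ A₂ : ℝ} (hpp : 0 < pp) (ha : 0 < a) (hab : a ≤ b) (hA₁ : 0 < A₁) (hA₂ : 0 ≤ A₂)
    (hW : GoodW n W (pp / b) A₁ A₂) {q : ℝ≥0∞} (hq : q ≠ 0) :
    ∃ C : ℝ≥0∞, C ≠ ∞ ∧ C ≠ 0 ∧ ∀ φ : Rn n → ℝ, Measurable φ →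
      (lqNorm q (fun k => BD W l a (pp / a) φ k ^ (1 / pp)) + ZD W a (pp / a) φ ^ (1 / pp) ≤
        C * (lqNorm q (fun k => TD W l b (pp / b) φ k ^ (1 / pp)) + ZD W b (pp / b) φ ^ (1 / pp))) ∧
      (lqNorm q (fun k => TD W l b (pp / b) φ k ^ (1 / pp)) + ZD W b (pp / b) φ ^ (1 / pp) ≤
        C * (lqNorm q (fun k => BD W l a (pp / a) φ k ^ (1 / pp)) + ZD W a (pp / a) φ ^ (1 / pp))) := by
  have hpi : 0 < 1 / pp := by positivity
  obtain ⟨C₁, hC₁, h1⟩ := D1 hn hl hpp ha hab hA₁ hW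
  obtain ⟨C₂, hC₂, h2⟩ := D2 hn hl hpp ha hab hA₂ hW
  obtain ⟨K₁, hK₁, H1⟩ := lq_hardy hq hpp (show 0 < A₁ / 2 by positivity) hC₁
  set D : ℝ≥0∞ := C₂ ^ (1 / pp) * 2 ^ (1 / pp) with hDd
  have hD : D ≠ ∞ := ENNReal.mul_ne_top (ENNReal.rpow_ne_top_of_nonneg hpi.le hC₂)
    (two_rpow_ne_top _)
  obtain ⟨K₂, hK₂, H2⟩ := lq_shift hq l hD
  refine ⟨K₁ + 1 + (K₂ + D), by finiteness, by simp, fun φ hφ => ⟨?_, ?_⟩⟩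
  · set NT := lqNorm q (fun k => TD W l b (pp / b) φ k ^ (1 / pp)) with hNT
    by_cases hN : NT = ∞
    · rw [hN, top_add, ENNReal.mul_top (by simp)]
      exact le_top
    · have hB : ∃ B : ℝ≥0∞, B ≠ ∞ ∧ ∀ k, TD W l b (pp / b) φ k ≤ B := by
        refine ⟨NT ^ pp, ENNReal.rpow_ne_top_of_nonneg hpp.le hN, fun k => ?_⟩
        have h3 := le_lqNorm hq (fun k => TD W l b (pp / b) φ k ^ (1 / pp)) k
        calc TD W l b (pp / b) φ k = (TD W l b (pp / b) φ k ^ (1 / pp)) ^ pp := by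
              rw [← ENNReal.rpow_mul, one_div_mul_cancel hpp.ne', ENNReal.rpow_one]
          _ ≤ _ := ENNReal.rpow_le_rpow h3 hpp.le
      have e1 := H1 _ _ (h1 φ hφ hB)
      have e2 := ENNReal.rpow_le_rpow (ZD_jensen W hφ ha hab hpp) hpi.le
      rw [mul_add]
      refine add_le_add (e1.trans (mul_le_mul_left ?_ _)) (e2.trans ?_)
      · rw [add_assoc]; exact le_self_add
      · refine le_mul_of_one_le_left' ?_
        rw [add_right_comm]
        exact le_add_self
  · obtain ⟨i1, i2, i3⟩ := h2 φ hφ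
    set NB := lqNorm q (fun k => BD W l a (pp / a) φ k ^ (1 / pp)) with hNB
    have key : ∀ v, v ≤ C₂ * (BD W l a (pp / a) φ 0 + ZD W a (pp / a) φ) →
        v ^ (1 / pp) ≤ D * (NB + ZD W a (pp / a) φ ^ (1 / pp)) := by
      intro v hv
      refine (ENNReal.rpow_le_rpow hv hpi.le).trans ?_
      rw [ENNReal.mul_rpow_of_nonneg _ _ hpi.le, hDd, mul_assoc]
      refine mul_le_mul_right ((add_rpow_le' _ _ hpi).trans ?_) _
      refine mul_le_mul_right (add_le_add ?_ le_rfl) _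
      exact le_lqNorm hq (fun k => BD W l a (pp / a) φ k ^ (1 / pp)) 0
    have e1 := H2 (fun k => BD W l a (pp / a) φ k ^ (1 / pp))
      (fun k => TD W l b (pp / b) φ k ^ (1 / pp)) (ZD W a (pp / a) φ ^ (1 / pp)) (by
        intro i
        refine (ENNReal.rpow_le_rpow (i1 i) hpi.le).trans ?_
        rw [ENNReal.mul_rpow_of_nonneg _ _ hpi.le]
        refine mul_le_mul_left ?_ _
        exact le_mul_of_one_le_right' (ENNReal.one_le_rpow (by norm_num) hpi))
      (fun k hk => key _ (i2 k hk))
    have e2 := key _ i3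
    refine (add_le_add e1 e2).trans ?_
    rw [← add_mul]
    exact mul_le_mul_left le_add_self _

lemma memLrLoc_of {n : ℕ} {r : ℝ≥0∞} (hr : r ≠ 0) (hr' : r ≠ ∞) {W : ℕ → Rn n → ℝ≥0∞} {P : ℝ}
    (hP : 0 < P) (hWm : Measurable (W 0)) (hW0 : ∀ x, W 0 x ≠ 0)
    {φ : Rn n → ℝ} (hφ : Measurable φ) (hZ : ZD W r.toReal P φ ≠ ∞) : MemLrLoc n r φ := by
  have he := ENNReal.toReal_pos hr hr'
  refine ⟨hφ, fun K hK => ?_⟩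
  have hf : Measurable (fun y => ‖φ y‖ₑ ^ r.toReal) := hφ.enorm.pow_const _
  have hae : ∀ᵐ x, avB 1 (fun y => ‖φ y‖ₑ ^ r.toReal) x < ∞ := by
    have := ae_lt_top (hWm.mul ((measurable_avB 1 hf).pow_const P)) hZ
    filter_upwards [this] with x hx
    by_contra hcon
    have h1 : avB 1 (fun y => ‖φ y‖ₑ ^ r.toReal) x = ∞ := by simpa using hcon
    simp only [Pi.mul_apply, h1, ENNReal.top_rpow_of_pos hP, ENNReal.mul_top (hW0 x)] at hx
    exact lt_irrefl _ hx
  have key : ∫⁻ y in K, ‖φ y‖ₑ ^ r.toReal < ∞ := by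
    refine hK.induction_on (p := fun s => ∫⁻ y in s, ‖φ y‖ₑ ^ r.toReal < ∞) (by simp)
      (fun s t hst ht => (lintegral_mono_set hst).trans_lt ht)
      (fun s t hs ht => (lintegral_union_le _ _ _).trans_lt (ENNReal.add_lt_top.2 ⟨hs, ht⟩)) ?_
    intro z _
    obtain ⟨x, hxz, hx⟩ : ∃ x ∈ Metric.ball z 1, avB 1 (fun y => ‖φ y‖ₑ ^ r.toReal) x < ∞ := by
      have hd := Measure.dense_of_ae hae
      obtain ⟨x, hx1, hx2⟩ := hd.inter_open_nonempty _ Metric.isOpen_ball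
        ⟨z, Metric.mem_ball_self one_pos⟩
      exact ⟨x, hx1, hx2⟩
    refine ⟨Metric.ball x 1, mem_nhdsWithin_of_mem_nhds (Metric.isOpen_ball.mem_nhds ?_), ?_⟩
    · rw [Metric.mem_ball_comm]; exact hxz
    · rw [set_lint_ball' one_pos]
      exact ENNReal.mul_lt_top (vol_ball_ne_top _ _).lt_top hx
  rw [eLpNorm_eq_lintegral_rpow_enorm_toReal hr hr']
  exact ENNReal.rpow_lt_top_of_nonneg (by positivity) key.ne

/-- **Theorem 2.5: for `t_k = γ · s_k` with `γ^p ∈ A^{loc}_{p₀}` and `{s_k} ∈ locY`,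
the spaces `B̄^l_{p,q,r₁}` and `B̃^l_{p,q,r₂}` coincide with equivalent quasinorms.** -/
theorem barB_eq_tildeB_weighted (n l : ℕ) (hn : 0 < n) (hl : 0 < l)
    (p q : ℝ≥0∞) (hp0 : 0 < p) (hp : p < ∞) (hq : 0 < q)
    (p₀ : ℝ) (hp₀ : 1 ≤ p₀) (r₁ r₂ : ℝ≥0∞) (hr₁ : 0 < r₁) (hr₁₂ : r₁ ≤ r₂)
    (hr₂ : r₂ ≤ p / ENNReal.ofReal p₀)
    (γ : Rn n → ℝ) (hγ : IsWeight γ) (hA : MemAlocP n p₀ (fun x => γ x ^ p.toReal))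
    (α₁ α₂ α₃ : ℝ) (hα₃ : 0 ≤ α₃) (hα₁ : 0 < α₁) (hα₁₂ : α₁ ≤ α₂) (hα₂ : α₂ < l)
    (s : ℕ → Rn n → ℝ) (hs : MemLocY n α₁ α₂ α₃ s) :
    ∃ C₁ C₂ : ℝ≥0∞, 0 < C₁ ∧ C₁ < ∞ ∧ 0 < C₂ ∧ C₂ < ∞ ∧
      ∀ φ : Rn n → ℝ, Measurable φ →
        (MemBarB n l p q r₁ (fun k x => γ x * s k x) φ ↔
          MemTildeB n l p q r₂ (fun k x => γ x * s k x) φ) ∧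
        C₁ * barBnorm n l p q r₁ (fun k x => γ x * s k x) φ ≤
          tildeBnorm n l p q r₂ (fun k x => γ x * s k x) φ ∧
        tildeBnorm n l p q r₂ (fun k x => γ x * s k x) φ ≤
          C₂ * barBnorm n l p q r₁ (fun k x => γ x * s k x) φ := by
  have hpp : 0 < p.toReal := ENNReal.toReal_pos hp0.ne' hp.ne
  have hp₀' : 0 < p₀ := one_pos.trans_le hp₀
  have hdiv : p / ENNReal.ofReal p₀ ≠ ∞ := ENNReal.div_ne_top hp.ne (by simpa using hp₀')
  have hr₂t : r₂ ≠ ∞ := ne_top_of_le_ne_top hdiv hr₂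
  have hr₁t : r₁ ≠ ∞ := ne_top_of_le_ne_top hr₂t hr₁₂
  have hr₂0 : r₂ ≠ 0 := (hr₁.trans_le hr₁₂).ne'
  have ha := ENNReal.toReal_pos hr₁.ne' hr₁t
  have hb := ENNReal.toReal_pos hr₂0 hr₂t
  have hab : r₁.toReal ≤ r₂.toReal := ENNReal.toReal_mono hr₂t hr₁₂
  have hP : p₀ ≤ p.toReal / r₂.toReal := by
    have h := ENNReal.toReal_mono hdiv hr₂
    rw [ENNReal.toReal_div, ENNReal.toReal_ofReal hp₀'.le, le_div_iff₀ hp₀'] at h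
    rw [le_div_iff₀ hb]
    linarith
  have hW := goodW_of hn hpp hp₀ hγ hA hs hP
  obtain ⟨C, hC, hC0, H⟩ := norm_core hn hl hpp ha hab (mul_pos hα₁ hpp)
    (mul_nonneg (hα₁.le.trans hα₁₂) hpp.le) hW hq.ne'
  have hc : ∀ e : ℝ, 0 < e → ((2 : ℝ≥0∞) ^ n) ^ (1 / e) ≠ ∞ ∧ ((2 : ℝ≥0∞) ^ n) ^ (1 / e) ≠ 0 := by
    intro e he
    rw [← ENNReal.rpow_natCast, ← ENNReal.rpow_mul]
    exact ⟨two_rpow_ne_top _, two_rpow_ne_zero _⟩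
  obtain ⟨hca, hca0⟩ := hc _ ha
  obtain ⟨hcb, hcb0⟩ := hc _ hb
  set ca := ((2 : ℝ≥0∞) ^ n) ^ (1 / r₁.toReal) with hcad
  set cb := ((2 : ℝ≥0∞) ^ n) ^ (1 / r₂.toReal) with hcbd
  have hM0 : ca * C * cb⁻¹ ≠ 0 := by
    simp [hca0, hC0, hcb]
  have hMt : ca * C * cb⁻¹ ≠ ∞ :=
    ENNReal.mul_ne_top (ENNReal.mul_ne_top hca hC) (ENNReal.inv_ne_top.2 hcb0)
  refine ⟨(ca * C * cb⁻¹)⁻¹, cb * C * ca⁻¹, ENNReal.inv_pos.2 hMt, (ENNReal.inv_ne_top.2 hM0).lt_top,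
    ?_, (ENNReal.mul_ne_top (ENNReal.mul_ne_top hcb hC) (ENNReal.inv_ne_top.2 hca0)).lt_top, ?_⟩
  · refine pos_iff_ne_zero.2 ?_
    simp [hcb0, hC0, hca]
  intro φ hφ
  have eT := tilde_eq (l := l) hp0.ne' hp.ne hq.ne' hr₂0 hr₂t (fun k x => γ x * s k x) hφ
  have eB := bar_eq (l := l) hp0.ne' hp.ne hq.ne' hr₁.ne' hr₁t (fun k x => γ x * s k x) φ
  obtain ⟨h1, h2⟩ := H φ hφ
  rw [← hcad] at eB
  rw [← hcbd] at eT
  have I1 : barBnorm n l p q r₁ (fun k x => γ x * s k x) φ ≤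
      ca * C * cb⁻¹ * tildeBnorm n l p q r₂ (fun k x => γ x * s k x) φ := by
    rw [eT, eB, mul_assoc, mul_assoc, ← mul_assoc cb⁻¹, ENNReal.inv_mul_cancel hcb0 hcb, one_mul]
    exact mul_le_mul_right h1 _
  have I2 : tildeBnorm n l p q r₂ (fun k x => γ x * s k x) φ ≤
      cb * C * ca⁻¹ * barBnorm n l p q r₁ (fun k x => γ x * s k x) φ := by
    rw [eT, eB, mul_assoc, mul_assoc, ← mul_assoc ca⁻¹, ENNReal.inv_mul_cancel hca0 hca, one_mul]
    exact mul_le_mul_right h2 _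
  have fin : ∀ c x y : ℝ≥0∞, c ≠ 0 → c * (x + y ^ (1 / p.toReal)) < ∞ → y ≠ ∞ := by
    intro c x y hc0 h hy
    rw [hy, ENNReal.top_rpow_of_pos (by positivity), add_top, ENNReal.mul_top hc0] at h
    exact lt_irrefl _ h
  refine ⟨⟨fun hm => ?_, fun hm => ?_⟩, ?_, I2⟩
  · have hT : tildeBnorm n l p q r₂ (fun k x => γ x * s k x) φ < ∞ :=
      I2.trans_lt (ENNReal.mul_lt_top (ENNReal.mul_ne_top (ENNReal.mul_ne_top hcb hC)
        (ENNReal.inv_ne_top.2 hca0)).lt_top hm.2)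
    refine ⟨?_, hT⟩
    rw [eT] at hT
    exact memLrLoc_of hr₂0 hr₂t (div_pos hpp hb) (hW.meas 0) (hW.pos 0) hφ (fin _ _ _ hcb0 hT)
  · have hB : barBnorm n l p q r₁ (fun k x => γ x * s k x) φ < ∞ :=
      I1.trans_lt (ENNReal.mul_lt_top hMt.lt_top hm.2)
    refine ⟨?_, hB⟩
    rw [eB] at hB
    exact memLrLoc_of hr₁.ne' hr₁t (div_pos hpp ha) (hW.meas 0) (hW.pos 0) hφ (fin _ _ _ hca0 hB)
  · calc _ ≤ (ca * C * cb⁻¹)⁻¹ * (ca * C * cb⁻¹ * tildeBnorm n l p q r₂ (fun k x => γ x * s k x) φ) :=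
          mul_le_mul_right I1 _
      _ = _ := by rw [← mul_assoc, ENNReal.inv_mul_cancel hM0 hMt, one_mul]

end
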